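/- arXiv:1405.6866 — 8 statements merged into one kernel-verified Lean document; each statement's English description precedes it below -/
import Mathlib

section
/- There exists a family (K_α)_{α ∈ I} of compact subsets of the Hilbert cube [0,1]^ℕ, indexed by a set I of cardinality 2^{ℵ₀}, such that for all α ≠ β in I, K_α is not σ-embeddable into K_β. In particular, there is an antichain of size continuum in the σ-embeddability ordering of compact metrizable spaces (hence continuum many pairwise non-σ-homeomorphic compact metrizable spaces). -/
/-!
Call two spaces almost disjoint if all their common subspaces are zero-dimensional. Suppose that
`X 0, X 1, …` are pairwise almost disjoint Polish spaces, none of which is a countable union of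
zero-dimensional sets. Two of them are attached to each `m : ℕ`, and `K α` is a compact space that
contains the topological sum of one of the two for each `m`, chosen by the binary sequence `α`, and
whose remainder is a countable union of zero-dimensional sets. If `α m ≠ β m`, then the space chosen
by `α` at `m` is almost disjoint from all the summands in `K β`, so a σ-embedding of `K α` into
`K β` would make it a countable union of zero-dimensional sets.

Each `X n` is the graph of a function from a subset of the Cantor space to a Hilbert cube. By a
universal open set it can be made to meet every closed set whose fibres are large in the sense of
the Poincaré–Miranda theorem, and then it is not a countable union of zero-dimensional sets. The
values are found by recursion along the binary tree: at each step a closed large set is made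
smaller, at the price of half of the coordinates, so that a given coordinate either misses a given
Cantor set of codes, or equals the code of a continuous reading of the value in terms of the earlier
graphs, and other coordinates record a value that refutes this reading. So if `A` embeds into `X n`
and into an earlier graph, the coordinates of its points in `X n` avoid a dense family of
continuously varying values, which makes `A` zero-dimensional.
-/

open Set

/-- `X` is σ-embeddable into `Y`: `X` is a countable union of subsets each of which
(with the subspace topology) is homeomorphic to a subspace of `Y`. -/
def SigmaEmbeddable (X : Type*) (Y : Type*) [TopologicalSpace X] [TopologicalSpace Y] : Prop :=
  ∃ A : ℕ → Set X, (⋃ n, A n) = univ ∧ ∀ n, ∃ B : Set Y, Nonempty (↥(A n) ≃ₜ ↥B)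

namespace SigmaEmbeddable

open Topology

variable {X Y Z : Type*} [TopologicalSpace X] [TopologicalSpace Y] [TopologicalSpace Z]

theorem _root_.sigmaEmbeddable_iff : SigmaEmbeddable X Y ↔
    ∃ A : ℕ → Set X, (⋃ n, A n) = univ ∧ ∀ n, ∃ f : A n → Y, IsEmbedding f := by
  refine exists_congr fun A => and_congr_right fun _ => forall_congr' fun n => ⟨?_, ?_⟩
  · rintro ⟨B, ⟨e⟩⟩
    exact ⟨_, IsEmbedding.subtypeVal.comp e.isEmbedding⟩
  · rintro ⟨f, hf⟩
    exact ⟨range f, ⟨hf.toHomeomorph⟩⟩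

theorem of_isEmbedding {f : X → Y} (hf : IsEmbedding f) : SigmaEmbeddable X Y :=
  sigmaEmbeddable_iff.2
    ⟨fun _ => univ, iUnion_const univ, fun _ => ⟨_, hf.comp IsEmbedding.subtypeVal⟩⟩

theorem comp_isEmbedding (h : SigmaEmbeddable Y Z) {f : X → Y} (hf : IsEmbedding f) :
    SigmaEmbeddable X Z := by
  obtain ⟨A, hA, h⟩ := sigmaEmbeddable_iff.1 h
  choose g hg using h
  exact sigmaEmbeddable_iff.2 ⟨fun n => f ⁻¹' A n, by rw [← preimage_iUnion, hA, preimage_univ],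
    fun n => ⟨_, (hg n).comp (hf.restrictPreimage (A n))⟩⟩

theorem of_iUnion {ι : Type*} [Countable ι] {A : ι → Set X} (hA : ⋃ i, A i = univ)
    (h : ∀ i, SigmaEmbeddable (A i) Y) : SigmaEmbeddable X Y := by
  choose B hB hBY using h
  cases isEmpty_or_nonempty ι
  · have : IsEmpty X := univ_eq_empty_iff.1 (hA.symm.trans (iUnion_of_empty A))
    exact ⟨fun _ => ∅, Subsingleton.elim _ _, fun _ => ⟨∅, ⟨.empty⟩⟩⟩
  obtain ⟨e, he⟩ := exists_surjective_nat (ι × ℕ)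
  refine ⟨fun n => Subtype.val '' B (e n).1 (e n).2, ?_, fun n => ?_⟩
  · rw [he.iUnion_comp fun p => Subtype.val '' B p.1 p.2, iUnion_prod']
    simp only [← image_iUnion, hB, image_univ, Subtype.range_coe, hA]
  · obtain ⟨C, ⟨φ⟩⟩ := hBY (e n).1 (e n).2
    exact ⟨C, ⟨(IsEmbedding.subtypeVal.homeomorphImage _).symm.trans φ⟩⟩

/-- A piece of `X` that embeds into `Y` is cut according to a countable cover of `Y`. -/
theorem of_forall_isEmbedding {ι : Type*} [Countable ι] (h : SigmaEmbeddable X Y)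
    {B : ι → Set Y} (hB : ⋃ i, B i = univ)
    (hBZ : ∀ i (A : Set X) (f : A → B i), IsEmbedding f → SigmaEmbeddable A Z) :
    SigmaEmbeddable X Z := by
  obtain ⟨A, hA, h⟩ := sigmaEmbeddable_iff.1 h
  choose f hf using h
  refine of_iUnion hA fun n => of_iUnion (A := fun i => f n ⁻¹' B i) ?_ fun i => ?_
  · rw [← preimage_iUnion, hB, preimage_univ]
  · let e := IsEmbedding.subtypeVal.homeomorphImage (f n ⁻¹' B i)
    exact (hBZ i _ _ (((hf n).restrictPreimage (B i)).comp e.symm.isEmbedding)).comp_isEmbedding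
      e.isEmbedding

end SigmaEmbeddable

namespace SigmaAntichain

open Filter Topology

/-! ### The Poincaré–Miranda theorem -/

section Miranda

variable {ι : Type*}

/-- `u` is a vertex of the cell `(v, D)`. -/
def IsVertex (v : ι → ℕ) (D : Finset ι) (u : ι → ℕ) : Prop :=
  ∀ i, u i = v i ∨ (i ∈ D ∧ u i = v i + 1)

lemma isVertex_self (v : ι → ℕ) (D : Finset ι) : IsVertex v D v := fun _ => Or.inl rfl

variable [DecidableEq ι]

/-- The mod-2 coboundary of a cochain on the cubical grid `ℕ^ι`. The cell `(v, D)` is the cube with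
least vertex `v` spanned by the directions in `D`. -/
def coboundary (γ : (ι → ℕ) → Finset ι → ZMod 2) (v : ι → ℕ) (D : Finset ι) : ZMod 2 :=
  ∑ i ∈ D, (γ v (D.erase i) + γ (v + Pi.single i 1) (D.erase i))

lemma coboundary_coboundary (γ : (ι → ℕ) → Finset ι → ZMod 2) (v : ι → ℕ) (D : Finset ι) :
    coboundary (coboundary γ) v D = 0 := by
  simp only [coboundary, ← Finset.sum_add_distrib]
  rw [Finset.sum_sigma']
  refine Finset.sum_involution (fun p _ => ⟨p.2, p.1⟩) ?_ ?_ ?_ fun _ _ => rfl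
  · rintro ⟨i, j⟩ -
    have cancel : ∀ p q r s : ZMod 2, p + q + (r + s) + (p + r + (q + s)) = 0 := by decide
    simp only [Finset.erase_right_comm (a := j) (b := i),
      add_right_comm v (Pi.single j 1) (Pi.single i 1)]
    exact cancel _ _ _ _
  · rintro ⟨i, j⟩ h _ h'
    simp only [Finset.mem_sigma, Finset.mem_erase] at h
    simp only [Sigma.mk.injEq, heq_eq_eq] at h'
    exact h.2.1 h'.1
  · rintro ⟨i, j⟩ h
    simp only [Finset.mem_sigma, Finset.mem_erase] at h ⊢
    exact ⟨h.2.2, Ne.symm h.2.1, h.1⟩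

/-- The mod-2 cocycle `δ (a i₁ · δ (a i₂ · … δ (a iₖ)))` attached to a list of directions
`i₁, …, iₖ` and 0-1 labels `a i` of the vertices. -/
def labelCochain (a : ι → (ι → ℕ) → ZMod 2) : List ι → (ι → ℕ) → Finset ι → ZMod 2
  | [] => fun _ _ => 1
  | i :: l => coboundary fun v D => a i v * labelCochain a l v D

lemma coboundary_labelCochain (a : ι → (ι → ℕ) → ZMod 2) (l : List ι) (v : ι → ℕ)
    (D : Finset ι) : coboundary (labelCochain a l) v D = 0 := by
  cases l with
  | nil => simp only [coboundary, labelCochain, CharTwo.add_self_eq_zero, Finset.sum_const_zero]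
  | cons i l => exact coboundary_coboundary _ v D

lemma IsVertex.of_erase {v : ι → ℕ} {D : Finset ι} {i : ι} {u : ι → ℕ}
    (h : IsVertex v (D.erase i) u) : IsVertex v D u := fun j =>
  (h j).imp_right fun h => ⟨Finset.mem_of_mem_erase h.1, h.2⟩

lemma IsVertex.of_add {v : ι → ℕ} {D : Finset ι} {i : ι} (hi : i ∈ D) {u : ι → ℕ}
    (h : IsVertex (v + Pi.single i 1) (D.erase i) u) : IsVertex v D u := by
  intro j
  rcases eq_or_ne j i with rfl | hj
  · exact Or.inr (by simpa [hi] using h j)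
  · simpa [hj] using h j

lemma labelCochain_eq_zero {a : ι → (ι → ℕ) → ZMod 2} {l : List ι} {j : ι} (hj : j ∈ l)
    {v : ι → ℕ} {D : Finset ι} {c : ZMod 2} (h : ∀ u, IsVertex v D u → a j u = c) :
    labelCochain a l v D = 0 := by
  induction l generalizing v D with
  | nil => simp at hj
  | cons i l ih =>
    rcases List.mem_cons.1 hj with rfl | hj
    · have : labelCochain a (j :: l) v D = c * coboundary (labelCochain a l) v D := by
        simp only [labelCochain, coboundary, Finset.mul_sum]
        refine Finset.sum_congr rfl fun i hi => ?_
        rw [h v (isVertex_self v D), h _ ((isVertex_self (v + Pi.single i 1) _).of_add hi), mul_add]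
      rw [this, coboundary_labelCochain, mul_zero]
    · simp only [labelCochain, coboundary]
      refine Finset.sum_eq_zero fun i hi => ?_
      rw [ih hj fun u hu => h u hu.of_erase, ih hj fun u hu => h u (hu.of_add hi)]
      simp only [mul_zero, add_zero]

variable [Fintype ι]

lemma sum_piFinset_update_singleton (t : ι → Finset ℕ) (i : ι) (g : (ι → ℕ) → ZMod 2) :
    ∑ v ∈ Fintype.piFinset t, g v =
      ∑ x ∈ t i, ∑ v ∈ Fintype.piFinset (Function.update t i {x}), g v := by
  rw [← Finset.sum_fiberwise_of_maps_to fun v hv => Fintype.mem_piFinset.1 hv i]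
  refine Finset.sum_congr rfl fun x hx => ?_
  rw [Fintype.piFinset_update_singleton_eq_filter_piFinset_eq t i hx]

lemma sum_piFinset_add_single (t : ι → Finset ℕ) (i : ι) (x : ℕ) (g : (ι → ℕ) → ZMod 2) :
    ∑ v ∈ Fintype.piFinset (Function.update t i {x}), g (v + Pi.single i 1) =
      ∑ v ∈ Fintype.piFinset (Function.update t i {x + 1}), g v := by
  refine Finset.sum_nbij' (fun v => v + Pi.single i 1) (fun v => v - Pi.single i 1)
    (fun v hv => ?_) (fun v hv => ?_) (fun v _ => ?_) (fun v hv => ?_) fun _ _ => rfl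
  · rw [Fintype.mem_piFinset] at hv ⊢
    intro j
    have := hv j
    rcases eq_or_ne j i with rfl | hj <;> simp_all
  · rw [Fintype.mem_piFinset] at hv ⊢
    intro j
    have := hv j
    rcases eq_or_ne j i with rfl | hj <;> simp_all
  · exact add_tsub_cancel_right v _
  · have hv : v i = x + 1 := by simpa using Fintype.mem_piFinset.1 hv i
    exact tsub_add_cancel_of_le fun j => by
      rcases eq_or_ne j i with rfl | hj <;> simp [*]

lemma sum_box_coboundary {γ : (ι → ℕ) → Finset ι → ZMod 2} {t : ι → Finset ℕ} {D : Finset ι}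
    {N : ℕ} (ht : ∀ i ∈ D, t i = Finset.range N) :
    ∑ v ∈ Fintype.piFinset t, coboundary γ v D =
      ∑ i ∈ D, (∑ v ∈ Fintype.piFinset (Function.update t i {0}), γ v (D.erase i) +
        ∑ v ∈ Fintype.piFinset (Function.update t i {N}), γ v (D.erase i)) := by
  simp only [coboundary]
  rw [Finset.sum_comm]
  refine Finset.sum_congr rfl fun i hi => ?_
  let F : ℕ → ZMod 2 := fun x =>
    ∑ v ∈ Fintype.piFinset (Function.update t i {x}), γ v (D.erase i)
  calc ∑ v ∈ Fintype.piFinset t, (γ v (D.erase i) + γ (v + Pi.single i 1) (D.erase i))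
      = ∑ x ∈ Finset.range N, (F (x + 1) - F x) := by
        rw [sum_piFinset_update_singleton t i, ht i hi]
        refine Finset.sum_congr rfl fun x _ => ?_
        rw [Finset.sum_add_distrib, sum_piFinset_add_single t i x fun v => γ v (D.erase i),
          CharTwo.sub_eq_add, add_comm]
    _ = F 0 + F N := by rw [Finset.sum_range_sub, CharTwo.sub_eq_add, add_comm]

variable {a : ι → (ι → ℕ) → ZMod 2} {N : ℕ}

lemma sum_face_labelCochain_eq_zero {l : List ι} {j : ι} (hj : j ∈ l) {D : Finset ι}
    {t : ι → Finset ℕ} {x : ℕ} {c : ZMod 2} (h : ∀ v, v j = x → a j v = c) (b : (ι → ℕ) → ZMod 2) :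
    ∑ v ∈ Fintype.piFinset (Function.update t j {x}),
      b v * labelCochain a l v (D.erase j) = 0 := by
  refine Finset.sum_eq_zero fun v hv => ?_
  have hv : v j = x := by simpa using Fintype.mem_piFinset.1 hv j
  rw [labelCochain_eq_zero hj fun u hu => h u ?_, mul_zero]
  exact ((hu j).resolve_right fun h => Finset.notMem_erase j D h.1).trans hv

lemma sum_box_labelCochain (h0 : ∀ j v, v j = 0 → a j v = 0) (h1 : ∀ j v, v j = N → a j v = 1)
    {l : List ι} (hl : l.Nodup) :
    ∑ v ∈ Fintype.piFinset (fun i => if i ∈ l then Finset.range N else {N}),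
      labelCochain a l v l.toFinset = 1 := by
  induction l with
  | nil => simp [labelCochain]
  | cons k l ih =>
    obtain ⟨hk, hl⟩ := List.nodup_cons.1 hl
    set t : ι → Finset ℕ := fun i => if i ∈ k :: l then Finset.range N else {N} with ht
    have htop : Function.update t k {N} = fun i => if i ∈ l then Finset.range N else {N} := by
      ext1 i
      rcases eq_or_ne i k with rfl | hi
      · simp [hk]
      · simp [ht, hi]
    have herase : (insert k l.toFinset).erase k = l.toFinset :=
      Finset.erase_insert (by simpa using hk)
    have hlower : ∑ v ∈ Fintype.piFinset (Function.update t k {0}),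
        a k v * labelCochain a l v l.toFinset = 0 := by
      refine Finset.sum_eq_zero fun v hv => ?_
      have hv : v k = 0 := by simpa using Fintype.mem_piFinset.1 hv k
      rw [h0 k v hv, zero_mul]
    have hupper : ∑ v ∈ Fintype.piFinset (Function.update t k {N}),
        a k v * labelCochain a l v l.toFinset = 1 := by
      rw [← ih hl, ← htop]
      refine Finset.sum_congr rfl fun v hv => ?_
      have hv : v k = N := by simpa using Fintype.mem_piFinset.1 hv k
      rw [h1 k v hv, one_mul]
    rw [labelCochain, sum_box_coboundary (N := N) fun i hi => if_pos (by simpa using hi),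
      List.toFinset_cons, Finset.sum_insert (by simpa using hk), herase, hlower, hupper, zero_add,
      Finset.sum_eq_zero fun j hj => ?_, add_zero]
    have hj : j ∈ l := by simpa using hj
    rw [sum_face_labelCochain_eq_zero hj (h0 j), sum_face_labelCochain_eq_zero hj (h1 j), add_zero]

end Miranda

lemma exists_cube_nonconstant {ι : Type*} [Fintype ι] {a : ι → (ι → ℕ) → ZMod 2} {N : ℕ}
    (h0 : ∀ j v, v j = 0 → a j v = 0) (h1 : ∀ j v, v j = N → a j v = 1) :
    ∃ v : ι → ℕ, ∀ j, ∃ u w, IsVertex v Finset.univ u ∧ IsVertex v Finset.univ w ∧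
      a j u = 0 ∧ a j w = 1 := by
  classical
  have hsum := sum_box_labelCochain h0 h1 (Finset.univ : Finset ι).nodup_toList
  obtain ⟨v, -, hne⟩ := Finset.exists_ne_zero_of_sum_ne_zero (hsum.trans_ne one_ne_zero)
  rw [Finset.toList_toFinset] at hne
  have hex : ∀ j c, ∃ u, IsVertex v Finset.univ u ∧ a j u ≠ c := by
    intro j c
    by_contra! hc
    exact hne (labelCochain_eq_zero (Finset.mem_toList.2 (Finset.mem_univ j)) hc)
  have two : ∀ x : ZMod 2, (x ≠ 1 → x = 0) ∧ (x ≠ 0 → x = 1) := by decide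
  refine ⟨v, fun j => ?_⟩
  obtain ⟨u, hu, hu'⟩ := hex j 1
  obtain ⟨w, hw, hw'⟩ := hex j 0
  exact ⟨u, w, hu, hw, (two _).1 hu', (two _).2 hw'⟩

lemma exists_forall_eq_zero_of_approx {X κ : Type*} [PseudoMetricSpace X] [CompactSpace X]
    (ψ : κ → C(X, ℝ)) (h : ∀ ε > 0, ∃ x, ∀ j, ∃ y z, dist y x ≤ ε ∧ dist z x ≤ ε ∧
      0 ≤ ψ j y ∧ ψ j z ≤ 0) :
    ∃ x, ∀ j, ψ j x = 0 := by
  choose x y z hy hz hψy hψz using fun m : ℕ => h (1 / (m + 1)) Nat.one_div_pos_of_nat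
  obtain ⟨x₀, φ, hφ, hx⟩ := CompactSpace.tendsto_subseq x
  have htendsto : ∀ w : ℕ → X, (∀ m : ℕ, dist (w m) (x m) ≤ 1 / (m + 1)) →
      Tendsto (fun m => w (φ m)) atTop (𝓝 x₀) := fun w hw =>
    hx.congr_dist <| squeeze_zero (fun _ => dist_nonneg)
      (fun m => (dist_comm _ _).trans_le (hw (φ m)))
      (tendsto_one_div_add_atTop_nhds_zero_nat.comp hφ.tendsto_atTop)
  refine ⟨x₀, fun j => le_antisymm ?_ ?_⟩
  · exact le_of_tendsto' (((ψ j).continuous.tendsto x₀).comp (htendsto _ fun m => hz m j))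
      fun m => hψz (φ m) j
  · exact ge_of_tendsto' (((ψ j).continuous.tendsto x₀).comp (htendsto _ fun m => hy m j))
      fun m => hψy (φ m) j

/-- The point of the cube with coordinates `v i / N`, for a vertex `v` of the grid `{0, …, N}^ι`. -/
noncomputable def gridPoint {ι : Type*} (N : ℕ) (v : ι → ℕ) : ι → unitInterval := fun i =>
  projIcc 0 1 zero_le_one ((v i : ℝ) / N)

lemma dist_gridPoint_le {ι : Type*} [Fintype ι] (N : ℕ) {v u : ι → ℕ}
    (h : IsVertex v Finset.univ u) : dist (gridPoint N u) (gridPoint N v) ≤ 1 / N := by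
  rw [dist_pi_le_iff (by positivity)]
  intro i
  refine (abs_projIcc_sub_projIcc _).trans ?_
  rw [← sub_div, abs_div, Nat.abs_cast]
  gcongr
  rcases h i with h | ⟨-, h⟩ <;> simp [h]

/-- A family of functions on a cube `I^J`, one for each coordinate `s`, that satisfies the sign
condition of the Poincaré–Miranda theorem on the two faces `x s = 0` and `x s = 1`. -/
def Admissible {J : Type*} (ψ : J → C(J → unitInterval, ℝ)) : Prop :=
  ∀ s x, (x s = 0 → 0 ≤ ψ s x) ∧ (x s = 1 → ψ s x ≤ 0)

lemma Admissible.exists_approx {ι : Type*} [Fintype ι] {ψ : ι → C(ι → unitInterval, ℝ)}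
    (hψ : Admissible ψ) {N : ℕ} (hN : N ≠ 0) :
    ∃ x, ∀ j, ∃ y z, dist y x ≤ 1 / N ∧ dist z x ≤ 1 / N ∧ 0 ≤ ψ j y ∧ ψ j z ≤ 0 := by
  classical
  let a : ι → (ι → ℕ) → ZMod 2 := fun j v =>
    if v j = 0 then 0 else if v j = N then 1 else if ψ j (gridPoint N v) < 0 then 1 else 0
  obtain ⟨v, hv⟩ := exists_cube_nonconstant (a := a) (N := N) (fun j v h => by simp [a, h])
    (fun j v h => by simp [a, h, hN])
  refine ⟨gridPoint N v, fun j => ?_⟩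
  obtain ⟨u, w, hu, hw, hau, haw⟩ := hv j
  refine ⟨gridPoint N u, gridPoint N w, dist_gridPoint_le N hu, dist_gridPoint_le N hw, ?_, ?_⟩
  · by_cases h0 : u j = 0
    · exact (hψ j _).1 (by simp [gridPoint, h0])
    · by_cases h1 : u j = N
      · simp [a, h1, hN] at hau
      · by_contra! h2
        simp [a, h0, h1, h2] at hau
  · by_cases h0 : w j = 0
    · simp [a, h0] at haw
    · by_cases h1 : w j = N
      · exact (hψ j _).2 (by simp [gridPoint, h1, hN])
      · by_contra! h2
        simp [a, h0, h1, h2.not_gt] at haw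

lemma Admissible.exists_zero_of_finite {ι : Type*} [Finite ι] {ψ : ι → C(ι → unitInterval, ℝ)}
    (hψ : Admissible ψ) : ∃ x, ∀ s, ψ s x = 0 := by
  cases nonempty_fintype ι
  refine exists_forall_eq_zero_of_approx ψ fun ε hε => ?_
  obtain ⟨m, hm⟩ := exists_nat_one_div_lt hε
  obtain ⟨x, hx⟩ := hψ.exists_approx m.succ_ne_zero
  refine ⟨x, fun j => ?_⟩
  obtain ⟨y, z, hy, hz, hψy, hψz⟩ := hx j
  push_cast at hy hz
  exact ⟨y, z, hy.trans hm.le, hz.trans hm.le, hψy, hψz⟩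

/-- Compactness reduces the claim to finitely many functions, which are then restricted to a face of
finite dimension. -/
theorem Admissible.exists_zero {J : Type*} {ψ : J → C(J → unitInterval, ℝ)} (hψ : Admissible ψ) :
    ∃ x, ∀ s, ψ s x = 0 := by
  classical
  suffices h : (⋂ s, {x | ψ s x = 0}).Nonempty by
    obtain ⟨x, hx⟩ := h
    exact ⟨x, fun s => by simpa using mem_iInter.1 hx s⟩
  refine CompactSpace.iInter_nonempty
    (fun s => isClosed_eq (ψ s).continuous continuous_const) fun F => ?_
  let extend : C(F → unitInterval, J → unitInterval) :=
    ⟨fun y s => if h : s ∈ F then y ⟨s, h⟩ else 0, by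
      refine continuous_pi fun s => ?_
      split_ifs <;> fun_prop⟩
  have hextend : ∀ (y : F → unitInterval) (s : F), extend y s = y s := fun y s => dif_pos s.2
  obtain ⟨y, hy⟩ := Admissible.exists_zero_of_finite
    (ψ := fun s : F => (ψ s).comp extend) fun s y =>
      ⟨fun h => (hψ _ _).1 ((hextend y s).trans h), fun h => (hψ _ _).2 ((hextend y s).trans h)⟩
  exact ⟨extend y, mem_iInter₂.2 fun s hs => hy ⟨s, hs⟩⟩

/-! ### Large sets -/

section Large

variable {J : Type*} {P P' P₀ P₁ : Set (J → unitInterval)} {S S' S₀ S₁ : Set J}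

/-- `P` is large with respect to the set `S` of coordinates: every admissible family has a
zero in `P` common to all its members with index in `S`. This is the notion of essentiality for the
pairs of opposite faces with index in `S`. -/
def Large (P : Set (J → unitInterval)) (S : Set J) : Prop :=
  ∀ ψ : J → C(J → unitInterval, ℝ), Admissible ψ → ∃ x ∈ P, ∀ s ∈ S, ψ s x = 0

lemma Large.mono (h : Large P S) (hP : P ⊆ P') (hS : S' ⊆ S) : Large P' S' := fun ψ hψ =>
  let ⟨x, hx, h⟩ := h ψ hψ
  ⟨x, hP hx, fun s hs => h s (hS hs)⟩

lemma Large.nonempty (h : Large P S) : P.Nonempty :=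
  let ⟨x, hx, _⟩ := h (fun _ => 0) fun _ _ => ⟨fun _ => le_rfl, fun _ => le_rfl⟩
  ⟨x, hx⟩

lemma isClosed_setOf_forall_eq_zero (ψ : J → C(J → unitInterval, ℝ)) (S : Set J) :
    IsClosed {x | ∀ s ∈ S, ψ s x = 0} := by
  simp only [ofPred_forall]
  exact isClosed_biInter fun s _ => isClosed_eq (ψ s).continuous continuous_const

lemma not_large_iff : ¬ Large P S ↔ ∃ ψ : J → C(J → unitInterval, ℝ), Admissible ψ ∧
    ∀ x ∈ P, ∃ s ∈ S, ψ s x ≠ 0 := by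
  simp only [Large, not_forall, not_exists, not_and, exists_prop, ne_eq]

lemma Large.exists_common_zero (h : Large P (S₀ ∪ S₁)) (hd : Disjoint S₀ S₁)
    {ψ₀ ψ₁ : J → C(J → unitInterval, ℝ)} (h₀ : Admissible ψ₀) (h₁ : Admissible ψ₁) :
    ∃ x ∈ P, (∀ s ∈ S₀, ψ₀ s x = 0) ∧ ∀ s ∈ S₁, ψ₁ s x = 0 := by
  classical
  obtain ⟨x, hx, hz⟩ := h (S₀.piecewise ψ₀ ψ₁) fun s x => by
    by_cases hs : s ∈ S₀
    · simpa only [piecewise_eq_of_mem, hs] using h₀ s x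
    · simpa only [piecewise_eq_of_notMem, hs, not_false_eq_true] using h₁ s x
  refine ⟨x, hx, fun s hs => ?_, fun s hs => ?_⟩
  · simpa only [piecewise_eq_of_mem, hs] using hz s (Or.inl hs)
  · simpa only [piecewise_eq_of_notMem, disjoint_right.1 hd hs, not_false_eq_true]
      using hz s (Or.inr hs)

lemma Large.inter_eqOn (h : Large P (S₀ ∪ S₁)) (hd : Disjoint S₀ S₁) (y : J → unitInterval) :
    Large (P ∩ {x | EqOn x y S₀}) S₁ := by
  intro ψ hψ
  let coord : J → C(J → unitInterval, ℝ) := fun s => ⟨fun x => (y s : ℝ) - x s, by fun_prop⟩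
  have hcoord : Admissible coord := fun s x =>
    ⟨fun h => by simp [coord, h, (y s).2.1], fun h => by simp [coord, h, (y s).2.2]⟩
  obtain ⟨x, hx, h₀, h₁⟩ := h.exists_common_zero hd hcoord hψ
  exact ⟨x, ⟨hx, fun s hs => Subtype.ext (sub_eq_zero.1 (h₀ s hs)).symm⟩, h₁⟩

lemma Large.of_union (h : Large (P₀ ∪ P₁) (S₀ ∪ S₁)) (hd : Disjoint S₀ S₁) :
    Large P₀ S₀ ∨ Large P₁ S₁ := by
  by_contra! hc
  obtain ⟨ψ₀, h₀, k₀⟩ := not_large_iff.1 hc.1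
  obtain ⟨ψ₁, h₁, k₁⟩ := not_large_iff.1 hc.2
  obtain ⟨x, hx, z₀, z₁⟩ := h.exists_common_zero hd h₀ h₁
  rcases hx with hx | hx
  · obtain ⟨s, hs, hne⟩ := k₀ x hx
    exact hne (z₀ s hs)
  · obtain ⟨s, hs, hne⟩ := k₁ x hx
    exact hne (z₁ s hs)

/-- Admissible families form a convex set, so two of them can be glued along a Urysohn function. -/
lemma Large.of_union_of_disjoint (h : Large (P₀ ∪ P₁) S) (h₀ : IsClosed P₀) (h₁ : IsClosed P₁)
    (hd : Disjoint P₀ P₁) : Large P₀ S ∨ Large P₁ S := by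
  by_contra! hc
  obtain ⟨ψ₀, hψ₀, k₀⟩ := not_large_iff.1 hc.1
  obtain ⟨ψ₁, hψ₁, k₁⟩ := not_large_iff.1 hc.2
  obtain ⟨f, hf₀, hf₁, hf⟩ := exists_continuous_zero_one_of_isClosed h₀ h₁ hd
  obtain ⟨x, hx, hz⟩ := h (fun s => (1 - f) * ψ₀ s + f * ψ₁ s) fun s x => by
    have hfx := hf x
    refine ⟨fun hs => ?_, fun hs => ?_⟩
    · have := mul_nonneg (sub_nonneg.2 hfx.2) ((hψ₀ s x).1 hs)
      have := mul_nonneg hfx.1 ((hψ₁ s x).1 hs)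
      simpa using by linarith
    · have := mul_nonpos_of_nonneg_of_nonpos (sub_nonneg.2 hfx.2) ((hψ₀ s x).2 hs)
      have := mul_nonpos_of_nonneg_of_nonpos hfx.1 ((hψ₁ s x).2 hs)
      simpa using by linarith
  rcases hx with hx | hx
  · obtain ⟨s, hs, hne⟩ := k₀ x hx
    exact hne (by simpa [hf₀ hx] using hz s hs)
  · obtain ⟨s, hs, hne⟩ := k₁ x hx
    exact hne (by simpa [hf₁ hx] using hz s hs)

lemma Large.sInter {c : Set (Set (J → unitInterval))} (hc : IsChain (· ⊆ ·) c)
    (hne : c.Nonempty) (hclosed : ∀ P ∈ c, IsClosed P) (hlarge : ∀ P ∈ c, Large P S) :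
    Large (⋂₀ c) S := by
  intro ψ hψ
  have : Nonempty c := hne.to_subtype
  let Z : Set (J → unitInterval) := {x | ∀ s ∈ S, ψ s x = 0}
  have hZ : ∀ P : c, IsClosed (P.1 ∩ Z) := fun P =>
    (hclosed P P.2).inter (isClosed_setOf_forall_eq_zero ψ S)
  have hdir : Directed (· ⊇ ·) fun P : c => P.1 ∩ Z := fun P Q =>
    (hc.total P.2 Q.2).elim
      (fun h => ⟨P, Subset.rfl, inter_subset_inter_left Z h⟩)
      fun h => ⟨Q, inter_subset_inter_left Z h, Subset.rfl⟩
  obtain ⟨x, hx⟩ := IsCompact.nonempty_iInter_of_directed_nonempty_isCompact_isClosed _ hdir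
    (fun P => hlarge P P.2 ψ hψ) (fun P => (hZ P).isCompact) hZ
  rw [mem_iInter] at hx
  exact ⟨x, fun P hP => (hx ⟨P, hP⟩).1, (hx (Classical.arbitrary c)).2⟩

/-- A minimal closed large set is connected. -/
lemma Large.exists_isPreconnected (h : Large P S) (hP : IsClosed P) :
    ∃ C ⊆ P, IsPreconnected C ∧ Large C S := by
  obtain ⟨C, hCP, hC⟩ := zorn_superset_nonempty {C | IsClosed C ∧ Large C S}
    (fun c hc hchain hne => ⟨⋂₀ c, ⟨isClosed_sInter fun C hC => (hc hC).1,
      Large.sInter hchain hne (fun C hC => (hc hC).1) fun C hC => (hc hC).2⟩,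
      fun C hC => sInter_subset_of_mem hC⟩) P ⟨hP, h⟩
  refine ⟨C, hCP, ?_, hC.prop.2⟩
  rw [isPreconnected_iff_subset_of_fully_disjoint_closed hC.prop.1]
  intro A B hA hB hAB hd
  have hsplit : Large (C ∩ A ∪ C ∩ B) S := by
    rw [← inter_union_distrib_left, inter_eq_left.2 hAB]
    exact hC.prop.2
  have hCA := hC.prop.1.inter hA
  have hCB := hC.prop.1.inter hB
  refine (hsplit.of_union_of_disjoint hCA hCB (hd.mono inter_subset_right inter_subset_right)).imp
    (fun hl => ?_) fun hl => ?_
  · exact (hC.le_of_le ⟨hCA, hl⟩ inter_subset_left).trans inter_subset_right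
  · exact (hC.le_of_le ⟨hCB, hl⟩ inter_subset_left).trans inter_subset_right

lemma Large.exists_preimage_singleton {Y : Type*} [TopologicalSpace Y] (h : Large P S)
    (hP : IsClosed P) {K : Set Y} (hK : IsTotallyDisconnected K) {u : (J → unitInterval) → Y}
    (hu : Continuous u) (hPK : MapsTo u P K) : ∃ p ∈ K, Large (P ∩ u ⁻¹' {p}) S := by
  obtain ⟨C, hCP, hC, hlarge⟩ := h.exists_isPreconnected hP
  obtain ⟨x, hx⟩ := hlarge.nonempty
  have hsub : (u '' C).Subsingleton :=
    hK _ (image_subset_iff.2 fun x hx => hPK (hCP hx)) (hC.image u hu.continuousOn)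
  exact ⟨u x, hPK (hCP hx), hlarge.mono
    (fun y hy => ⟨hCP hy, hsub (mem_image_of_mem u hy) (mem_image_of_mem u hx)⟩) Subset.rfl⟩

lemma Large.preimage_singleton_or_compl_thickening {Y : Type*} [PseudoMetricSpace Y]
    (h : Large P (S₀ ∪ S₁)) (hd : Disjoint S₀ S₁) (hP : IsClosed P) {K : Set Y}
    (hKc : IsClosed K) (hK : IsTotallyDisconnected K) {u : (J → unitInterval) → Y}
    (hu : Continuous u) :
    (∃ p ∈ K, Large (P ∩ u ⁻¹' {p}) S₀) ∨
      ∃ n : ℕ, Large (P ∩ u ⁻¹' (Metric.thickening (1 / (n + 1)) K)ᶜ) S₁ := by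
  refine or_iff_not_imp_left.2 fun hno => ?_
  have hnot : ¬ Large (P ∩ u ⁻¹' K) S₀ := fun hl =>
    hno <| (hl.exists_preimage_singleton (hP.inter (hKc.preimage hu)) hK hu fun _ h => h.2).imp
      fun p hp => ⟨hp.1, hp.2.mono (inter_subset_inter_left _ inter_subset_left) Subset.rfl⟩
  obtain ⟨ψ, hψ, hzero⟩ := not_large_iff.1 hnot
  let Z : Set (J → unitInterval) := P ∩ {x | ∀ s ∈ S₀, ψ s x = 0}
  have hZ : IsClosed Z := hP.inter (isClosed_setOf_forall_eq_zero ψ S₀)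
  have hZK : Disjoint (u '' Z) K := by
    rw [disjoint_left]
    rintro _ ⟨x, hx, rfl⟩ hxK
    obtain ⟨s, hs, hne⟩ := hzero x ⟨hx.1, hxK⟩
    exact hne (hx.2 s hs)
  obtain ⟨δ, hδ, hthick⟩ := hZK.exists_thickenings (hZ.isCompact.image hu) hKc
  obtain ⟨n, hn⟩ := exists_nat_one_div_lt hδ
  refine ⟨n, ?_⟩
  have hnot' : ¬ Large (P ∩ u ⁻¹' Metric.thickening (1 / (n + 1)) K) S₀ := by
    intro hl
    obtain ⟨x, hx, hz⟩ := hl ψ hψ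
    exact disjoint_left.1 hthick
      (Metric.self_subset_thickening hδ _ (mem_image_of_mem u ⟨hx.1, hz⟩))
      (Metric.thickening_mono hn.le K hx.2)
  refine (Large.of_union ?_ hd).resolve_left hnot'
  rwa [preimage_compl, inter_union_compl]

end Large

/-! ### Closed sets, `Gδ` sets and measurable selections -/

/-- Alexandrov's theorem: a point of the closure belongs to the range as soon as it has
neighbourhoods whose preimages have arbitrarily small diameter. -/
lemma isGδ_range_of_isEmbedding {X W : Type*} [TopologicalSpace X] [PolishSpace X]
    [TopologicalSpace W] [TopologicalSpace.MetrizableSpace W] {f : X → W} (hf : IsEmbedding f) :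
    IsGδ (range f) := by
  let := TopologicalSpace.upgradeIsCompletelyMetrizable X
  let := TopologicalSpace.metrizableSpaceMetric W
  let U : ℕ → Set W := fun n => ⋃₀ {O | IsOpen O ∧
    ∀ a ∈ f ⁻¹' O, ∀ b ∈ f ⁻¹' O, dist a b < 1 / ((n : ℝ) + 1)}
  suffices h : range f = closure (range f) ∩ ⋂ n, U n by
    rw [h]
    exact isClosed_closure.isGδ.inter (.iInter_of_isOpen fun n => isOpen_sUnion fun O hO => hO.1)
  apply Subset.antisymm
  · rintro _ ⟨x, rfl⟩
    refine ⟨subset_closure ⟨x, rfl⟩, mem_iInter.2 fun n => ?_⟩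
    have hpos : (0 : ℝ) < 1 / ((n : ℝ) + 1) / 2 := by positivity
    obtain ⟨O, hO, hOx⟩ := hf.isInducing.isOpen_iff.1
      (Metric.isOpen_ball (x := x) (ε := 1 / ((n : ℝ) + 1) / 2))
    have hmem : ∀ a ∈ f ⁻¹' O, dist a x < 1 / ((n : ℝ) + 1) / 2 := fun a ha => by rwa [hOx] at ha
    refine ⟨O, ⟨hO, fun a ha b hb => ?_⟩, ?_⟩
    · linarith [dist_triangle_right a b x, hmem a ha, hmem b hb]
    · exact hOx.ge (Metric.mem_ball_self hpos)
  · rintro y ⟨hy, hyU⟩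
    have hcauchy : Cauchy (comap f (𝓝 y)) := by
      refine Metric.cauchy_iff.2 ⟨?_, fun ε hε => ?_⟩
      · rwa [comap_neBot_iff_frequently, ← mem_closure_iff_frequently]
      · obtain ⟨n, hn⟩ := exists_nat_one_div_lt hε
        obtain ⟨O, ⟨hO, hd⟩, hyO⟩ := mem_iInter.1 hyU n
        exact ⟨f ⁻¹' O, preimage_mem_comap (hO.mem_nhds hyO),
          fun a ha b hb => (hd a ha b hb).trans hn⟩
    have := hcauchy.1
    obtain ⟨x, hx⟩ := CompleteSpace.complete hcauchy
    exact ⟨x, tendsto_nhds_unique ((hf.continuous.tendsto x).mono_left hx) tendsto_comap⟩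

lemma polishSpace_of_isGδ {X : Type*} [TopologicalSpace X] [PolishSpace X] {s : Set X}
    (hs : IsGδ s) : PolishSpace s := by
  obtain ⟨U, hU, rfl⟩ := isGδ_iff_eq_iInter_nat.1 hs
  have : ∀ n, PolishSpace (U n) := fun n => (hU n).polishSpace
  let f : (⋂ n, U n : Set X) → ∀ n, U n := fun x n => ⟨x, mem_iInter.1 x.2 n⟩
  have hf : Continuous f := by fun_prop
  have hemb : IsEmbedding f := .of_comp hf (g := fun y => (y 0 : X)) (by fun_prop) .subtypeVal
  have hrange : range f = ⋂ n, {y | (y n : X) = y 0} := by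
    refine Subset.antisymm (range_subset_iff.2 fun x => mem_iInter.2 fun n => rfl) fun y hy => ?_
    have hy' : ∀ n, (y n : X) = y 0 := by simpa using hy
    exact ⟨⟨y 0, mem_iInter.2 fun n => hy' n ▸ (y n).2⟩, funext fun n => Subtype.ext (hy' n).symm⟩
  refine IsClosedEmbedding.polishSpace (f := f) ⟨hemb, ?_⟩
  rw [hrange]
  exact isClosed_iInter fun n => isClosed_eq (by fun_prop) (by fun_prop)

/-- Since `emb d` is a function of `x` for `(d, x) ∈ Q`, the map `Prod.map π id` embeds `Q`. -/
lemma isGδ_image_prodMap {D C E F : Type*} [TopologicalSpace D] [PolishSpace D]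
    [TopologicalSpace C] [TopologicalSpace.MetrizableSpace C] [TopologicalSpace E] [PolishSpace E]
    [TopologicalSpace F] {π : D → C} (hπ : Continuous π) {emb : D → F} (hemb : IsEmbedding emb)
    {r : E → F} (hr : Continuous r) {Q : Set (D × E)} (hQ : IsClosed Q)
    (h : ∀ w ∈ Q, r w.2 = emb w.1) : IsGδ (Prod.map π id '' Q) := by
  have : PolishSpace Q := hQ.polishSpace
  have hcomp : (fun p : C × E => (r p.2, p.2)) ∘ (fun w : Q => Prod.map π id w.1) =
      Prod.map emb id ∘ Subtype.val := funext fun w => Prod.ext (h w.1 w.2) rfl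
  rw [image_eq_range]
  refine isGδ_range_of_isEmbedding
    (IsEmbedding.of_comp (by fun_prop) (g := fun p => (r p.2, p.2)) (by fun_prop) ?_)
  rw [hcomp]
  exact (hemb.prodMap .id).comp .subtypeVal

lemma isGδ_image_prodMap_of_isLocallyConstant {D C E F κ : Type*} [TopologicalSpace D]
    [PolishSpace D] [TopologicalSpace C] [TopologicalSpace.MetrizableSpace C] [TopologicalSpace E]
    [PolishSpace E] [TopologicalSpace F] {π : D → C} (hπ : Continuous π) {emb : D → F}
    (hemb : IsEmbedding emb) {k : D → κ} (hk : IsLocallyConstant k) (hfin : (range k).Finite)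
    {r : κ → E → F} (hr : ∀ i, Continuous (r i)) {Q : Set (D × E)} (hQ : IsClosed Q)
    (h : ∀ w ∈ Q, r (k w.1) w.2 = emb w.1) : IsGδ (Prod.map π id '' Q) := by
  have hunion : Q = ⋃ i ∈ range k, Q ∩ (k ∘ Prod.fst) ⁻¹' {i} := by
    ext w
    simp
  rw [hunion, image_iUnion₂]
  refine IsGδ.biUnion hfin fun i _ => isGδ_image_prodMap hπ hemb (hr i)
    (hQ.inter ((hk.comp_continuous continuous_fst).isClosed_fiber i)) ?_
  rintro w ⟨hw, rfl⟩
  exact h w hw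

lemma exists_polishSpace_continuous_comp.{u, v} {D : Type u} {E : Type v} [TopologicalSpace D]
    [PolishSpace D] [MeasurableSpace D] [BorelSpace D] [TopologicalSpace E]
    [SecondCountableTopology E] [MeasurableSpace E] [OpensMeasurableSpace E] {f : D → E}
    (hf : Measurable f) :
    ∃ (D' : Type u) (_ : TopologicalSpace D') (_ : PolishSpace D') (π : D' → D),
      Continuous π ∧ Function.Bijective π ∧ Continuous (f ∘ π) :=
  let ⟨τ, hle, hcont, hpol⟩ := hf.exists_continuous
  ⟨D, τ, hpol, id, continuous_id_iff_le.2 hle, Function.bijective_id, hcont⟩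

lemma isClosed_setOf_mem_of_isLocallyConstant {D κ : Type*} [TopologicalSpace D]
    {A : κ → Set D} (hA : ∀ k, IsClosed (A k)) {k : D → κ} (hk : IsLocallyConstant k) :
    IsClosed {d | d ∈ A (k d)} := by
  rw [← isOpen_compl_iff, isOpen_iff_mem_nhds]
  intro d hd
  filter_upwards [(hA (k d)).isOpen_compl.mem_nhds hd, hk.eventually_eq d] with e he hke
  simpa only [mem_compl_iff, mem_ofPred_eq, hke] using he

lemma isClosed_setOf_large {J D : Type*} [TopologicalSpace D] {Q : Set (D × (J → unitInterval))}
    (hQ : IsClosed Q) {σ : D → Set J} (hσ : IsLocallyConstant σ) :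
    IsClosed {d | Large {x | (d, x) ∈ Q} (σ d)} := by
  refine isClosed_setOf_mem_of_isLocallyConstant (A := fun S => {d | Large {x | (d, x) ∈ Q} S})
    (fun S => ?_) hσ
  have hset : {d | Large {x | (d, x) ∈ Q} S} = ⋂ (ψ : J → C(J → unitInterval, ℝ))
      (_ : Admissible ψ), Prod.fst '' (Q ∩ Prod.snd ⁻¹' {x | ∀ s ∈ S, ψ s x = 0}) := by
    ext d
    simp [Large]
  rw [hset]
  exact isClosed_biInter fun ψ _ => isClosedMap_fst_of_compactSpace _
    (hQ.inter ((isClosed_setOf_forall_eq_zero ψ S).preimage continuous_snd))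

section Selection

variable {D K : Type*} [TopologicalSpace D] [MeasurableSpace D] [BorelSpace D]
  [CompleteLinearOrder K] [TopologicalSpace K] [OrderTopology K] [SecondCountableTopology K]
  [MeasurableSpace K] [BorelSpace K]

lemma measurable_sInf_section {A : Set (D × K)} (hA : IsClosed A) :
    Measurable fun d => sInf {y | (d, y) ∈ A} := by
  refine measurable_of_Iic fun r => ?_
  rcases eq_or_ne r ⊤ with rfl | hr
  · simp
  · have hclosed : IsClosed (Prod.fst '' (A ∩ {w : D × K | w.2 ≤ r})) :=
      isClosedMap_fst_of_compactSpace _ (hA.inter (isClosed_le continuous_snd continuous_const))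
    convert! hclosed.measurableSet using 1
    ext d
    constructor
    · intro h
      have hsec : IsClosed {y | (d, y) ∈ A} := hA.preimage (by fun_prop)
      have hne : {y | (d, y) ∈ A}.Nonempty := by
        by_contra! hempty
        simp only [hempty, mem_preimage, sInf_empty, mem_Iic, top_le_iff] at h
        exact hr h
      exact ⟨(d, _), ⟨IsClosed.sInf_mem hne hsec, h⟩, rfl⟩
    · rintro ⟨⟨d, y⟩, ⟨hy, hyr⟩, rfl⟩
      exact (sInf_le (s := {y | (d, y) ∈ A}) hy).trans hyr

lemma exists_measurable_selection {κ : Type*} [Countable κ] [Nonempty κ]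
    [MeasurableSpace κ] {A : κ → Set (D × K)} (hA : ∀ k, IsClosed (A k))
    (h : ∀ d, ∃ k y, (d, y) ∈ A k) :
    ∃ (k : D → κ) (y : D → K), Measurable k ∧ Measurable y ∧ ∀ d, (d, y d) ∈ A (k d) := by
  classical
  obtain ⟨e, he⟩ := exists_surjective_nat κ
  have hex : ∀ d, ∃ n, d ∈ Prod.fst '' A (e n) := fun d => by
    obtain ⟨k, y, hy⟩ := h d
    obtain ⟨n, rfl⟩ := he k
    exact ⟨n, _, hy, rfl⟩
  have hfind : Measurable fun d => Nat.find (hex d) := measurable_find hex fun n =>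
    (isClosedMap_fst_of_compactSpace _ (hA (e n))).measurableSet
  have hsInf : Measurable fun p : D × ℕ => sInf {y | (p.1, y) ∈ A (e p.2)} :=
    measurable_from_prod_countable_left fun n => measurable_sInf_section (hA (e n))
  refine ⟨fun d => e (Nat.find (hex d)), fun d => sInf {y | (d, y) ∈ A (e (Nat.find (hex d)))},
    measurable_from_nat.comp hfind, hsInf.comp (measurable_id.prodMk hfind), fun d => ?_⟩
  obtain ⟨⟨d, y⟩, hy, rfl⟩ := Nat.find_spec (hex d)
  exact IsClosed.sInf_mem (s := {y | (d, y) ∈ A (e (Nat.find (hex d)))}) ⟨y, hy⟩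
    ((hA _).preimage (by fun_prop))

end Selection

/-! ### A recursive construction along the binary tree -/

/-- The coordinates of the cube in which the construction takes place. Apart from the sequence of
coordinates `free k` there are two sequences of coordinates at each node of the binary tree; nodes
are lists of bits with the last choice in front. -/
inductive Idx : Type
  | free (k : ℕ)
  | record (ρ : List Bool) (j : ℕ)
  | locator (ρ : List Bool) (j : ℕ)

instance : Countable Idx :=
  Function.Injective.countable (β := ℕ ⊕ List Bool × ℕ ⊕ List Bool × ℕ)
    (f := fun
      | .free k => .inl k
      | .record ρ j => .inr (.inl (ρ, j))
      | .locator ρ j => .inr (.inr (ρ, j)))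
    fun s t h => by cases s <;> cases t <;> simp_all

/-- The node of the binary tree to which a coordinate is attached, if any. -/
def Idx.node : Idx → Option (List Bool)
  | free _ => none
  | record ρ _ => some ρ
  | locator ρ _ => some ρ

/-- The Hilbert cube, with coordinates indexed by `Idx`. -/
abbrev Cube : Type := Idx → unitInterval

/-- The coordinates attached to the node `ρ`. -/
def nodeAt (ρ : List Bool) : Set Idx := {s | s.node = some ρ}

/-- The coordinates attached to the nodes of the subtree with root `ρ`. -/
def subtree (ρ : List Bool) : Set Idx := {s | ∃ σ, s.node = some σ ∧ ρ <:+ σ}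

lemma nodeAt_subset_subtree (ρ : List Bool) : nodeAt ρ ⊆ subtree ρ := fun _ h =>
  ⟨ρ, h, List.suffix_rfl⟩

lemma subtree_cons_subset (b : Bool) (ρ : List Bool) : subtree (b :: ρ) ⊆ subtree ρ :=
  fun _ ⟨σ, h, hσ⟩ => ⟨σ, h, (List.suffix_cons b ρ).trans hσ⟩

lemma disjoint_nodeAt_subtree_cons (b : Bool) (ρ : List Bool) :
    Disjoint (nodeAt ρ) (subtree (b :: ρ)) := by
  rw [disjoint_left]
  rintro s hs ⟨σ, h, hσ⟩
  obtain rfl : ρ = σ := Option.some.inj (hs.symm.trans h)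
  simpa using hσ.length_le

lemma disjoint_subtree_cons (ρ : List Bool) :
    Disjoint (subtree (false :: ρ)) (subtree (true :: ρ)) := by
  rw [disjoint_left]
  rintro s ⟨σ, h, hσ⟩ ⟨τ, h', hτ⟩
  obtain rfl : σ = τ := Option.some.inj (h.symm.trans h')
  simpa using (List.suffix_of_suffix_length_le hσ hτ le_rfl).eq_of_length rfl

lemma Large.inter_eqOn_nodeAt {P : Set Cube} {ρ : List Bool} (h : Large P (subtree ρ)) (y : Cube) :
    Large (P ∩ {x | EqOn x y (nodeAt ρ)}) (subtree (false :: ρ) ∪ subtree (true :: ρ)) :=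
  Large.inter_eqOn (h.mono Subset.rfl (union_subset (nodeAt_subset_subtree ρ)
    (union_subset (subtree_cons_subset _ ρ) (subtree_cons_subset _ ρ))))
    (disjoint_union_right.2
      ⟨disjoint_nodeAt_subtree_cons _ ρ, disjoint_nodeAt_subtree_cons _ ρ⟩) y

/-- A requirement met at one step of the construction. Each closed large set can be made smaller, at
the price of half of the coordinates, so that it lies in a section of one of countably many closed
sets `alt (b, n)`, where `b` tells which half of the coordinates is kept. At the new node `σ` the
parameter `θ` of the section is recorded in the form `record θ σ`. -/
structure Requirement where
  alt : Bool × ℕ → Set (unitInterval × Cube)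
  isClosed_alt : ∀ k, IsClosed (alt k)
  record : unitInterval → List Bool → ℕ → unitInterval
  measurable_record : Measurable record
  exists_large : ∀ (P : Set Cube) (S : Bool → Set Idx), IsClosed P →
    Disjoint (S false) (S true) → Large P (S false ∪ S true) →
    ∃ k θ, Large (P ∩ {x | (θ, x) ∈ alt k}) (S k.1)

/-- The requirement `T` is met on the set `X`, in the same way for all points over the same
base point. -/
def Requirement.MetOn {C : Type*} (T : Requirement) (X : Set (C × Cube)) : Prop :=
  ∀ c ∈ Prod.fst '' X, ∃ k θ σ, ∀ x, (c, x) ∈ X →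
    (θ, x) ∈ T.alt k ∧ ∀ j, x (.record σ j) = T.record θ σ j

lemma Requirement.MetOn.mono {C : Type*} {T : Requirement} {X X' : Set (C × Cube)} (h : T.MetOn X')
    (hX : X ⊆ X') : T.MetOn X := fun c hc =>
  let ⟨k, θ, σ, h⟩ := h c (image_mono hX hc)
  ⟨k, θ, σ, fun x hx => h x (hX hx)⟩

lemma Requirement.isClosed_setOf_mem_alt (T : Requirement) {D : Type*} [TopologicalSpace D]
    {θ : D → unitInterval} (hθ : Continuous θ) {k : D → Bool × ℕ} (hk : IsLocallyConstant k) :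
    IsClosed {w : D × Cube | (θ w.1, w.2) ∈ T.alt (k w.1)} :=
  isClosed_setOf_mem_of_isLocallyConstant (A := fun k => {w | (θ w.1, w.2) ∈ T.alt k})
    (fun k => (T.isClosed_alt k).preimage (by fun_prop)) (hk.comp_continuous continuous_fst)

lemma Requirement.exists_continuous_choice.{u} (T : Requirement) {D : Type u}
    [TopologicalSpace D] [PolishSpace D] {Q : Set (D × Cube)}
    (hQ : IsClosed Q) {ρ : D → List Bool} (hρ : IsLocallyConstant ρ)
    (hlarge : ∀ d, Large {x | (d, x) ∈ Q} (subtree (false :: ρ d) ∪ subtree (true :: ρ d))) :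
    ∃ (D' : Type u) (_ : TopologicalSpace D') (_ : PolishSpace D') (π : D' → D)
      (k : D' → Bool × ℕ) (θ : D' → unitInterval),
      Continuous π ∧ Function.Bijective π ∧ IsLocallyConstant k ∧ Continuous θ ∧
      Continuous (fun d => T.record (θ d)) ∧
      ∀ d, Large ({x | (π d, x) ∈ Q} ∩ {x | (θ d, x) ∈ T.alt (k d)})
        (subtree ((k d).1 :: ρ (π d))) := by
  borelize D
  let A : Bool × ℕ → Set (D × unitInterval) := fun k =>
    {d | Large {x | (d.1, x) ∈ Q ∧ (d.2, x) ∈ T.alt k} (subtree (k.1 :: ρ d.1))}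
  have hA : ∀ k, IsClosed (A k) := fun k => isClosed_setOf_large
    (Q := {w : (D × unitInterval) × Cube | (w.1.1, w.2) ∈ Q ∧ (w.1.2, w.2) ∈ T.alt k})
    ((hQ.preimage (by fun_prop)).inter ((T.isClosed_alt k).preimage (by fun_prop)))
    ((hρ.comp_continuous continuous_fst).comp fun ρ => subtree (k.1 :: ρ))
  obtain ⟨k, θ, hk, hθ, h⟩ := exists_measurable_selection hA fun d =>
    T.exists_large {x | (d, x) ∈ Q} (fun b => subtree (b :: ρ d)) (hQ.preimage (by fun_prop))
      (disjoint_subtree_cons _) (hlarge d)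
  obtain ⟨D', _, _, π, hπ, hbij, hcont⟩ := exists_polishSpace_continuous_comp
    (hk.prodMk (hθ.prodMk (T.measurable_record.comp hθ)))
  exact ⟨D', _, ‹_›, π, k ∘ π, θ ∘ π, hπ, hbij, (IsLocallyConstant.iff_continuous _).2 hcont.fst,
    hcont.snd.fst, hcont.snd.snd, fun d => h (π d)⟩

/-- A stage of the construction over `C`: the part of the current set over `C₀` is the image of a
closed subset `Q` of `Base × Cube`, for a finer Polish topology `Base` on `C₀`, and the fibres of
`Q` are large with respect to the coordinates strictly above the node `ρ d`. -/
structure Stage.{u} {C : Type u} [TopologicalSpace C] (C₀ : Set C) where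
  Base : Type u
  [topologicalSpace : TopologicalSpace Base]
  [polishSpace : PolishSpace Base]
  π : Base → C
  continuous_π : Continuous π
  injective_π : Function.Injective π
  range_π : range π = C₀
  Q : Set (Base × Cube)
  isClosed_Q : IsClosed Q
  ρ : Base → List Bool
  isLocallyConstant_ρ : IsLocallyConstant ρ
  finite_range_ρ : (range ρ).Finite
  large : ∀ d, Large {x | (d, x) ∈ Q} (subtree (false :: ρ d) ∪ subtree (true :: ρ d))

namespace Stage

attribute [instance] topologicalSpace polishSpace

variable {C : Type*} [TopologicalSpace C] {C₀ : Set C}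

/-- The subset of `C × Cube` given by a stage of the construction. -/
def toSet (s : Stage C₀) : Set (C × Cube) := Prod.map s.π id '' s.Q

lemma mem_toSet (s : Stage C₀) (d : s.Base) (x : Cube) : (s.π d, x) ∈ s.toSet ↔ (d, x) ∈ s.Q :=
  (s.injective_π.prodMap Function.injective_id).mem_set_image (a := (d, x))

lemma fst_mem (s : Stage C₀) {w : C × Cube} (hw : w ∈ s.toSet) : w.1 ∈ C₀ := by
  obtain ⟨w, -, rfl⟩ := hw
  exact s.range_π.subset (mem_range_self w.1)

lemma isClosed_fiber (s : Stage C₀) (c : C) : IsClosed {x | (c, x) ∈ s.toSet} := by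
  by_cases hc : c ∈ range s.π
  · obtain ⟨d, rfl⟩ := hc
    simp only [mem_toSet]
    exact s.isClosed_Q.preimage (by fun_prop)
  · convert! isClosed_empty
    exact eq_empty_of_forall_notMem fun x hx => hc (s.range_π.ge (s.fst_mem hx))

lemma nonempty_fiber (s : Stage C₀) {c : C} (hc : c ∈ C₀) : {x | (c, x) ∈ s.toSet}.Nonempty := by
  obtain ⟨d, rfl⟩ := s.range_π.ge hc
  simp only [mem_toSet]
  exact (s.large d).nonempty

/-- The point whose coordinates of type `record` and `locator` are given by `r` and `a`. -/
def prescribed (r : List Bool → ℕ → unitInterval) (a : ℕ → unitInterval) : Cube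
  | .free _ => 0
  | .record σ j => r σ j
  | .locator _ j => a j

lemma continuous_prescribed {D : Type*} [TopologicalSpace D]
    {r : D → List Bool → ℕ → unitInterval} (hr : Continuous r) {a : D → ℕ → unitInterval}
    (ha : Continuous a) : Continuous fun d => prescribed (r d) (a d) := by
  refine continuous_pi fun s => ?_
  cases s <;> simp only [prescribed] <;> fun_prop

lemma isClosed_setOf_eqOn_nodeAt {D : Type*} [TopologicalSpace D] {y : D → Cube}
    (hy : Continuous y) {node : D → List Bool} (hnode : IsLocallyConstant node) :
    IsClosed {w : D × Cube | EqOn w.2 (y w.1) (nodeAt (node w.1))} := by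
  refine isClosed_setOf_mem_of_isLocallyConstant
    (A := fun σ => {w : D × Cube | EqOn w.2 (y w.1) (nodeAt σ)}) (fun σ => ?_)
    (hnode.comp_continuous continuous_fst)
  simp only [EqOn, ofPred_forall]
  exact isClosed_biInter fun s _ => isClosed_eq (by fun_prop) (by fun_prop)

/-- The locator coordinates at the new node determine the point of the finer Polish space. -/
lemma exists_next [TopologicalSpace.MetrizableSpace C] (s : Stage C₀) (T : Requirement) :
    ∃ s' : Stage C₀, s'.toSet ⊆ s.toSet ∧ IsGδ s'.toSet ∧ T.MetOn s'.toSet := by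
  obtain ⟨D, _, _, π, k, θ, hπ, hbij, hk, hθ, hrec, hlarge⟩ :=
    T.exists_continuous_choice s.isClosed_Q s.isLocallyConstant_ρ s.large
  let := TopologicalSpace.upgradeIsCompletelyMetrizable D
  obtain ⟨emb, hemb⟩ := Metric.PiNatEmbed.exists_embedding_to_hilbert_cube (X := D)
  let node : D → List Bool := fun d => (k d).1 :: s.ρ (π d)
  have hnode : IsLocallyConstant node :=
    hk.comp₂ (s.isLocallyConstant_ρ.comp_continuous hπ) fun k ρ => k.1 :: ρ
  let y : D → Cube := fun d => prescribed (T.record (θ d)) (emb d)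
  have hy : Continuous y := continuous_prescribed hrec hemb.continuous
  let s' : Stage C₀ :=
    { Base := D
      π := s.π ∘ π
      continuous_π := s.continuous_π.comp hπ
      injective_π := s.injective_π.comp hbij.1
      range_π := by rw [hbij.2.range_comp, s.range_π]
      Q := {w | ((π w.1, w.2) ∈ s.Q ∧ (θ w.1, w.2) ∈ T.alt (k w.1)) ∧
        EqOn w.2 (y w.1) (nodeAt (node w.1))}
      isClosed_Q := ((s.isClosed_Q.preimage (by fun_prop)).inter
        (T.isClosed_setOf_mem_alt hθ hk)).inter (isClosed_setOf_eqOn_nodeAt hy hnode)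
      ρ := node
      isLocallyConstant_ρ := hnode
      finite_range_ρ := (finite_univ.image2 List.cons s.finite_range_ρ).subset
        (range_subset_iff.2 fun d => mem_image2_of_mem (mem_univ _) (mem_range_self _))
      large := fun d => (hlarge d).inter_eqOn_nodeAt (y d) }
  have hlocator : ∀ w ∈ s'.Q, (fun j => w.2 (.locator (node w.1) j)) = emb w.1 := fun w hw =>
    funext fun j => hw.2 (x := .locator (node w.1) j) rfl
  refine ⟨s', ?_, ?_, ?_⟩
  · rintro _ ⟨w, hw, rfl⟩
    exact ⟨(π w.1, w.2), hw.1.1, rfl⟩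
  · exact isGδ_image_prodMap_of_isLocallyConstant s'.continuous_π hemb hnode s'.finite_range_ρ
      (r := fun σ x j => x (.locator σ j)) (fun σ => by fun_prop) s'.isClosed_Q hlocator
  · rintro _ ⟨_, ⟨⟨d, x⟩, -, rfl⟩, rfl⟩
    refine ⟨k d, θ d, node d, fun x hx => ?_⟩
    have hx := (s'.mem_toSet d x).1 hx
    exact ⟨hx.1.2, fun j => hx.2 (x := .record (node d) j) rfl⟩

end Stage

theorem exists_isGδ_metOn {C : Type*} [TopologicalSpace C] [PolishSpace C] {C₀ : Set C}
    (hC₀ : IsClosed C₀) {P₀ : Set (C × Cube)} (hP₀ : IsClosed P₀)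
    (hlarge : ∀ c ∈ C₀, Large {x | (c, x) ∈ P₀} (subtree [])) (T : ℕ → Requirement) :
    ∃ X ⊆ P₀, IsGδ X ∧ (∀ n, (T n).MetOn X) ∧ ∀ c ∈ C₀, ∃ x, (c, x) ∈ X := by
  choose f hf using fun (s : Stage C₀) T => s.exists_next T
  let s₀ : Stage C₀ :=
    { Base := C₀
      polishSpace := hC₀.polishSpace
      π := Subtype.val
      continuous_π := continuous_subtype_val
      injective_π := Subtype.val_injective
      range_π := Subtype.range_val
      Q := Prod.map Subtype.val id ⁻¹' P₀
      isClosed_Q := hP₀.preimage (by fun_prop)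
      ρ := fun _ => []
      isLocallyConstant_ρ := .const []
      finite_range_ρ := (finite_singleton []).subset range_const_subset
      large := fun d => (hlarge d d.2).mono Subset.rfl
        (union_subset (subtree_cons_subset _ _) (subtree_cons_subset _ _)) }
  let s : ℕ → Stage C₀ := fun n => Nat.rec s₀ (fun n s => f s (T n)) n
  have hs : ∀ n, (s (n + 1)).toSet ⊆ (s n).toSet ∧ IsGδ (s (n + 1)).toSet ∧
      (T n).MetOn (s (n + 1)).toSet := fun n => hf (s n) (T n)
  refine ⟨⋂ n, (s (n + 1)).toSet, ?_, .iInter fun n => (hs n).2.1,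
    fun n => (hs n).2.2.mono (iInter_subset _ n), fun c hc => ?_⟩
  · refine (iInter_subset _ 0).trans ((hs 0).1.trans ?_)
    exact image_subset_iff.2 Subset.rfl
  · obtain ⟨x, hx⟩ := IsCompact.nonempty_iInter_of_sequence_nonempty_isCompact_isClosed
      (fun n => {x | (c, x) ∈ (s (n + 1)).toSet}) (fun n x hx => (hs (n + 1)).1 hx)
      (fun n => (s (n + 1)).nonempty_fiber hc) ((s 1).isClosed_fiber c).isCompact
      fun n => (s (n + 1)).isClosed_fiber c
    exact ⟨x, by simpa using hx⟩

/-- The requirement of comparing the coordinate with index `i` with `p`. -/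
def Requirement.bisect (i : Idx) (p : unitInterval) : Requirement where
  alt
    | (false, _) => {w | w.2 i ≤ p}
    | (true, _) => {w | p ≤ w.2 i}
  isClosed_alt
    | (false, _) => isClosed_le (by fun_prop) continuous_const
    | (true, _) => isClosed_le continuous_const (by fun_prop)
  record _ _ _ := 0
  measurable_record := measurable_const
  exists_large P S _ hd h := by
    have hunion : P ∩ {x | x i ≤ p} ∪ P ∩ {x | p ≤ x i} = P := by
      rw [← inter_union_distrib_left, inter_eq_left]
      exact fun x _ => le_total (x i) p
    exact (Large.of_union (hunion.symm ▸ h) hd).elim (fun h => ⟨(false, 0), 0, h⟩)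
      fun h => ⟨(true, 0), 0, h⟩

/-- The requirement of either putting the coordinate with index `i` into `K`, in which case its
value `θ` is recorded as `H θ`, or bounding it away from `K`. -/
def Requirement.avoidOrRecord (i : Idx) {K : Set unitInterval} (hKc : IsClosed K)
    (hK : IsTotallyDisconnected K) {H : unitInterval → List Bool → ℕ → unitInterval}
    (hH : Measurable H) : Requirement where
  alt
    | (false, _) => {w | w.1 ∈ K ∧ w.2 i = w.1}
    | (true, n) => {w | w.2 i ∉ Metric.thickening (1 / (n + 1)) K}
  isClosed_alt
    | (false, _) => (hKc.preimage continuous_fst).inter (isClosed_eq (by fun_prop) (by fun_prop))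
    | (true, _) => Metric.isOpen_thickening.isClosed_compl.preimage
        (f := fun w : unitInterval × Cube => w.2 i) (by fun_prop)
  record := H
  measurable_record := hH
  exists_large P S hP hd h := by
    rcases h.preimage_singleton_or_compl_thickening hd hP hKc hK (continuous_apply i) with
      ⟨p, hp, h⟩ | ⟨n, h⟩
    · exact ⟨(false, 0), p, h.mono (fun x hx => ⟨hx.1, hp, hx.2⟩) Subset.rfl⟩
    · exact ⟨(true, n), 0, h⟩

lemma injOn_fst_of_metOn {C : Type*} {X : Set (C × Cube)}
    (h : ∀ i (p : ℚ), (Requirement.bisect i (projIcc 0 1 zero_le_one (p : ℝ))).MetOn X) :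
    InjOn Prod.fst X := by
  have hle : ∀ c x y, (c, x) ∈ X → (c, y) ∈ X → ∀ i, y i ≤ x i := by
    intro c x y hx hy i
    by_contra! hlt
    obtain ⟨p, hxp, hpy⟩ := exists_rat_btwn (Subtype.coe_lt_coe.2 hlt)
    have hp : (p : ℝ) ∈ Icc (0 : ℝ) 1 := ⟨(x i).2.1.trans hxp.le, hpy.le.trans (y i).2.2⟩
    obtain ⟨⟨b, n⟩, θ, σ, hmet⟩ := h i p c ⟨_, hx, rfl⟩
    rw [projIcc_of_mem zero_le_one hp] at hmet
    cases b
    · exact hpy.not_ge (hmet y hy).1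
    · exact hxp.not_ge (hmet x hx).1
  rintro ⟨c, x⟩ hx ⟨_, y⟩ hy rfl
  exact Prod.ext rfl (funext fun i => le_antisymm (hle c y x hy hx i) (hle c x y hx hy i))

lemma exists_record_of_metOn {C : Type*} {X : Set (C × Cube)} {i : Idx} {K : Set unitInterval}
    {hKc : IsClosed K} {hK : IsTotallyDisconnected K}
    {H : unitInterval → List Bool → ℕ → unitInterval} {hH : Measurable H}
    (h : (Requirement.avoidOrRecord i hKc hK hH).MetOn X) {w : C × Cube} (hw : w ∈ X)
    (hi : w.2 i ∈ K) : ∃ σ, ∀ j, w.2 (.record σ j) = H (w.2 i) σ j := by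
  obtain ⟨⟨b, n⟩, θ, σ, hmet⟩ := h w.1 (mem_image_of_mem _ hw)
  obtain ⟨halt, hrec⟩ := hmet w.2 hw
  cases b
  · have hθ : w.2 i = θ := halt.2
    exact ⟨σ, hθ ▸ hrec⟩
  · exact absurd (Metric.self_subset_thickening (by positivity) K hi) halt

theorem exists_graph {C κ : Type*} [TopologicalSpace C] [PolishSpace C] [Countable κ] {C₀ : Set C}
    (hC₀ : IsClosed C₀) {P₀ : Set (C × Cube)} (hP₀ : IsClosed P₀)
    (hlarge : ∀ c ∈ C₀, Large {x | (c, x) ∈ P₀} (subtree [])) {K : κ → Set unitInterval}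
    (hKc : ∀ q, IsClosed (K q)) (hK : ∀ q, IsTotallyDisconnected (K q))
    {H : κ → unitInterval → List Bool → ℕ → unitInterval} (hH : ∀ q, Measurable (H q)) :
    ∃ X ⊆ P₀, IsGδ X ∧ InjOn Prod.fst X ∧ (∀ c ∈ C₀, ∃ x, (c, x) ∈ X) ∧
      ∀ w ∈ X, ∀ i q, w.2 i ∈ K q → ∃ σ, ∀ j, w.2 (.record σ j) = H q (w.2 i) σ j := by
  let req : Idx × ℚ ⊕ Idx × κ → Requirement := Sum.elim
    (fun a => Requirement.bisect a.1 (projIcc 0 1 zero_le_one (a.2 : ℝ)))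
    fun a => Requirement.avoidOrRecord a.1 (hKc a.2) (hK a.2) (hH a.2)
  have : Nonempty (Idx × ℚ ⊕ Idx × κ) := ⟨.inl (.free 0, 0)⟩
  obtain ⟨e, he⟩ := exists_surjective_nat (Idx × ℚ ⊕ Idx × κ)
  obtain ⟨X, hX, hG, hmet, hex⟩ := exists_isGδ_metOn hC₀ hP₀ hlarge (req ∘ e)
  have hmet : ∀ a, (req a).MetOn X := he.forall.2 hmet
  have hrecord : ∀ i q, (Requirement.avoidOrRecord i (hKc q) (hK q) (hH q)).MetOn X :=
    fun i q => hmet (.inr (i, q))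
  exact ⟨X, hX, hG, injOn_fst_of_metOn fun i p => hmet (.inl (i, p)), hex,
    fun w hw i q => exists_record_of_metOn (hrecord i q) hw⟩

/-! ### Zero-dimensional spaces -/

/-- The Cantor space. -/
abbrev Cantor : Type := ℕ → Bool

instance : PolishSpace Cantor :=
  have : PolishSpace Bool := inferInstance
  inferInstance

/-- A zero-dimensional separable metrizable space, encoded as a space that embeds into the Cantor
space. -/
def ZeroDim (X : Type*) [TopologicalSpace X] : Prop :=
  ∃ f : X → Cantor, IsEmbedding f

section ZeroDim

variable {X Y : Type*} [TopologicalSpace X] [TopologicalSpace Y]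

lemma ZeroDim.comp_isEmbedding (h : ZeroDim Y) {f : X → Y} (hf : IsEmbedding f) : ZeroDim X :=
  let ⟨g, hg⟩ := h
  ⟨g ∘ f, hg.comp hf⟩

lemma ZeroDim.sigmaEmbeddable (h : ZeroDim X) : SigmaEmbeddable X Cantor :=
  let ⟨_, hf⟩ := h
  .of_isEmbedding hf

lemma zeroDim_of_isEmbedding {κ : Type*} [Countable κ] {f : X → κ → Bool} (hf : IsEmbedding f) :
    ZeroDim X := by
  cases nonempty_encodable κ
  let F : (κ → Bool) → Cantor := fun y n => (Encodable.decode n).elim false y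
  have hF : Continuous F := continuous_pi fun n => by
    cases h : Encodable.decode (α := κ) n <;> simp only [F, h, Option.elim] <;> fun_prop
  have hleft : Function.LeftInverse (fun (y : Cantor) k => y (Encodable.encode k)) F := fun y =>
    funext fun k => by simp [F]
  exact ⟨F ∘ f, (hleft.isEmbedding (by fun_prop) hF).comp hf⟩

lemma zeroDim_pi {ι : Type*} [Countable ι] {X : ι → Type*} [∀ i, TopologicalSpace (X i)]
    (h : ∀ i, ZeroDim (X i)) : ZeroDim (∀ i, X i) := by
  choose f hf using h
  have hcurry : IsEmbedding fun (y : ι → Cantor) (p : ι × ℕ) => y p.1 p.2 :=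
    Function.LeftInverse.isEmbedding (f := fun z i n => z (i, n)) (fun _ => rfl) (by fun_prop)
      (by fun_prop)
  exact zeroDim_of_isEmbedding (hcurry.comp (IsEmbedding.piMap hf))

lemma continuous_decide_lt {L : Type*} [LinearOrder L] [TopologicalSpace L] [OrderClosedTopology L]
    {f g : X → L} (hf : Continuous f) (hg : Continuous g) (hne : ∀ w, f w ≠ g w) :
    Continuous fun w => decide (f w < g w) := by
  refine (continuous_bool_rng true).2 ⟨?_, ?_⟩
  · convert! isClosed_le hf hg using 1
    ext w
    simp [(hne w).le_iff_lt]
  · convert! isOpen_lt hf hg using 1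
    ext w
    simp

lemma zeroDim_of_forall_ne {L ι κ : Type*} [T0Space X] [LinearOrder L] [TopologicalSpace L]
    [OrderTopology L] [Countable ι] [Countable κ] {c : X → Cantor} {x : X → ι → L}
    (h : IsInducing fun w => (c w, x w)) {s : κ → X → L} (hs : ∀ q, Continuous (s q))
    (hdense : ∀ a b, a < b → ∃ q, ∀ w, s q w ∈ Ioo a b) (hne : ∀ w i q, x w i ≠ s q w) :
    ZeroDim X := by
  let f : X → ℕ ⊕ ι × κ → Bool := fun w => Sum.elim (c w) fun p => decide (x w p.1 < s p.2 w)
  have hx : ∀ i, Continuous fun w => x w i := fun i => (continuous_apply i).comp h.continuous.snd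
  have hf : Continuous f := continuous_pi fun
    | .inl n => (continuous_apply n).comp h.continuous.fst
    | .inr (i, q) => continuous_decide_lt (hx i) (hs q) fun w => hne w i q
  refine zeroDim_of_isEmbedding (f := f) (IsInducing.isEmbedding
    (isInducing_iff_nhds.2 fun w => le_antisymm (hf.tendsto w).le_comap ?_))
  have hbit : ∀ k, ∀ᶠ v in comap f (𝓝 (f w)), f v k = f w k := fun k =>
    (((continuous_apply k).tendsto (f w)).comp tendsto_comap).eventually
      (p := (· = f w k)) (mem_nhds_discrete.2 rfl)
  rw [h.nhds_eq_comap, ← tendsto_iff_comap]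
  refine Tendsto.prodMk_nhds (tendsto_pi_nhds.2 fun n => ?_) (tendsto_pi_nhds.2 fun i => ?_)
  · exact tendsto_nhds_of_eventually_eq (hbit (.inl n))
  refine tendsto_order.2 ⟨fun a ha => ?_, fun a ha => ?_⟩
  · obtain ⟨q, hq⟩ := hdense _ _ ha
    filter_upwards [hbit (.inr (i, q))] with v hv
    have hle : s q v ≤ x v i := by simpa [f, (hq w).2.not_gt] using hv
    exact (hq v).1.trans_le hle
  · obtain ⟨q, hq⟩ := hdense _ _ ha
    filter_upwards [hbit (.inr (i, q))] with v hv
    have hlt : x v i < s q v := by simpa [f, (hq w).1] using hv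
    exact hlt.trans (hq v).2

lemma ZeroDim.exists_seq_isClopen (h : ZeroDim X) {U V : Set X} (hU : IsOpen U) (hV : IsOpen V)
    (hUV : U ∪ V = univ) :
    ∃ A : ℕ → Set X, (∀ n, IsClopen (A n)) ∧ ⋃ n, A n = univ ∧ ∀ n, A n ⊆ U ∨ A n ⊆ V := by
  obtain ⟨f, hf⟩ := h
  have := hf.secondCountableTopology
  cases isEmpty_or_nonempty X
  · exact ⟨fun _ => ∅, fun _ => isClopen_empty, Subsingleton.elim _ _,
      fun _ => .inl (empty_subset U)⟩
  have hnhds : ∀ x, ∃ A, IsClopen A ∧ x ∈ A ∧ (A ⊆ U ∨ A ⊆ V) := by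
    intro x
    obtain ⟨W, hW, hxW, hWUV⟩ : ∃ W, IsOpen W ∧ x ∈ W ∧ (W ⊆ U ∨ W ⊆ V) :=
      (hUV.ge (mem_univ x)).elim (fun hx => ⟨U, hU, hx, .inl Subset.rfl⟩)
        fun hx => ⟨V, hV, hx, .inr Subset.rfl⟩
    obtain ⟨O, hO, rfl⟩ := hf.isInducing.isOpen_iff.1 hW
    obtain ⟨A, hA, hxA, hAO⟩ := compact_exists_isClopen_in_isOpen hO hxW
    have hAW : f ⁻¹' A ⊆ f ⁻¹' O := preimage_mono hAO
    exact ⟨f ⁻¹' A, hA.preimage hf.continuous, hxA, hWUV.imp hAW.trans hAW.trans⟩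
  choose A hA hxA hAUV using hnhds
  obtain ⟨s, hs, hcover⟩ := TopologicalSpace.countable_cover_nhds
    fun x => (hA x).isOpen.mem_nhds (hxA x)
  have hne : s.Nonempty :=
    (nonempty_biUnion.1 (hcover ▸ univ_nonempty)).imp fun _ h => h.1
  obtain ⟨g, rfl⟩ := hs.exists_eq_range hne
  exact ⟨A ∘ g, fun n => hA _, by simpa using hcover, fun n => hAUV _⟩

lemma ZeroDim.exists_isClopen (h : ZeroDim X) {U V : Set X} (hU : IsOpen U) (hV : IsOpen V)
    (hUV : U ∪ V = univ) : ∃ E, IsClopen E ∧ E ⊆ U ∧ Eᶜ ⊆ V := by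
  classical
  obtain ⟨A, hA, hcover, hAUV⟩ := h.exists_seq_isClopen hU hV hUV
  have hmem : ∀ x, ∃ n, x ∈ A n := fun x => mem_iUnion.1 (hcover.ge (mem_univ x))
  let first : X → ℕ := fun x => Nat.find (hmem x)
  have hfirst : IsLocallyConstant first := IsLocallyConstant.iff_isOpen_fiber.2 fun n => by
    rw [preimage_find_eq_disjointed]
    exact (disjointedRec (fun t i ht => ht.diff (hA i)) (hA n)).isOpen
  refine ⟨first ⁻¹' {n | A n ⊆ U}, ⟨⟨hfirst {n | A n ⊆ U}ᶜ⟩, hfirst _⟩, fun x hx => ?_,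
    fun x hx => ?_⟩
  · exact hx (Nat.find_spec (hmem x))
  · exact (hAUV (first x)).resolve_left hx (Nat.find_spec (hmem x))

lemma notMem_closure_image_compl_union {e : X → Y} (he : IsInducing e) {E : Set X}
    (hE : IsOpen E) {F : Set Y} (hF : IsClosed F) (hEF : E ⊆ (e ⁻¹' F)ᶜ) {d : X} (hd : d ∈ E) :
    e d ∉ closure (e '' Eᶜ ∪ F) := by
  rw [closure_union, hF.closure_eq]
  rintro (h | h)
  · have h : d ∈ e ⁻¹' closure (e '' Eᶜ) := h
    rw [← he.closure_eq_preimage_closure_image, hE.isClosed_compl.closure_eq] at h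
    exact h hd
  · exact hEF hd h

/-- A zero-dimensional subspace is avoided by a partition between two disjoint closed sets. -/
lemma ZeroDim.exists_forall_ne_zero {D : Type*} [TopologicalSpace D]
    [TopologicalSpace.MetrizableSpace Y] (h : ZeroDim D) {e : D → Y} (he : IsInducing e)
    {F G : Set Y} (hF : IsClosed F) (hG : IsClosed G) (hFG : Disjoint F G) (hF' : F.Nonempty)
    (hG' : G.Nonempty) :
    ∃ ψ : C(Y, ℝ), (∀ y ∈ F, 0 ≤ ψ y) ∧ (∀ y ∈ G, ψ y ≤ 0) ∧ ∀ d, ψ (e d) ≠ 0 := by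
  let := TopologicalSpace.metrizableSpaceMetric Y
  obtain ⟨E, hE, hEG, hEF⟩ := h.exists_isClopen (hG.preimage he.continuous).isOpen_compl
    (hF.preimage he.continuous).isOpen_compl
    (by rw [← compl_inter, ← preimage_inter, hFG.symm.inter_eq, preimage_empty, compl_empty])
  let ψ : Y → ℝ := fun y => Metric.infDist y (e '' Eᶜ ∪ G) - Metric.infDist y (e '' E ∪ F)
  have hpos : ∀ y ∈ e '' E ∪ F, ψ y = Metric.infDist y (e '' Eᶜ ∪ G) := fun y hy => by
    rw [sub_eq_self, Metric.infDist_zero_of_mem hy]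
  have hneg : ∀ y ∈ e '' Eᶜ ∪ G, ψ y = -Metric.infDist y (e '' E ∪ F) := fun y hy => by
    rw [← zero_sub, ← Metric.infDist_zero_of_mem hy]
  refine ⟨⟨ψ, by fun_prop⟩, fun y hy => (hpos y (.inr hy)).ge.trans' Metric.infDist_nonneg,
    fun y hy => (hneg y (.inr hy)).trans_le (neg_nonpos.2 Metric.infDist_nonneg), fun d => ?_⟩
  by_cases hd : d ∈ E
  · refine (hpos _ (.inl (mem_image_of_mem e hd))).trans_ne (ne_of_gt ?_)
    rw [← Metric.infDist_pos_iff_notMem_closure hG'.inr]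
    exact notMem_closure_image_compl_union he hE.isOpen hG hEG hd
  · refine (hneg _ (.inl (mem_image_of_mem e hd))).trans_ne (neg_ne_zero.2 (ne_of_gt ?_))
    rw [← Metric.infDist_pos_iff_notMem_closure hF'.inr]
    simpa using notMem_closure_image_compl_union he hE.compl.isOpen hF hEF hd

end ZeroDim

/-! ### Codes and records -/

/-- A code of a point of the Cantor space together with a family of open sets indexed by the nodes
of the binary tree. The point is the value at `none`, and the value at `some ρ` is the code of the
open set at the node `ρ` with respect to a universal open set. -/
abbrev Code : Type := Option (List Bool) → Cantor

lemma exists_isOpen_universal (Z : Type*) [TopologicalSpace Z] [SecondCountableTopology Z] :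
    ∃ U : Set (Cantor × Z), IsOpen U ∧ ∀ O, IsOpen O → ∃ c, ∀ z, (c, z) ∈ U ↔ z ∈ O := by
  classical
  let basis := TopologicalSpace.countableBasis Z
  refine ⟨⋃ b : basis, {c : Cantor | c (Encodable.encode b) = true} ×ˢ (b : Set Z),
    isOpen_iUnion fun b => ?_,
    fun O hO => ⟨fun n => decide (∃ b : basis, Encodable.encode b = n ∧ (b : Set Z) ⊆ O),
      fun z => ?_⟩⟩
  · have hbit : Continuous fun c : Cantor => c (Encodable.encode b) := by fun_prop
    exact ((isOpen_discrete {true}).preimage hbit).prod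
      (TopologicalSpace.isOpen_of_mem_countableBasis b.2)
  · have hmem := (TopologicalSpace.isBasis_countableBasis Z).isOpen_iff.1 hO z
    simp only [mem_iUnion, mem_prod, mem_ofPred_eq, decide_eq_true_eq, Encodable.encode_inj,
      exists_eq_left]
    constructor
    · rintro ⟨b, hbO, hzb⟩
      exact hbO hzb
    · intro hz
      obtain ⟨b, hb, hzb, hbO⟩ := hmem hz
      exact ⟨⟨b, hb⟩, hbO, hzb⟩

lemma exists_cantor_isClosedEmbedding {a b : unitInterval} (h : a < b) :
    ∃ f : Cantor → unitInterval, IsClosedEmbedding f ∧ ∀ v, f v ∈ Icc a b := by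
  have hperfect : Perfect (Icc a b) := ⟨isClosed_Icc, isPreconnected_Icc.preperfect_of_nontrivial
    ⟨a, left_mem_Icc.2 h.le, b, right_mem_Icc.2 h.le, h.ne⟩⟩
  obtain ⟨f, hf, hcont, hinj⟩ := hperfect.exists_nat_bool_injection (nonempty_Icc.2 h.le)
  exact ⟨f, hcont.isClosedEmbedding hinj, range_subset_iff.1 hf⟩

lemma ZeroDim.exists_isClosedEmbedding {V : Type*} [TopologicalSpace V] [CompactSpace V]
    (h : ZeroDim V) : ∃ (κ : Type) (_ : Countable κ) (t : κ → V → unitInterval),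
      (∀ q, IsClosedEmbedding (t q)) ∧ ∀ a b, a < b → ∃ q, ∀ v, t q v ∈ Ioo a b := by
  obtain ⟨g, hg⟩ := h
  let d := TopologicalSpace.denseSeq unitInterval
  have hd : ∀ {a b}, a < b → ∃ n, d n ∈ Ioo a b := fun h =>
    (TopologicalSpace.denseRange_denseSeq _).exists_mem_open isOpen_Ioo (nonempty_Ioo.2 h)
  choose f hf hfd using fun q : {p : ℕ × ℕ // d p.1 < d p.2} => exists_cantor_isClosedEmbedding q.2
  refine ⟨_, inferInstance, fun q => f q ∘ g, fun q =>
    ((hf q).continuous.comp hg.continuous).isClosedEmbedding ((hf q).injective.comp hg.injective),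
    fun a b hab => ?_⟩
  obtain ⟨m, ham, hmb⟩ := hd hab
  obtain ⟨n, hmn, hnb⟩ := hd hmb
  let q : {p : ℕ × ℕ // d p.1 < d p.2} := ⟨(m, n), hmn⟩
  exact ⟨q, fun v => ⟨ham.trans_le (hfd q _).1, (hfd q _).2.trans_lt hnb⟩⟩

lemma zeroDim_code : ZeroDim Code := zeroDim_pi fun _ => ⟨id, .id⟩

lemma measurableSet_setOf_exists_mem_inter {R Z C : Type*}
    [TopologicalSpace R] [PolishSpace R] [MeasurableSpace R] [BorelSpace R]
    [TopologicalSpace Z] [PolishSpace Z] [MeasurableSpace Z] [BorelSpace Z]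
    [TopologicalSpace C] [PolishSpace C] [MeasurableSpace C] [BorelSpace C]
    {π : Z → C} (hπ : Continuous π) {Y : Set Z} (hY : MeasurableSet Y) (hinj : InjOn π Y)
    {U : Set (R × Z)} (hU : MeasurableSet U) :
    MeasurableSet {p : R × C | ∃ z ∈ Y, π z = p.2 ∧ (p.1, z) ∈ U} := by
  have himage : {p : R × C | ∃ z ∈ Y, π z = p.2 ∧ (p.1, z) ∈ U} =
      Prod.map id π '' (Prod.snd ⁻¹' Y ∩ U) := by
    ext ⟨r, c⟩
    constructor
    · rintro ⟨z, hz, rfl, hU⟩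
      exact ⟨(r, z), ⟨hz, hU⟩, rfl⟩
    · rintro ⟨⟨r, z⟩, ⟨hz, hU⟩, h⟩
      cases h
      exact ⟨z, hz, rfl, hU⟩
  rw [himage]
  refine ((measurable_snd hY).inter hU).image_of_continuousOn_injOn (by fun_prop) ?_
  rintro ⟨r, z⟩ ⟨hz, -⟩ ⟨r', z'⟩ ⟨hz', -⟩ h
  obtain ⟨hr, hzz'⟩ := Prod.ext_iff.1 h
  exact Prod.ext hr (hinj hz hz' hzz')

section Diagonalization

open Classical in
/-- The values to be written at the node `ρ` in the presence of the code `v`. The `n`-th one is `0`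
if the point of the graph `Y n` over the coded point lies in the open set at `ρ` and `1` otherwise,
so that it refutes the claim that a record is nonzero exactly at the points of that set. -/
noncomputable def recordOf (U : Set (Cantor × Cantor × Cube)) (Y : ℕ → Set (Cantor × Cube))
    (v : Code) (ρ : List Bool) (n : ℕ) : unitInterval :=
  if ∃ y ∈ Y n, y.1 = v none ∧ (v (some ρ), y) ∈ U then 0 else 1

variable {U : Set (Cantor × Cantor × Cube)} {Y : ℕ → Set (Cantor × Cube)}

lemma measurable_recordOf (hU : IsOpen U) (hY : ∀ n, IsGδ (Y n))
    (hinj : ∀ n, InjOn Prod.fst (Y n)) : Measurable (recordOf U Y) := by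
  refine measurable_pi_lambda _ fun ρ => measurable_pi_lambda _ fun n =>
    Measurable.ite ?_ measurable_const measurable_const
  have hcode : Measurable fun v : Code => (v (some ρ), v none) := by fun_prop
  exact hcode (measurableSet_setOf_exists_mem_inter continuous_fst (hY n).measurableSet (hinj n)
    hU.measurableSet)

lemma exists_graph_record {κ : Type*} [Countable κ] {t : κ → Code → unitInterval}
    (ht : ∀ q, IsClosedEmbedding (t q)) {h : Code → List Bool → ℕ → unitInterval}
    (hh : Measurable h) {P₀ : Set (Cantor × Cube)} (hP₀ : IsClosed P₀) :
    ∃ X ⊆ P₀, IsGδ X ∧ InjOn Prod.fst X ∧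
      (∀ c, Large {x | (c, x) ∈ P₀} (subtree []) → ∃ x, (c, x) ∈ X) ∧
      ∀ w ∈ X, ∀ i q v, w.2 i = t q v → ∃ ρ, ∀ n, w.2 (.record ρ n) = h v ρ n := by
  obtain ⟨X, hXP, hX, hXinj, hXC, hXrec⟩ := exists_graph (isClosed_setOf_large hP₀ (.const _)) hP₀
    (fun _ => id) (fun q => (ht q).isClosed_range)
    (fun q => (ht q).isEmbedding.isTotallyDisconnected_range.2 inferInstance)
    (fun q => (ht q).measurableEmbedding.measurable_extend hh (measurable_const (a := 0)))
  refine ⟨X, hXP, hX, hXinj, hXC, fun w hw i q v hwv => ?_⟩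
  obtain ⟨ρ, hρ⟩ := hXrec w hw i q ⟨v, hwv.symm⟩
  exact ⟨ρ, fun n => by rw [hρ n, hwv, (ht q).injective.extend_apply]⟩

lemma large_setOf_forall_eq_zero {ψ : ℕ → C(Cantor × Cube, ℝ)}
    (h₀ : ∀ k, ∀ y ∈ {y : Cantor × Cube | y.2 (.free k) = 0}, 0 ≤ ψ k y)
    (h₁ : ∀ k, ∀ y ∈ {y : Cantor × Cube | y.2 (.free k) = 1}, ψ k y ≤ 0) (c : Cantor) :
    Large {x | ∀ k, ψ k (c, x) = 0} (subtree []) := by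
  intro φ hφ
  let Ψ : Idx → C(Cube, ℝ)
    | .free k => ⟨fun x => ψ k (c, x), by fun_prop⟩
    | s => φ s
  have hΨ : Admissible Ψ
    | .free k, x => ⟨h₀ k (c, x), h₁ k (c, x)⟩
    | .record ρ j, x => hφ _ x
    | .locator ρ j, x => hφ _ x
  obtain ⟨x, hx⟩ := hΨ.exists_zero
  refine ⟨x, fun k => hx (.free k), ?_⟩
  rintro (k | ⟨ρ, j⟩ | ⟨ρ, j⟩) ⟨σ, hσ, -⟩
  · exact absurd hσ (by simp [Idx.node])
  · exact hx (.record ρ j)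
  · exact hx (.locator ρ j)

lemma not_sigmaEmbeddable_cantor {X : Set (Cantor × Cube)}
    (hX : ∀ L, IsClosed L → (∀ c, Large {x | (c, x) ∈ L} (subtree [])) → (X ∩ L).Nonempty) :
    ¬ SigmaEmbeddable X Cantor := by
  intro h
  obtain ⟨A, hA, hAC⟩ := sigmaEmbeddable_iff.1 h
  have hface : ∀ (a : unitInterval) k, IsClosed {y : Cantor × Cube | y.2 (.free k) = a} :=
    fun a k => isClosed_eq (by fun_prop) continuous_const
  choose ψ h₀ h₁ hne using fun k => ZeroDim.exists_forall_ne_zero (hAC k)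
    (IsEmbedding.subtypeVal.comp IsEmbedding.subtypeVal).isInducing (hface 0 k) (hface 1 k)
    (disjoint_left.2 fun y (hy : _ = _) (hy' : _ = _) => zero_ne_one (hy.symm.trans hy'))
    ⟨(fun _ => true, fun _ => 0), rfl⟩ ⟨(fun _ => true, fun _ => 1), rfl⟩
  have hL : IsClosed {y | ∀ k, ψ k y = 0} := by
    rw [ofPred_forall]
    exact isClosed_iInter fun k => isClosed_eq (ψ k).continuous continuous_const
  obtain ⟨w, hwX, hwL⟩ := hX _ hL (large_setOf_forall_eq_zero h₀ h₁)
  obtain ⟨k, hk⟩ := mem_iUnion.1 (hA.ge (mem_univ ⟨w, hwX⟩))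
  exact hne k ⟨⟨w, hwX⟩, hk⟩ (hwL k)

lemma zeroDim_of_isEmbedding_graph {κ : Type*} [Countable κ] {t : κ → Code → unitInterval}
    (ht : ∀ q, Continuous (t q)) (hdense : ∀ a b, a < b → ∃ q, ∀ v, t q v ∈ Ioo a b)
    (hU : ∀ O, IsOpen O → ∃ r, ∀ y, (r, y) ∈ U ↔ y ∈ O) {A : Type*} [TopologicalSpace A]
    {a : A → Cantor × Cube} (ha : IsEmbedding a) (hrec : ∀ w i q v, (a w).2 i = t q v →
      ∃ ρ, ∀ n, (a w).2 (.record ρ n) = recordOf U Y v ρ n)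
    {n : ℕ} (hY : InjOn Prod.fst (Y n)) {f : A → Y n} (hf : IsEmbedding f) : ZeroDim A := by
  have := ha.t0Space
  have hf' : IsEmbedding fun w => (f w : Cantor × Cube) := IsEmbedding.subtypeVal.comp hf
  have hopen : ∀ ρ, IsOpen {w | (a w).2 (.record ρ n) ≠ 0} := fun ρ =>
    isOpen_ne_fun (by have := ha.continuous; fun_prop) continuous_const
  choose O hO hOa using fun ρ => hf'.isInducing.isOpen_iff.1 (hopen ρ)
  choose r hr using fun ρ => hU (O ρ) (hO ρ)
  have hmem : ∀ ρ w, (r ρ, (f w : Cantor × Cube)) ∈ U ↔ (a w).2 (.record ρ n) ≠ 0 := fun ρ w =>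
    (hr ρ _).trans (Set.ext_iff.1 (hOa ρ) w)
  let code : A → Code := fun w o => o.elim (f w : Cantor × Cube).1 r
  have hcode : Continuous code := continuous_pi fun
    | none => hf'.continuous.fst
    | some ρ => continuous_const
  refine zeroDim_of_forall_ne ha.isInducing (fun q => (ht q).comp hcode)
    (fun b c hbc => (hdense b c hbc).imp fun q hq w => hq _) fun w i q hwi => ?_
  obtain ⟨ρ, hρ⟩ := hrec w i q _ hwi
  have hcoded : (∃ y ∈ Y n, y.1 = (f w : Cantor × Cube).1 ∧ (r ρ, y) ∈ U) ↔
      (r ρ, (f w : Cantor × Cube)) ∈ U :=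
    ⟨fun ⟨y, hy, hyw, hyU⟩ => hY hy (f w).2 hyw ▸ hyU, fun h => ⟨_, (f w).2, rfl, h⟩⟩
  by_cases hwU : (r ρ, (f w : Cantor × Cube)) ∈ U
  · exact (hmem ρ w).1 hwU ((hρ n).trans (if_pos (hcoded.2 hwU)))
  · refine hwU ((hmem ρ w).2 ?_)
    exact ((hρ n).trans (if_neg (hwU ∘ hcoded.1))).trans_ne one_ne_zero

end Diagonalization

/-- Two spaces are almost disjoint if all their common subspaces are zero-dimensional. -/
def AlmostDisjoint (X Y : Type*) [TopologicalSpace X] [TopologicalSpace Y] : Prop :=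
  ∀ (A : Set X) (f : A → Y), IsEmbedding f → ZeroDim A

lemma AlmostDisjoint.symm {X Y : Type*} [TopologicalSpace X] [TopologicalSpace Y]
    (h : AlmostDisjoint X Y) : AlmostDisjoint Y X := fun _ _ hf =>
  (h _ _ (IsEmbedding.subtypeVal.comp hf.toHomeomorph.symm.isEmbedding)).comp_isEmbedding
    hf.toHomeomorph.isEmbedding

/-- The graph meets each closed set with large fibres over the code of its complement. -/
lemma exists_almostDisjoint {Y : ℕ → Set (Cantor × Cube)} (hY : ∀ n, IsGδ (Y n))
    (hinj : ∀ n, InjOn Prod.fst (Y n)) :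
    ∃ X : Set (Cantor × Cube), IsGδ X ∧ InjOn Prod.fst X ∧ ¬ SigmaEmbeddable X Cantor ∧
      ∀ n, AlmostDisjoint X (Y n) := by
  obtain ⟨κ, _, t, ht, hdense⟩ := zeroDim_code.exists_isClosedEmbedding
  obtain ⟨U, hUo, hU⟩ := exists_isOpen_universal (Cantor × Cube)
  have hdiag : Continuous fun y : Cantor × Cube => (y.1, y) := by fun_prop
  obtain ⟨X, hXU, hX, hXinj, hXC, hXrec⟩ := exists_graph_record ht
    (measurable_recordOf hUo hY hinj) (hUo.preimage hdiag).isClosed_compl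
  refine ⟨X, hX, hXinj, not_sigmaEmbeddable_cantor fun L hL hlarge => ?_, fun n A f hf => ?_⟩
  · obtain ⟨c, hc⟩ := hU Lᶜ hL.isOpen_compl
    have hmem : ∀ x, (c, c, x) ∉ U ↔ (c, x) ∈ L := fun x => (hc _).not.trans notMem_compl_iff
    obtain ⟨x, hx⟩ := hXC c ((hlarge c).mono (fun x => (hmem x).2) Subset.rfl)
    exact ⟨(c, x), hx, (hmem x).1 (hXU hx)⟩
  · exact zeroDim_of_isEmbedding_graph (fun q => (ht q).continuous) hdense hU
      (IsEmbedding.subtypeVal.comp IsEmbedding.subtypeVal)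
      (fun w => hXrec w (w : X).2) (hinj n) hf

lemma exists_seq_almostDisjoint : ∃ X : ℕ → Set (Cantor × Cube), (∀ n, IsGδ (X n)) ∧
    (∀ n, ¬ SigmaEmbeddable (X n) Cantor) ∧ Pairwise fun m n => AlmostDisjoint (X m) (X n) := by
  have : Std.Symm fun X Y : Set (Cantor × Cube) => AlmostDisjoint X Y := ⟨fun _ _ => .symm⟩
  let P : Set (Cantor × Cube) → Prop := fun X =>
    IsGδ X ∧ InjOn Prod.fst X ∧ ¬ SigmaEmbeddable X Cantor
  have hstep : ∀ s : Finset (Set (Cantor × Cube)), (∀ Y ∈ s, P Y) →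
      ∃ X, P X ∧ ∀ Y ∈ s, AlmostDisjoint Y X := by
    intro s hs
    obtain ⟨Y, hY⟩ := (s.countable_toSet.insert ∅).exists_eq_range (insert_nonempty _ _)
    have hYs : ∀ n, Y n = ∅ ∨ Y n ∈ s := fun n => by simpa using hY.ge (mem_range_self n)
    obtain ⟨X, hX, hXinj, hXC, hXY⟩ := exists_almostDisjoint (Y := Y)
      (fun n => (hYs n).elim (fun h => h ▸ IsGδ.empty) fun h => (hs _ h).1)
      (fun n => (hYs n).elim (fun h => h ▸ injOn_empty _) fun h => (hs _ h).2.1)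
    refine ⟨X, ⟨hX, hXinj, hXC⟩, fun Z hZ => ?_⟩
    obtain ⟨n, rfl⟩ := hY.le (mem_insert_of_mem ∅ hZ)
    exact (hXY n).symm
  obtain ⟨X, hX, hpair⟩ := exists_seq_of_forall_finset_exists' P _ hstep
  exact ⟨X, fun n => (hX n).1, fun n => (hX n).2.2, hpair⟩

/-! ### Compactifications with a σ-zero-dimensional remainder -/

lemma zeroDim_compl_of_dense {L : Type*} [LinearOrder L] [TopologicalSpace L] [OrderTopology L]
    [DenselyOrdered L] {D : Set L} (hD : Dense D) (hDc : D.Countable) : ZeroDim ↥Dᶜ := by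
  have := hDc.to_subtype
  have hind : IsInducing fun (w : ↥Dᶜ) => ((default : Cantor), fun _ : Unit => (w : L)) :=
    .of_comp (by fun_prop) (g := fun p => p.2 ()) (by fun_prop) .subtypeVal
  refine zeroDim_of_forall_ne (s := fun (q : D) _ => (q : L)) hind (fun _ => continuous_const)
    (fun a b hab => ?_) fun w _ q hwq => w.2 (hwq ▸ q.2)
  obtain ⟨q, hq, hqab⟩ := hD.exists_between hab
  exact ⟨⟨q, hq⟩, fun _ => hqab⟩

lemma sigmaEmbeddable_finite_support {ι : Type*} [Countable ι] :
    SigmaEmbeddable {x : ι → unitInterval | (Function.support x).Finite} Cantor := by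
  classical
  let D := range (TopologicalSpace.denseSeq unitInterval)
  let E : Option unitInterval → Set unitInterval := fun o => o.elim Dᶜ singleton
  have hE : ∀ o, ZeroDim (E o)
    | none => zeroDim_compl_of_dense (TopologicalSpace.denseRange_denseSeq _) (countable_range _)
    | some a => ⟨fun _ => default, .of_subsingleton (X := ({a} : Set unitInterval)) _⟩
  have hcover : ∀ a, ∃ o : Option D, a ∈ E (o.map Subtype.val) := fun a =>
    if ha : a ∈ D then ⟨some ⟨a, ha⟩, rfl⟩ else ⟨none, ha⟩
  have : Countable D := (countable_range _).to_subtype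
  let pattern : (Σ S : Finset ι, S → Option D) → ι → Option unitInterval := fun p i =>
    if h : i ∈ p.1 then (p.2 ⟨i, h⟩).map Subtype.val else some 0
  refine .of_iUnion (A := fun p => {x | ∀ i, x.1 i ∈ E (pattern p i)}) ?_ fun p => ?_
  · refine iUnion_eq_univ_iff.2 fun x => ?_
    choose o ho using fun i => hcover (x.1 i)
    refine ⟨⟨x.2.toFinset, fun i => o i⟩, fun i => ?_⟩
    by_cases hi : x.1 i = 0
    · simp [pattern, hi, E]
    · simpa [pattern, hi] using ho i
  · refine ((zeroDim_pi fun i => hE (pattern p i)).comp_isEmbedding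
      (f := fun x i => ⟨x.1.1 i, x.2 i⟩) ?_).sigmaEmbeddable
    exact .of_comp (continuous_pi fun i => .subtype_mk
        ((continuous_apply i).comp (continuous_subtype_val.comp continuous_subtype_val)) _)
      (continuous_pi fun i => continuous_subtype_val.comp (continuous_apply i))
      (IsEmbedding.subtypeVal.comp .subtypeVal)

lemma exists_continuous_eq_zero_iff {W : Type*} [TopologicalSpace W] [CompactSpace W]
    [TopologicalSpace.MetrizableSpace W] {U : Set W} (hU : IsOpen U) :
    ∃ d : W → unitInterval, Continuous d ∧ ∀ w, d w = 0 ↔ w ∉ U := by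
  let := TopologicalSpace.metrizableSpaceMetric W
  obtain ⟨f, hf, -, -, hfI⟩ := exists_continuous_one_zero_of_isCompact_of_isGδ
    hU.isClosed_compl.isCompact hU.isClosed_compl.isGδ isClosed_empty (disjoint_empty _)
  refine ⟨fun w => unitInterval.symm ⟨f w, hfI w⟩, by fun_prop, fun w => ?_⟩
  rw [unitInterval.symm_eq_zero, ← mem_compl_iff, hf]
  exact Subtype.ext_iff

lemma isEmbedding_mul {Y : Type*} [TopologicalSpace Y] {d u : Y → ℕ → unitInterval}
    (hd : Continuous d) (hu : IsEmbedding u) (hne : ∀ y n, d y n ≠ 0) :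
    IsEmbedding fun y => (d y, d y * u y) := by
  let f : Y → {p : (ℕ → unitInterval) × (ℕ → unitInterval) // ∀ n, p.1 n ≠ 0} := fun y =>
    ⟨(d y, d y * u y), hne y⟩
  let g : {p : (ℕ → unitInterval) × (ℕ → unitInterval) // ∀ n, p.1 n ≠ 0} → ℕ → ℝ := fun p n =>
    (p.1.2 n : ℝ) / p.1.1 n
  have hf : Continuous f := (hd.prodMk (hd.mul hu.continuous)).subtype_mk _
  have hg : Continuous g := continuous_pi fun n =>
    Continuous.div (by fun_prop) (by fun_prop) fun p hp => p.2 n (Subtype.ext hp)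
  have hgf : g ∘ f = (Pi.map fun _ => Subtype.val) ∘ u := by
    ext y n
    have hne' : (d y n : ℝ) ≠ 0 := fun h => hne y n (Subtype.ext h)
    simp [g, f, hne']
  exact IsEmbedding.subtypeVal.comp
    (.of_comp hf hg (hgf ▸ (IsEmbedding.piMap fun _ => .subtypeVal).comp hu))

/-- If `d n` vanishes exactly outside the `n`-th member of a decreasing sequence of open sets with
intersection `Y`, then `w ↦ (d w, d w * w)` embeds `Y` and maps each other point to a
finitely supported sequence. -/
lemma exists_continuous_isEmbedding_finite_support {Y : Set (ℕ → unitInterval)} (hY : IsGδ Y) :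
    ∃ κ : (ℕ → unitInterval) → (ℕ ⊕ ℕ → unitInterval), Continuous κ ∧
      IsEmbedding (κ ∘ Subtype.val : Y → _) ∧ ∀ w ∉ Y, (Function.support (κ w)).Finite := by
  obtain ⟨U, hU, rfl⟩ := isGδ_iff_eq_iInter_nat.1 hY
  have hV : ∀ n, IsOpen (dissipate U n) := fun n =>
    (finite_Iic n).isOpen_biInter fun k _ => hU k
  choose d hd hd₀ using fun n => exists_continuous_eq_zero_iff (hV n)
  let e := Homeomorph.sumArrowHomeomorphProdArrow (ι := ℕ) (ι' := ℕ) (X := unitInterval)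
  refine ⟨fun w => e.symm (fun n => d n w, (fun n => d n w) * w), by fun_prop, ?_, fun w hw => ?_⟩
  · refine e.symm.isEmbedding.comp (isEmbedding_mul (d := fun (w : ↥(⋂ n, U n)) n => d n w)
      (by fun_prop) .subtypeVal fun w n => (hd₀ n w).not_left.2 ?_)
    exact iInter_subset_dissipate n w.2
  · obtain ⟨j, hj⟩ := not_forall.1 fun h => hw (mem_iInter.2 h)
    have hzero : ∀ n, j ≤ n → d n w = 0 := fun n hn =>
      (hd₀ n w).2 fun h => hj (dissipate_subset hn h)
    have hfin : (Function.support fun n => d n w).Finite :=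
      (finite_Iio j).subset fun n hn => not_le.1 fun h => hn (hzero n h)
    have hsupp : ∀ k, e.symm (fun n => d n w, (fun n => d n w) * w) k ≠ 0 →
        k ∈ Sum.inl '' (Function.support fun n => d n w) ∪
          Sum.inr '' (Function.support fun n => d n w) := by
      rintro (n | n) hn
      · exact .inl ⟨n, hn, rfl⟩
      · exact .inr ⟨n, left_ne_zero_of_mul hn, rfl⟩
    exact ((hfin.image _).union (hfin.image _)).subset hsupp

theorem exists_isCompact_isEmbedding_compl (Y : Type*) [TopologicalSpace Y] [PolishSpace Y] :
    ∃ (K : Set (ℕ → unitInterval)) (f : Y → K), IsCompact K ∧ IsEmbedding f ∧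
      SigmaEmbeddable ↥(range f)ᶜ Cantor := by
  let := TopologicalSpace.upgradeIsCompletelyMetrizable Y
  obtain ⟨u, hu⟩ := Metric.PiNatEmbed.exists_embedding_to_hilbert_cube (X := Y)
  obtain ⟨κ, hκ, hκY, hfin⟩ :=
    exists_continuous_isEmbedding_finite_support (isGδ_range_of_isEmbedding hu)
  let h : (ℕ ⊕ ℕ → unitInterval) ≃ₜ (ℕ → unitInterval) :=
    Homeomorph.piCongrLeft (Y := fun _ => unitInterval) Equiv.natSumNatEquivNat
  let f : Y → range (h ∘ κ) := fun y => ⟨h (κ (u y)), u y, rfl⟩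
  have hf : IsEmbedding f := .of_comp (g := Subtype.val) (by fun_prop) (by fun_prop)
    (h.isEmbedding.comp (hκY.comp hu.toHomeomorph.isEmbedding))
  have hrem : ∀ k : ↥(range f)ᶜ, (Function.support (h.symm k)).Finite := by
    rintro ⟨⟨_, w, rfl⟩, hw⟩
    simpa using hfin w fun ⟨y, hy⟩ => hw ⟨y, by simp [f, hy]⟩
  refine ⟨range (h ∘ κ), f, isCompact_range (by fun_prop), hf,
    sigmaEmbeddable_finite_support.comp_isEmbedding (f := fun k => ⟨h.symm k, hrem k⟩) ?_⟩
  exact .of_comp (by fun_prop) (g := Subtype.val) (by fun_prop)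
    (h.symm.isEmbedding.comp (IsEmbedding.subtypeVal.comp .subtypeVal))

lemma sigmaEmbeddable_cantor_of_almostDisjoint {X K : Type*} [TopologicalSpace X]
    [TopologicalSpace K] {Y : ℕ → Type*} [∀ n, TopologicalSpace (Y n)] {f : (Σ n, Y n) → K}
    (hf : IsEmbedding f) (hrem : SigmaEmbeddable ↥(range f)ᶜ Cantor)
    (had : ∀ n, AlmostDisjoint X (Y n)) (hX : SigmaEmbeddable X K) : SigmaEmbeddable X Cantor := by
  have hemb : ∀ n, IsEmbedding fun y : Y n => f ⟨n, y⟩ := fun n => hf.comp .sigmaMk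
  refine hX.of_forall_isEmbedding
    (B := fun o : Option ℕ => o.elim (range f)ᶜ fun n => range fun y : Y n => f ⟨n, y⟩) ?_ ?_
  · rw [iUnion_option]
    change (range f)ᶜ ∪ ⋃ n, (range fun y => f ⟨n, y⟩) = univ
    rw [← range_sigma_eq_iUnion_range, compl_union_self]
  · rintro (_ | n) A g hg
    · exact hrem.comp_isEmbedding hg
    · exact (had n A _ ((hemb n).toHomeomorph.symm.isEmbedding.comp hg)).sigmaEmbeddable

end SigmaAntichain

/-- There is an antichain of size continuum in the σ-embeddability ordering of
compact subsets of the Hilbert cube. -/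
theorem stmt4 :
    ∃ (I : Type) (K : I → Set (ℕ → unitInterval)),
      Cardinal.mk I = Cardinal.continuum ∧
      (∀ α, IsCompact (K α)) ∧
      (∀ α β, α ≠ β → ¬ SigmaEmbeddable ↥(K α) ↥(K β)) := by
  obtain ⟨X, hX, hXC, had⟩ := SigmaAntichain.exists_seq_almostDisjoint
  let code (α : ℕ → Bool) (n : ℕ) : ℕ := Encodable.encode (n, α n)
  have : ∀ n, PolishSpace (X n) := fun n => SigmaAntichain.polishSpace_of_isGδ (hX n)
  choose K f hK hf hrem using fun α =>
    SigmaAntichain.exists_isCompact_isEmbedding_compl (Σ n, X (code α n))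
  refine ⟨ℕ → Bool, K, by simp, hK, fun α β hαβ hσ => ?_⟩
  obtain ⟨m, hm⟩ := Function.ne_iff.1 hαβ
  have hcode : ∀ n, code α m ≠ code β n := fun n h => by
    obtain ⟨rfl, hmn⟩ := Prod.ext_iff.1 (Encodable.encode_injective h)
    exact hm hmn
  have hXβ : SigmaEmbeddable (X (code α m)) (K β) :=
    hσ.comp_isEmbedding ((hf α).comp (f := Sigma.mk m) .sigmaMk)
  exact hXC _ (SigmaAntichain.sigmaEmbeddable_cantor_of_almostDisjoint (hf β) (hrem β)
    (fun n => had (hcode n)) hXβ)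
end

section
/- Let n ∈ ℕ and let X be a second-countable T1 topological space. Then ℝ_<^{n+1} is not σ-embeddable into the product space X × ℝ_<^{n}. -/
/-!
A topological embedding preserves and reflects the specialization preorder. In `ℝ_<^k` this is the
reversed product order, and in a T1 space it is equality. Hence if `D ⊆ ℝ_<^{n+1}` embeds into
`X × ℝ_<^n` by `x ↦ (g x, h x)`, then `x ≤ y` in `D` iff `g x = g y` and `h x ≤ h y`.

By the Baire category theorem for the Euclidean topology, one piece `D` of a countable cover is
dense in a Euclidean open box. Inside that box `D` contains points `a i`, `b i` (`i < n + 1`) with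
`a i ≤ b j ↔ i ≠ j`, the standard example of a poset of order dimension `n + 1`, together with
a common upper bound. The upper bound makes `g` take the same value at all of these points, so
`h` realizes the standard example in `ℝ^n`, which the pigeonhole principle excludes.
-/

open Set

/-- The lower topology on `ℝ`, generated by the open rays `(p, ∞)`. -/
def lowerTopology : TopologicalSpace ℝ :=
  .generateFrom { s : Set ℝ | ∃ p : ℝ, s = Set.Ioi p }

/-- The real line equipped with the lower topology. -/
def RLower : Type := ℝ

instance : TopologicalSpace RLower := lowerTopology

section StandardExample

/-- The standard example of dimension theory of posets: families `a`, `b` indexed by `ι` with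
`a i ≤ b j` exactly when `i ≠ j`. Nothing is required of the order among the `a i` or among the
`b i`, since only the comparisons of an `a i` with a `b j` force the order dimension up. -/
def IsStandardExample {ι P : Type*} [LE P] (a b : ι → P) : Prop :=
  ∀ i j, a i ≤ b j ↔ i ≠ j

variable {ι κ : Type*}

theorem IsStandardExample.nonempty_embedding {R : κ → Type*} [∀ k, LinearOrder (R k)]
    {a b : ι → ∀ k, R k} (h : IsStandardExample a b) : Nonempty (ι ↪ κ) := by
  have exists_lt (i : ι) : ∃ k, b i k < a i k := by
    simpa only [Pi.le_def, not_forall, not_le] using mt (h i i).1 (not_not_intro rfl)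
  choose k hk using exists_lt
  refine ⟨k, fun i j hij => by_contra fun hne => ?_⟩
  have cycle : a i (k i) < a i (k i) :=
    calc a i (k i) ≤ b j (k i) := (h i j).2 hne (k i)
      _ < a j (k i) := hij ▸ hk j
      _ ≤ b i (k i) := (h j i).2 (Ne.symm hne) (k i)
      _ < a i (k i) := hk i
  exact cycle.false

theorem IsStandardExample.snd_comp {X P Q : Type*} [LE P] [LE Q] {f : P → X × Q}
    (hf : ∀ p q, p ≤ q ↔ (f p).1 = (f q).1 ∧ (f p).2 ≤ (f q).2) {a b : ι → P} {c : P}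
    (h : IsStandardExample a b) (hac : ∀ i, a i ≤ c) (hbc : ∀ i, b i ≤ c) :
    IsStandardExample (fun i => (f (a i)).2) (fun i => (f (b i)).2) := by
  intro i j
  have fst_eq : (f (a i)).1 = (f (b j)).1 :=
    ((hf _ _).1 (hac i)).1.trans ((hf _ _).1 (hbc j)).1.symm
  rw [← h i j, hf, and_iff_right fst_eq]

theorem exists_isStandardExample_of_forall_apply_lt {R : Type*} [Preorder R] {D : Set (ι → R)}
    {g : (ι → ℕ) → D} (hg : ∀ s t k, s k < t k → (g s : ι → R) k < (g t : ι → R) k) :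
    ∃ (a b : ι → D) (c : D), IsStandardExample a b ∧ (∀ i, a i ≤ c) ∧ ∀ i, b i ≤ c := by
  classical
  have le_of_levels_lt {s t : ι → ℕ} (hst : ∀ k, s k < t k) : g s ≤ g t :=
    fun k => (hg s t k (hst k)).le
  -- For `i ≠ j` the levels of `a i` and `b j` are 2 < 3 at `i`, 0 < 1 at `j` and 0 < 3 elsewhere.
  refine ⟨fun i => g (Function.update 0 i 2), fun i => g (Function.update 3 i 1), g 4,
    fun i j => ⟨?_, fun hij => le_of_levels_lt fun k => ?_⟩,
    fun i => le_of_levels_lt fun k => ?_, fun i => le_of_levels_lt fun k => ?_⟩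
  · rintro hle rfl
    exact (hle i).not_gt (hg _ _ i (by simp))
  all_goals
    simp only [Function.update_apply, Pi.ofNat_apply]
    grind

end StandardExample

theorem exists_strictMono_mem_Ioo {R : Type*} [Preorder R] [DenselyOrdered R] {l u : R}
    (hlu : l < u) : ∃ p : ℕ → R, StrictMono p ∧ ∀ m, p m ∈ Ioo l u := by
  have := Set.nonempty_Ioo_subtype hlu
  obtain ⟨p, hp⟩ := Nat.exists_strictMono (Ioo l u)
  exact ⟨fun m => p m, hp, fun m => (p m).2⟩

section SomewhereDense

variable {ι R : Type*} [LinearOrder R] [TopologicalSpace R] [OrderTopology R]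

theorem exists_pi_Ioo_subset_of_isOpen [Finite ι] [Nontrivial R] {U : Set (ι → R)} (hU : IsOpen U)
    (hne : U.Nonempty) :
    ∃ l u : ι → R, (∀ k, l k < u k) ∧ univ.pi (fun k => Ioo (l k) (u k)) ⊆ U := by
  obtain ⟨x, hx⟩ := hne
  obtain ⟨V, hV, hVU⟩ := isOpen_pi_iff'.1 hU x hx
  choose l u hlu hsub using fun k => (hV k).1.exists_Ioo_subset ⟨x k, (hV k).2⟩
  exact ⟨l, u, hlu, (pi_mono fun k _ => hsub k).trans hVU⟩

variable [DenselyOrdered R]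

theorem exists_mem_pi_Ioo_of_subset_closure [Finite ι] {D : Set (ι → R)} {l u : ι → R}
    (hlu : ∀ k, l k < u k) (hD : univ.pi (fun k => Ioo (l k) (u k)) ⊆ closure D) :
    ∃ x ∈ D, ∀ k, x k ∈ Ioo (l k) (u k) := by
  choose y hy using fun k => exists_between (hlu k)
  obtain ⟨x, hxbox, hxD⟩ := mem_closure_iff.1 (hD fun k _ => hy k) _
    (isOpen_set_pi finite_univ fun _ _ => isOpen_Ioo) fun k _ => hy k
  exact ⟨x, hxD, fun k => hxbox k (mem_univ k)⟩

theorem exists_forall_apply_lt_of_nonempty_interior_closure [Finite ι] [Nontrivial R]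
    {D : Set (ι → R)} (hD : (interior (closure D)).Nonempty) :
    ∃ g : (ι → ℕ) → D, ∀ s t k, s k < t k → (g s : ι → R) k < (g t : ι → R) k := by
  obtain ⟨l, u, hlu, hbox⟩ := exists_pi_Ioo_subset_of_isOpen isOpen_interior hD
  choose p hp hpIoo using fun k => exists_strictMono_mem_Ioo (hlu k)
  have exists_mem_cell (t : ι → ℕ) :
      ∃ x ∈ D, ∀ k, x k ∈ Ioo (p k (t k)) (p k (t k + 1)) := by
    refine exists_mem_pi_Ioo_of_subset_closure (fun k => hp k (Nat.lt_succ_self _)) ?_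
    calc univ.pi (fun k => Ioo (p k (t k)) (p k (t k + 1)))
        ⊆ univ.pi (fun k => Ioo (l k) (u k)) :=
          pi_mono fun k _ => Ioo_subset_Ioo (hpIoo k _).1.le (hpIoo k _).2.le
      _ ⊆ closure D := hbox.trans interior_subset
  choose g hgD hg using exists_mem_cell
  refine ⟨fun t => ⟨g t, hgD t⟩, fun s t k hst => ?_⟩
  calc g s k < p k (s k + 1) := (hg s k).2
    _ ≤ p k (t k) := (hp k).monotone hst
    _ < g t k := (hg t k).1

end SomewhereDense

theorem exists_nonempty_interior_closure_of_iUnion_eq_univ {ι Y : Type*} [Countable ι]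
    [TopologicalSpace Y] [BaireSpace Y] [Nonempty Y] {A : ι → Set Y} (hA : ⋃ m, A m = univ) :
    ∃ m, (interior (closure (A m))).Nonempty :=
  nonempty_interior_of_iUnion_of_closed (fun _ => isClosed_closure)
    (eq_univ_of_subset (iUnion_mono fun _ => subset_closure) hA)

theorem exists_isStandardExample_of_iUnion_eq_univ {ι J : Type*} [Finite ι] [Countable J]
    {A : J → Set (ι → ℝ)} (hA : ⋃ m, A m = univ) :
    ∃ (m : J) (a b : ι → A m) (c : A m),
      IsStandardExample a b ∧ (∀ i, a i ≤ c) ∧ ∀ i, b i ≤ c := by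
  obtain ⟨m, hm⟩ := exists_nonempty_interior_closure_of_iUnion_eq_univ hA
  obtain ⟨g, hg⟩ := exists_forall_apply_lt_of_nonempty_interior_closure hm
  exact ⟨m, exists_isStandardExample_of_forall_apply_lt hg⟩

section Specialization

open Topology

theorem pi_specializes_iff_ge {κ : Type*} {R : κ → Type*} [∀ k, Preorder (R k)]
    [∀ k, TopologicalSpace (R k)] [∀ k, IsUpper (R k)] {x y : ∀ k, R k} : x ⤳ y ↔ y ≤ x := by
  rw [specializes_pi]
  simp only [specializes_iff_mem_closure, IsUpper.closure_singleton, mem_Iic, Pi.le_def]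

theorem le_iff_of_isInducing {ι κ X R : Type*} [Preorder R] [TopologicalSpace R] [IsUpper R]
    [TopologicalSpace X] [T1Space X] {D : Set (ι → R)} {f : D → X × (κ → R)} (hf : IsInducing f)
    (p q : D) : p ≤ q ↔ (f p).1 = (f q).1 ∧ (f p).2 ≤ (f q).2 :=
  calc p ≤ q ↔ q ⤳ p := by
        rw [subtype_specializes_iff, pi_specializes_iff_ge, Subtype.coe_le_coe]
    _ ↔ f q ⤳ f p := hf.specializes_iff.symm
    _ ↔ (f p).1 = (f q).1 ∧ (f p).2 ≤ (f q).2 := by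
        rw [← Prod.mk.eta (p := f q), ← Prod.mk.eta (p := f p), specializes_prod,
          specializes_iff_eq, pi_specializes_iff_ge, eq_comm]

end Specialization

namespace RLower

noncomputable instance : LinearOrder RLower := inferInstanceAs (LinearOrder ℝ)

instance : Topology.IsUpper RLower where
  topology_eq_upperTopology := by
    change lowerTopology = Topology.upper ℝ
    simp only [lowerTopology, Topology.upper, compl_Iic, eq_comm]

end RLower

theorem stmt6_general {ι κ X : Type*} [Finite ι] [TopologicalSpace X] [T1Space X]
    (h : SigmaEmbeddable (ι → RLower) (X × (κ → RLower))) : Nonempty (ι ↪ κ) := by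
  obtain ⟨A, hA, hemb⟩ := h
  -- `RLower` is ordered as `ℝ`, and the lemma is about the order alone: only its proof uses the
  -- Euclidean topology.
  obtain ⟨m, a, b, c, hab, hac, hbc⟩ : ∃ (m : ℕ) (a b : ι → A m) (c : A m),
      IsStandardExample a b ∧ (∀ i, a i ≤ c) ∧ ∀ i, b i ≤ c :=
    exists_isStandardExample_of_iUnion_eq_univ (ι := ι) hA
  obtain ⟨B, ⟨e⟩⟩ := hemb m
  have he : Topology.IsInducing fun p => (e p : X × (κ → RLower)) :=
    Topology.IsInducing.subtypeVal.comp e.isInducing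
  exact (hab.snd_comp (le_iff_of_isInducing he) hac hbc).nonempty_embedding

/-- `ℝ_<^{n+1}` is not σ-embeddable into `X × ℝ_<^n` for a second-countable T1 space `X`. -/
theorem stmt6 (n : ℕ) (X : Type*) [TopologicalSpace X]
    [SecondCountableTopology X] [T1Space X] :
    ¬ SigmaEmbeddable (Fin (n + 1) → RLower) (X × (Fin n → RLower)) := by
  intro h
  obtain ⟨e⟩ := stmt6_general h
  simpa using Fintype.card_le_of_embedding e
end

section
/- Let n ∈ ℕ and let X be an uncountable second-countable T1 topological space. Then X × ℝ_<^{n} (product topology) is not σ-embeddable into ℝ_<^{n+1}. Combined with the previous direction, for such X the spaces ℝ_<^{n+1} and X × ℝ_<^{n} are σ-incomparable. -/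
/-!
Only the specialization order matters: a homeomorphism preserves and reflects it, on `ℝ_<^k` it is
the coordinatewise order of `ℝ^k` (up to reversal), and on an R0 space it is inseparability (on a T1
space, equality), so that `X` acts as an antichain.

If `ℝ^m` is covered by countably many sets, then by the Baire category theorem one of them is dense
in some box, and so contains the standard example of an `m`-dimensional poset: points `a i`, `b j`
with `a i ≤ b j` exactly when `i ≠ j`, here with a common lower bound `p` and an upper bound `q` of
the `a i`. In a product of chains, choosing for each `i` a coordinate `c i` witnessing
`¬ a i ≤ b i` gives an injection `c`, and `p < q` holds strictly in each coordinate `c i`.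

Under an embedding of a piece of `ℝ^(n+1)` into `X × ℝ^n`, everything above the image of `p` lies
in one fibre `{x} × ℝ^n`, and `c` would be an injection from `n + 1` to `n` coordinates.

For a σ-embedding of `X × ℝ^n` into `ℝ^(n+1)`, each fibre `{x} × ℝ^n` has such a configuration in
one of the pieces, and the images `P x ≤ Q x` of its bounds are separated by rationals in `n` of the
`n + 1` coordinates. As the antichain is uncountable, distinct `x` and `y` in it share the piece,
the coordinates and the rationals. Then `P x ≤ Q y` or `P y ≤ Q x`, since only one coordinate is
left to compare; but points in different fibres are incomparable.
-/

open Set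

/-- A *crown* in a preorder: elements `a i`, `b j` with `a i ≤ b j` exactly when `i ≠ j` (the
standard example of a poset of large dimension), together with a lower bound `p` of all of them and
an upper bound `q` of the `a i`. The relation `p ≤ q` is a field to cover the empty index type. -/
structure IsCrown {ι α : Type*} [Preorder α] (p q : α) (a b : ι → α) : Prop where
  p_le_q : p ≤ q
  p_le_a : ∀ i, p ≤ a i
  p_le_b : ∀ i, p ≤ b i
  a_le_q : ∀ i, a i ≤ q
  a_le_b : ∀ i j, i ≠ j → a i ≤ b j
  not_a_le_b : ∀ i, ¬ a i ≤ b i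

namespace IsCrown

variable {ι κ α β : Type*}

theorem map [Preorder α] [Preorder β] {p q : α} {a b : ι → α} (h : IsCrown p q a b) (f : α ↪o β) :
    IsCrown (f p) (f q) (f ∘ a) (f ∘ b) where
  p_le_q := f.monotone h.p_le_q
  p_le_a i := f.monotone (h.p_le_a i)
  p_le_b i := f.monotone (h.p_le_b i)
  a_le_q i := f.monotone (h.a_le_q i)
  a_le_b i j hij := f.monotone (h.a_le_b i j hij)
  not_a_le_b i := fun hi => h.not_a_le_b i (f.le_iff_le.1 hi)

theorem snd [Preorder α] [Std.Symm (α := α) (· ≤ ·)] [Preorder β] {p q : α × β} {a b : ι → α × β}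
    (h : IsCrown p q a b) : IsCrown p.2 q.2 (fun i => (a i).2) (fun i => (b i).2) where
  p_le_q := h.p_le_q.2
  p_le_a i := (h.p_le_a i).2
  p_le_b i := (h.p_le_b i).2
  a_le_q i := (h.a_le_q i).2
  a_le_b i j hij := (h.a_le_b i j hij).2
  not_a_le_b i hi := by
    have a_le_p_fst : (a i).1 ≤ p.1 := symm (h.p_le_a i).1
    exact h.not_a_le_b i ⟨a_le_p_fst.trans (h.p_le_b i).1, hi⟩

theorem exists_embedding_lt [LinearOrder β] {p q : κ → β} {a b : ι → κ → β}
    (h : IsCrown p q a b) : ∃ c : ι ↪ κ, ∀ i, p (c i) < q (c i) := by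
  have exists_lt : ∀ i, ∃ c, b i c < a i c := fun i => by
    simpa only [Pi.le_def, not_forall, not_le] using h.not_a_le_b i
  choose c hc using exists_lt
  have c_injective : Function.Injective c := by
    intro i j hij
    by_contra hne
    refine lt_irrefl (a i (c i)) ?_
    calc a i (c i) ≤ b j (c i) := h.a_le_b i j hne (c i)
      _ = b j (c j) := by rw [hij]
      _ < a j (c j) := hc j
      _ ≤ b i (c j) := h.a_le_b j i (Ne.symm hne) (c j)
      _ = b i (c i) := by rw [hij]
      _ < a i (c i) := hc i
  exact ⟨⟨c, c_injective⟩, fun i =>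
    ((h.p_le_b i (c i)).trans_lt (hc i)).trans_le (h.a_le_q i (c i))⟩

end IsCrown

section Baire

variable {ι σ : Type*} [Finite ι] [Countable σ] {A : σ → Set (ι → ℝ)}

theorem exists_box_subset_closure_of_iUnion_eq_univ (hA : ⋃ k, A k = univ) :
    ∃ k, ∃ l u : ι → ℝ, (∀ i, l i < u i) ∧ univ.pi (fun i => Ioo (l i) (u i)) ⊆ closure (A k) := by
  have := Fintype.ofFinite ι
  obtain ⟨k, z, hz⟩ := nonempty_interior_of_iUnion_of_closed (fun k => isClosed_closure (s := A k))
    (eq_univ_of_subset (iUnion_mono fun k => subset_closure) hA)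
  obtain ⟨ε, hε, hball⟩ := Metric.mem_nhds_iff.1 (mem_interior_iff_mem_nhds.1 hz)
  refine ⟨k, fun i => z i - ε, fun i => z i + ε, fun i => by linarith, ?_⟩
  simpa only [ball_pi z hε, Real.ball_eq_Ioo] using hball

theorem exists_grid_of_iUnion_eq_univ (hA : ⋃ k, A k = univ) :
    ∃ k, ∃ f : (ι → ℕ) → A k, ∀ v w i, v i < w i → (f v).1 i < (f w).1 i := by
  obtain ⟨k, l, u, hlu, hbox⟩ := exists_box_subset_closure_of_iUnion_eq_univ hA
  choose s s_strictMono s_mem _ using fun i => exists_seq_strictMono_tendsto' (hlu i)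
  let cell (v : ι → ℕ) : Set (ι → ℝ) := univ.pi fun i => Ioo (s i (v i)) (s i (v i + 1))
  have cell_inter_nonempty (v : ι → ℕ) : (cell v ∩ A k).Nonempty := by
    obtain ⟨y, hy⟩ : (cell v).Nonempty :=
      univ_pi_nonempty_iff.2 fun i => nonempty_Ioo.2 (s_strictMono i (Nat.lt_succ_self _))
    have cell_subset : cell v ⊆ univ.pi fun i => Ioo (l i) (u i) :=
      pi_mono fun i _ => Ioo_subset_Ioo (s_mem i _).1.le (s_mem i _).2.le
    exact mem_closure_iff.1 (hbox (cell_subset hy)) (cell v)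
      (isOpen_set_pi finite_univ fun _ _ => isOpen_Ioo) hy
  choose f f_mem_cell f_mem using cell_inter_nonempty
  refine ⟨k, fun v => ⟨f v, f_mem v⟩, fun v w i hvw => ?_⟩
  calc f v i < s i (v i + 1) := (f_mem_cell v i (mem_univ i)).2
    _ ≤ s i (w i) := (s_strictMono i).monotone hvw
    _ < f w i := (f_mem_cell w i (mem_univ i)).1

theorem exists_isCrown_of_iUnion_eq_univ (hA : ⋃ k, A k = univ) :
    ∃ k, ∃ (p q : A k) (a b : ι → A k), IsCrown p q a b := by
  classical
  obtain ⟨k, f, hf⟩ := exists_grid_of_iUnion_eq_univ hA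
  have f_le {v w : ι → ℕ} (h : ∀ i, v i < w i) : f v ≤ f w := fun i => (hf v w i (h i)).le
  -- Equal grid coordinates say nothing about `f`, so any two coordinates compared must differ.
  refine ⟨k, f fun _ => 0, f fun _ => 4, fun i => f fun j => if j = i then 3 else 1,
    fun i => f fun j => if j = i then 2 else 4, ?_⟩
  exact
    { p_le_q := f_le fun _ => by decide
      p_le_a := fun i => f_le fun j => by split_ifs <;> decide
      p_le_b := fun i => f_le fun j => by split_ifs <;> decide
      a_le_q := fun i => f_le fun j => by split_ifs <;> decide
      a_le_b := fun i i' hne => f_le fun j => by grind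
      not_a_le_b := fun i hle => (hf _ _ i (by simp)).not_ge (hle i) }

end Baire

/-- `P ≤ Q`, with the value `r i` strictly in between in each coordinate `c i`. When the `r i` are
rational, there are only countably many possible witnesses `(c, r)`. -/
structure IsSeparatedBy {ι κ β : Type*} [Preorder β] (c : ι ↪ κ) (r : ι → β) (P Q : κ → β) :
    Prop where
  le : P ≤ Q
  lt_left : ∀ i, P (c i) < r i
  lt_right : ∀ i, r i < Q (c i)

theorem subsingleton_compl_range_of_card_le {ι κ : Type*} [Fintype ι] [Fintype κ] (c : ι ↪ κ)
    (h : Fintype.card κ ≤ Fintype.card ι + 1) : (range c)ᶜ.Subsingleton := by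
  classical
  have card_le_one : (Finset.univ.map c)ᶜ.card ≤ 1 := by
    rw [Finset.card_compl, Finset.card_map, Finset.card_univ]
    lia
  have coe_eq : ((Finset.univ.map c)ᶜ : Finset κ) = (range c)ᶜ := by
    simp
  rw [← coe_eq]
  exact Finset.card_le_one_iff_subsingleton.1 card_le_one

theorem IsSeparatedBy.le_or_le {ι κ β : Type*} [LinearOrder β] {c : ι ↪ κ} {r : ι → β}
    {P Q P' Q' : κ → β} (hc : (range c)ᶜ.Subsingleton) (h : IsSeparatedBy c r P Q)
    (h' : IsSeparatedBy c r P' Q') : P ≤ Q' ∨ P' ≤ Q := by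
  by_contra! hcon
  obtain ⟨hPQ', hP'Q⟩ := hcon
  simp only [Pi.le_def, not_forall, not_le] at hPQ' hP'Q
  obtain ⟨d, hd⟩ := hPQ'
  obtain ⟨e, he⟩ := hP'Q
  have d_notMem : d ∉ range c := by
    rintro ⟨i, rfl⟩
    exact hd.not_gt ((h.lt_left i).trans (h'.lt_right i))
  have e_notMem : e ∉ range c := by
    rintro ⟨i, rfl⟩
    exact he.not_gt ((h'.lt_left i).trans (h.lt_right i))
  obtain rfl : d = e := hc d_notMem e_notMem
  refine lt_irrefl (P d) ?_
  calc P d ≤ Q d := h.le d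
    _ < P' d := he
    _ ≤ Q' d := h'.le d
    _ < P d := hd

/-- `α` is σ-order-embeddable into `β`: `α` is a countable union of subsets each of which, with the
induced order, is isomorphic to a subset of `β`. This is what a σ-embedding of topological spaces
induces on their specialization orders. -/
def SigmaOrderEmbeddable (α β : Type*) [LE α] [LE β] : Prop :=
  ∃ A : ℕ → Set α, ⋃ k, A k = univ ∧ ∀ k, Nonempty (A k ↪o β)

section OrderTheory

variable {α ι κ : Type*} [Preorder α]

theorem not_sigmaOrderEmbeddable_pi_prod [Std.Symm (α := α) (· ≤ ·)] [Fintype ι] [Fintype κ]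
    (h : Fintype.card κ < Fintype.card ι) : ¬ SigmaOrderEmbeddable (ι → ℝ) (α × (κ → ℝ)) := by
  rintro ⟨A, hA, f⟩
  obtain ⟨k, p, q, a, b, crown⟩ := exists_isCrown_of_iUnion_eq_univ hA
  obtain ⟨c, -⟩ := (crown.map (f k).some).snd.exists_embedding_lt
  exact h.not_ge (Fintype.card_le_of_embedding c)

/-- The fibre of `A` over `x`, embedded in `A`; it transports crowns of the fibre to `A`. -/
def fibreEmbedding {β : Type*} [Preorder β] (A : Set (α × β)) (x : α) :
    {u : β | (x, u) ∈ A} ↪o A where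
  toFun u := ⟨(x, u.1), u.2⟩
  inj' _ _ h := Subtype.ext (congrArg (fun w : A => w.1.2) h)
  map_rel_iff' := ⟨And.right, fun h => ⟨le_rfl, h⟩⟩

theorem exists_isSeparatedBy_of_iUnion_eq_univ {σ : Type*} [Finite ι] [Countable σ]
    {A : σ → Set (α × (ι → ℝ))} (hA : ⋃ k, A k = univ) (f : ∀ k, A k ↪o (κ → ℝ)) (x : α) :
    ∃ (t : σ × (ι ↪ κ) × (ι → ℚ)) (P Q : A t.1), P.1.1 = x ∧ Q.1.1 = x ∧
      IsSeparatedBy t.2.1 (fun i => (t.2.2 i : ℝ)) (f t.1 P) (f t.1 Q) := by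
  have fibres_cover : ⋃ k, {u : ι → ℝ | (x, u) ∈ A k} = univ := by
    rw [← preimage_univ (f := Prod.mk x), ← hA, preimage_iUnion]
    rfl
  obtain ⟨k, p, q, a, b, crown⟩ := exists_isCrown_of_iUnion_eq_univ fibres_cover
  have image_crown := (crown.map (fibreEmbedding (A k) x)).map (f k)
  obtain ⟨c, hc⟩ := image_crown.exists_embedding_lt
  choose r lt_r r_lt using fun i => exists_rat_btwn (hc i)
  exact ⟨(k, c, r), fibreEmbedding (A k) x p, fibreEmbedding (A k) x q, rfl, rfl,
    image_crown.p_le_q, lt_r, r_lt⟩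

theorem not_sigmaOrderEmbeddable_prod_pi [Fintype ι] [Fintype κ] {s : Set α}
    (hs : IsAntichain (· ≤ ·) s) (s_uncountable : ¬ s.Countable)
    (h : Fintype.card κ ≤ Fintype.card ι + 1) :
    ¬ SigmaOrderEmbeddable (α × (ι → ℝ)) (κ → ℝ) := by
  rintro ⟨A, hA, hf⟩
  let f k := (hf k).some
  choose t ht using exists_isSeparatedBy_of_iUnion_eq_univ hA f
  have t_not_injOn : ¬ InjOn t s := fun t_injOn =>
    s_uncountable (countable_of_injective_of_countable_image t_injOn (to_countable _))
  obtain ⟨x, hx, y, hy, txy, hne⟩ : ∃ x ∈ s, ∃ y ∈ s, t x = t y ∧ x ≠ y := by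
    simpa only [InjOn, not_forall, exists_prop] using t_not_injOn
  obtain ⟨P, Q, hP, hQ, sep⟩ := ht x
  obtain ⟨P', Q', hP', hQ', sep'⟩ := txy ▸ ht y
  rcases sep.le_or_le (subsingleton_compl_range_of_card_le _ h) sep' with hle | hle
  · have fst_le : P.1.1 ≤ Q'.1.1 := ((f _).le_iff_le.1 hle).1
    rw [hP, hQ'] at fst_le
    exact hs hx hy hne fst_le
  · have fst_le : P'.1.1 ≤ Q.1.1 := ((f _).le_iff_le.1 hle).1
    rw [hP', hQ] at fst_le
    exact hs hy hx hne.symm fst_le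

end OrderTheory

section SpecializationOrder

variable {X Y α β : Type*} [TopologicalSpace X] [TopologicalSpace Y]

theorem SigmaEmbeddable.sigmaOrderEmbeddable [LE α] [LE β] (h : SigmaEmbeddable X Y)
    (eX : Specialization X ≃o α) (eY : Specialization Y ≃o β) : SigmaOrderEmbeddable α β := by
  obtain ⟨A, hA, hB⟩ := h
  choose B hB using hB
  let toX : α ≃ X := eX.symm.toEquiv.trans Specialization.ofEquiv
  let g k (a : toX ⁻¹' A k) : B k := (hB k).some ⟨toX a, a.2⟩
  have g_injective k : Function.Injective (g k) := fun a b hab =>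
    Subtype.ext (toX.injective (congrArg Subtype.val ((hB k).some.injective hab)))
  have g_specializes_iff {k} (a b : toX ⁻¹' A k) : (g k a : Y) ⤳ g k b ↔ toX a ⤳ toX b := by
    rw [← subtype_specializes_iff, (hB k).some.isInducing.specializes_iff, subtype_specializes_iff]
  refine ⟨fun k => toX ⁻¹' A k, by rw [← preimage_iUnion, hA, preimage_univ], fun k => ⟨?_⟩⟩
  exact
    { toFun := fun a => eY (Specialization.toEquiv (g k a))
      inj' := eY.injective.comp <|
        Specialization.toEquiv.injective.comp <| Subtype.val_injective.comp (g_injective k)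
      map_rel_iff' := fun {a b} =>
        eY.le_iff_le.trans <| (g_specializes_iff b a).trans <| eX.symm.le_iff_le }

/-- The specialization order of a product, with that of the second factor represented by `β`. -/
def specializationProd [LE β] (e : Specialization Y ≃o β) :
    Specialization (X × Y) ≃o Specialization X × β where
  toEquiv := Specialization.ofEquiv.trans <|
    Specialization.toEquiv.prodCongr (Specialization.toEquiv.trans e.toEquiv)
  map_rel_iff' := (and_congr_right' e.le_iff_le).trans specializes_prod.symm

theorem isUpper_lowerTopology : @Topology.IsUpper ℝ lowerTopology _ := by
  refine @Topology.IsUpper.mk ℝ lowerTopology _ ?_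
  simp only [lowerTopology, Topology.upper, compl_Iic, eq_comm]

theorem specializes_lowerTopology_iff {x y : ℝ} : @Specializes ℝ lowerTopology x y ↔ y ≤ x := by
  let := lowerTopology
  have := isUpper_lowerTopology
  rw [specializes_iff_mem_closure, Topology.IsUpper.closure_singleton, mem_Iic]

/-- The specialization order of a power of `ℝ_<` is the coordinatewise order on real tuples. -/
def specializationPiRLower (ι : Type*) : Specialization (ι → RLower) ≃o (ι → ℝ) where
  toEquiv := Specialization.ofEquiv
  map_rel_iff' :=
    (specializes_pi.trans (forall_congr' fun _ => specializes_lowerTopology_iff)).symm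

instance [R0Space X] : Std.Symm (α := Specialization X) (· ≤ ·) where
  symm _ _ h := Specializes.symm (X := X) h

theorem exists_uncountable_isAntichain_specialization [R0Space X]
    [Uncountable (SeparationQuotient X)] :
    ∃ s : Set (Specialization X), IsAntichain (· ≤ ·) s ∧ ¬ s.Countable := by
  let rep : SeparationQuotient X → X := Function.surjInv SeparationQuotient.surjective_mk
  have mk_rep : ∀ z, SeparationQuotient.mk (rep z) = z := Function.surjInv_eq _
  refine ⟨range fun z => Specialization.toEquiv (rep z), ?_, fun h => ?_⟩
  · rintro _ ⟨z, rfl⟩ _ ⟨w, rfl⟩ hne hle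
    have rep_inseparable : Inseparable (rep w) (rep z) := specializes_iff_inseparable.1 hle
    rw [← SeparationQuotient.mk_eq_mk, mk_rep, mk_rep] at rep_inseparable
    exact hne (by rw [rep_inseparable])
  · have rep_injective : Function.Injective rep := Function.injective_surjInv _
    have := h.preimage (Specialization.toEquiv.injective.comp rep_injective)
    exact not_countable_univ (preimage_range _ ▸ this)

end SpecializationOrder

theorem stmt7_general (n : ℕ) (X : Type*) [TopologicalSpace X] [R0Space X]
    [Uncountable (SeparationQuotient X)] :
    ¬ SigmaEmbeddable (X × (Fin n → RLower)) (Fin (n + 1) → RLower) ∧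
    ¬ SigmaEmbeddable (Fin (n + 1) → RLower) (X × (Fin n → RLower)) := by
  constructor <;> intro h
  · obtain ⟨s, s_antichain, s_uncountable⟩ := exists_uncountable_isAntichain_specialization (X := X)
    exact not_sigmaOrderEmbeddable_prod_pi s_antichain s_uncountable (by simp)
      (h.sigmaOrderEmbeddable (specializationProd (specializationPiRLower _))
        (specializationPiRLower _))
  · exact not_sigmaOrderEmbeddable_pi_prod (by simp)
      (h.sigmaOrderEmbeddable (specializationPiRLower _)
        (specializationProd (specializationPiRLower _)))

/-- For an uncountable second-countable T1 space `X`, the space `X × ℝ_<^n` is not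
σ-embeddable into `ℝ_<^{n+1}`; combined with the other direction, `ℝ_<^{n+1}` and
`X × ℝ_<^n` are σ-incomparable. -/
theorem stmt7 (n : ℕ) (X : Type*) [TopologicalSpace X]
    [SecondCountableTopology X] [T1Space X] [Uncountable X] :
    ¬ SigmaEmbeddable (X × (Fin n → RLower)) (Fin (n + 1) → RLower) ∧
    ¬ SigmaEmbeddable (Fin (n + 1) → RLower) (X × (Fin n → RLower)) := by
  have : Uncountable (SeparationQuotient X) := Function.Injective.uncountable fun _ _ h =>
    (SeparationQuotient.mk_eq_mk.1 h).eq
  exact stmt7_general n X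
end

section
/- Let n ≥ 1 and let (P_i)_{i ∈ ℕ} be a countable family of pairwise disjoint sets with ⋃_i P_i = [0,1]^n. Then there exist an index i and an injective map e : {0,1}^n → [0,1]^n whose range is contained in P_i such that for all s, t ∈ {0,1}^n: s ≤ t in the coordinatewise (product) order on {0,1}^n if and only if e(s) ≤ e(t) in the coordinatewise (product) order on [0,1]^n. That is, some piece P_i contains a subset order-isomorphic to the Boolean cube Λ^n = ({0,1}^n, ≤). -/
open Set Function

/-!
By the Baire category theorem some piece is not nowhere dense, so its closure contains a nonempty
open box. Breaking ties in each coordinate of the cube by a linear extension of the product order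
writes that order as an intersection of countable linear orders, one for each coordinate. A
countable linear order indexes a family of nonempty open sets, each lying strictly below all later
ones, inside the corresponding side of the box. Any choice of points in the resulting product boxes
then reproduces the order of the cube, and by density the points can be chosen in the piece.
-/

section TieBreaking

variable {ι : Type*} {L : ι → Type*} [∀ k, LinearOrder (L k)]

/-- The `k`-th coordinate of `s`, with ties broken by a linear extension of the product order. The
linear orders obtained by comparing these values, one for each `k`, realize the product order as
their intersection. -/
noncomputable def tieBrokenCoord (k : ι) (s : ∀ k, L k) : L k ×ₗ LinearExtension (∀ k, L k) :=
  toLex (s k, toLinearExtension s)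

lemma tieBrokenCoord_strictMono (k : ι) : StrictMono (tieBrokenCoord (L := L) k) := by
  intro s t h
  have hext : toLinearExtension s < toLinearExtension t :=
    toLinearExtension.monotone.strictMono_of_injective injective_id h
  exact Prod.Lex.toLex_strictMono (Prod.mk_lt_mk.2 (.inr ⟨h.le k, hext⟩))

lemma tieBrokenCoord_lt_of_apply_lt {k : ι} {s t : ∀ k, L k} (h : s k < t k) :
    tieBrokenCoord k s < tieBrokenCoord k t :=
  Prod.Lex.toLex_lt_toLex.2 (.inl h)

lemma pi_le_iff_le_of_tieBrokenCoord_lt {X : ι → Type*} [∀ k, Preorder (X k)]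
    {e : (∀ k, L k) → ∀ k, X k}
    (he : ∀ s t k, tieBrokenCoord k s < tieBrokenCoord k t → e s k < e t k) {s t : ∀ k, L k} :
    e s ≤ e t ↔ s ≤ t := by
  constructor
  · intro h k
    by_contra! hk
    exact (h k).not_gt (he t s k (tieBrokenCoord_lt_of_apply_lt hk))
  · intro h
    rcases h.eq_or_lt with rfl | hlt
    · exact le_rfl
    · exact fun k => (he s t k (tieBrokenCoord_strictMono k hlt)).le

end TieBreaking

lemma exists_isOpen_subset_forall_lt {X : Type*} [LinearOrder X] [DenselyOrdered X] [Nontrivial X]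
    [TopologicalSpace X] [OrderTopology X] (M : Type*) [LinearOrder M] [Countable M]
    {V : Set X} (hV : IsOpen V) (hne : V.Nonempty) :
    ∃ I : M → Set X, (∀ a, IsOpen (I a)) ∧ (∀ a, (I a).Nonempty) ∧ (∀ a, I a ⊆ V) ∧
      ∀ a b, a < b → ∀ x ∈ I a, ∀ y ∈ I b, x < y := by
  obtain ⟨c, d, hcd, hsub⟩ := hV.exists_Ioo_subset hne
  have : Nontrivial (Ioo c d) := (Ioo_infinite hcd).nontrivial.coe_sort
  have : Countable (M ×ₗ Bool) := inferInstanceAs (Countable (M × Bool))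
  obtain ⟨g⟩ := Order.embedding_from_countable_to_dense (M ×ₗ Bool) (Ioo c d)
  have hendpoints (a : M) : g (toLex (a, false)) < g (toLex (a, true)) :=
    g.lt_iff_lt.2 (Prod.Lex.toLex_lt_toLex.2 (.inr ⟨rfl, Bool.false_lt_true⟩))
  have hgap {a b : M} (hab : a < b) : g (toLex (a, true)) < g (toLex (b, false)) :=
    g.lt_iff_lt.2 (Prod.Lex.toLex_lt_toLex.2 (.inl hab))
  refine ⟨fun a => Ioo ↑(g (toLex (a, false))) ↑(g (toLex (a, true))), fun _ => isOpen_Ioo,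
    fun a => nonempty_Ioo.2 (hendpoints a), fun a x hx => hsub ?_, fun a b hab x hx y hy => ?_⟩
  · exact ⟨(g _).2.1.trans hx.1, hx.2.trans (g _).2.2⟩
  · exact hx.2.trans (lt_trans (hgap hab) hy.1)

lemma exists_isOpen_pi_subset_closure {ι : Type*} [Finite ι] {X : ι → Type*}
    [∀ k, TopologicalSpace (X k)] {A : Set (∀ k, X k)} (hA : ¬IsNowhereDense A) :
    ∃ V : ∀ k, Set (X k),
      (∀ k, IsOpen (V k)) ∧ (∀ k, (V k).Nonempty) ∧ univ.pi V ⊆ closure A := by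
  obtain ⟨x, hx⟩ := nonempty_iff_ne_empty.2 hA
  obtain ⟨V, hV, hsub⟩ := isOpen_pi_iff'.1 isOpen_interior x hx
  exact ⟨V, fun k => (hV k).1, fun k => ⟨x k, (hV k).2⟩, hsub.trans interior_subset⟩

section Embedding

variable {ι : Type*} [Finite ι] (L : ι → Type*) [∀ k, LinearOrder (L k)] [∀ k, Countable (L k)]
  {X : ι → Type*} [∀ k, LinearOrder (X k)] [∀ k, DenselyOrdered (X k)] [∀ k, Nontrivial (X k)]
  [∀ k, TopologicalSpace (X k)] [∀ k, OrderTopology (X k)]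

lemma exists_orderEmbedding_range_subset_of_not_isNowhereDense {A : Set (∀ k, X k)}
    (hA : ¬IsNowhereDense A) : ∃ e : (∀ k, L k) ↪o ∀ k, X k, range e ⊆ A := by
  obtain ⟨V, hVo, hVne, hVA⟩ := exists_isOpen_pi_subset_closure hA
  have (k : ι) : Countable (L k ×ₗ LinearExtension (∀ k, L k)) :=
    inferInstanceAs (Countable (L k × ∀ k, L k))
  choose I hIo hIne hIV hIlt using fun k =>
    exists_isOpen_subset_forall_lt (L k ×ₗ LinearExtension (∀ k, L k)) (hVo k) (hVne k)
  have hmeet (s : ∀ k, L k) : (univ.pi (fun k => I k (tieBrokenCoord k s)) ∩ A).Nonempty := by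
    obtain ⟨z, hz⟩ := univ_pi_nonempty_iff.2 fun k => hIne k (tieBrokenCoord k s)
    have hzA : z ∈ closure A := hVA fun k hk => hIV k _ (hz k hk)
    exact mem_closure_iff.1 hzA _ (isOpen_set_pi finite_univ fun k _ => hIo k _) hz
  choose e heI heA using hmeet
  have hlt (s t : ∀ k, L k) (k : ι) (h : tieBrokenCoord k s < tieBrokenCoord k t) :
      e s k < e t k :=
    hIlt k _ _ h _ (heI s k (mem_univ k)) _ (heI t k (mem_univ k))
  exact ⟨.ofMapLEIff e fun _ _ => pi_le_iff_le_of_tieBrokenCoord_lt hlt, range_subset_iff.2 heA⟩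

theorem stmt8_general {κ : Type*} [Countable κ] {P : κ → Set (∀ k, X k)}
    (hP : ¬IsMeagre (⋃ i, P i)) : ∃ i, ∃ e : (∀ k, L k) ↪o ∀ k, X k, range e ⊆ P i := by
  obtain ⟨i, hi⟩ : ∃ i, ¬IsMeagre (P i) := by
    contrapose! hP
    exact isMeagre_iUnion hP
  exact ⟨i, exists_orderEmbedding_range_subset_of_not_isNowhereDense L (mt (·.isMeagre) hi)⟩

end Embedding

/-- Some piece of any countable partition of `[0,1]^n` contains an order-isomorphic copy
of the Boolean cube `Λⁿ = ({0,1}ⁿ, ≤)` (coordinatewise orders). -/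
theorem stmt8 (n : ℕ) (hn : 1 ≤ n) (P : ℕ → Set (Fin n → unitInterval))
    (hdisj : Pairwise (Disjoint on P)) (hcov : (⋃ i, P i) = univ) :
    ∃ (i : ℕ) (e : (Fin n → Bool) → (Fin n → unitInterval)),
      Injective e ∧ range e ⊆ P i ∧ ∀ s t : Fin n → Bool, s ≤ t ↔ e s ≤ e t := by
  obtain ⟨i, e, he⟩ := stmt8_general (fun _ => Bool)
    (hcov ▸ not_isMeagre_of_isOpen isOpen_univ univ_nonempty)
  exact ⟨i, e, e.injective, he, fun _ _ => e.le_iff_le.symm⟩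
end

section
/- For k ≥ 1, define recursively a predicate NM_k on subsets of [0,1]^k as follows: NM_1(P) holds iff P is nonmeager in [0,1]; and NM_{k+1}(P) holds iff the set {x ∈ [0,1] : NM_k({y ∈ [0,1]^k : (x, y) ∈ P})} is nonmeager in [0,1]. Then for every n ≥ 1 and every countable family (P_i)_{i ∈ ℕ} of pairwise disjoint sets with ⋃_i P_i = [0,1]^n, there exists an index i such that NM_n(P_i) holds. -/
/-!
The quantifier `NM n` is inherited by a piece of any countable union, by induction on `n`: if the
section of `⋃ i, P i` over `x` is large, then so is the section of some `P i` over `x`. Hence the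
nonmeager set of such `x` is covered by countably many sets, one for each `i`, and one of them is
nonmeager. The whole cube is large by the Baire category theorem.
-/

open Set

/-- The iterated Vaught "nonmeager" quantifier `NM_k` on subsets of `[0,1]^k`:
`NM 1 P` holds iff `P` is nonmeager in `[0,1]`, and `NM (k+1) P` holds iff the set of
`x ∈ [0,1]` such that `NM k` holds of the section `{y | (x, y) ∈ P}` is nonmeager in `[0,1]`. -/
def NM : (k : ℕ) → Set (Fin k → unitInterval) → Prop
  | 0, _ => True
  | 1, P => ¬ IsMeagre {x : unitInterval | (fun _ => x) ∈ P}
  | (k + 2), P =>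
      ¬ IsMeagre {x : unitInterval | NM (k + 1) {y : Fin (k + 1) → unitInterval | Fin.cons x y ∈ P}}

theorem exists_not_isMeagre_of_subset_iUnion {X ι : Type*} [TopologicalSpace X] [Countable ι]
    {s : Set X} {A : ι → Set X} (hs : ¬ IsMeagre s) (hsA : s ⊆ ⋃ i, A i) :
    ∃ i, ¬ IsMeagre (A i) := by
  by_contra! hA
  exact hs ((isMeagre_iUnion hA).mono hsA)

theorem NM_univ (n : ℕ) : NM n univ := by
  have not_isMeagre_univ : ¬ IsMeagre (univ : Set unitInterval) :=
    not_isMeagre_of_isOpen isOpen_univ univ_nonempty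
  induction n with
  | zero => trivial
  | succ k ih =>
    cases k with
    | zero => exact not_isMeagre_univ
    | succ k => simpa only [NM, mem_univ, ofPred_true, ih] using not_isMeagre_univ

theorem stmt9_general {ι : Type*} [Countable ι] {n : ℕ} (hn : 1 ≤ n)
    {P : ι → Set (Fin n → unitInterval)} (hP : NM n (⋃ i, P i)) : ∃ i, NM n (P i) := by
  induction n, hn using Nat.le_induction with
  | base =>
    refine exists_not_isMeagre_of_subset_iUnion hP fun x hx => ?_
    simpa only [mem_ofPred_eq, mem_iUnion] using hx
  | succ k hk ih =>
    obtain ⟨k, rfl⟩ := Nat.exists_eq_add_of_le' hk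
    refine exists_not_isMeagre_of_subset_iUnion hP fun x hx => ?_
    have section_iUnion : {y : Fin (k + 1) → unitInterval | Fin.cons x y ∈ ⋃ i, P i} =
        ⋃ i, {y : Fin (k + 1) → unitInterval | Fin.cons x y ∈ P i} := preimage_iUnion
    rw [mem_ofPred_eq, section_iUnion] at hx
    exact mem_iUnion.2 (ih hx)

/-- For every countable partition of `[0,1]^n` (`n ≥ 1`) into pairwise disjoint pieces,
some piece satisfies the iterated nonmeagerness quantifier `NM_n`. -/
theorem stmt9 (n : ℕ) (hn : 1 ≤ n) (P : ℕ → Set (Fin n → unitInterval))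
    (hdisj : Pairwise (Function.onFun Disjoint P)) (hcov : (⋃ i, P i) = univ) :
    ∃ i, NM n (P i) :=
  stmt9_general hn (hcov ▸ NM_univ n)
end

section
/- There exists a function Q assigning to every countable set S of ordinals below ω₁ (the least uncountable ordinal) a second-countable T0 topological space Q(S) such that: (i) Q(S) is not σ-embeddable into the Hilbert cube [0,1]^ℕ (in particular Q(S) is not separable metrizable); and (ii) for all countable sets S, T of ordinals below ω₁, if S ⊄ T then Q(S) is not σ-embeddable into Q(T). -/
/-!
Let `L` be the real line with the upper topology, whose open sets are the open upper rays. It is a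
second-countable T0 space in which any two points are comparable for specialization, so its T1
subspaces have at most one point; hence no uncountable subspace of `L` is σ-embeddable into a T1
space. All the spaces `Q S` are uncountable subspaces of `L`.

A σ-embedding between subspaces of a second-countable T0 space of cardinality `𝔠` is contained in
the union of countably many partial injections, each determined by which open sets are the
preimages of the basic open sets under the injection and its inverse. There are only `𝔠` such codes,
so, as in the theorem of Sierpiński and Zygmund, transfinite recursion assigns to every pair `ξ` of
a label and a code a point `p ξ` which the code of `ξ` matches with no other chosen point. Let `Q S`
consist of the points whose label lies in `S`, together with uncountably many unlabelled points.
If a label `o ∈ S \ T` is paired with the code `c` of a σ-embedding of `Q S` into `Q T`, then `c`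
has to match the point `p (o, c)` of `Q S` with a point of `Q T`, which is a different chosen point.
-/

open Set

/-- The least uncountable ordinal `ω₁`. -/
noncomputable def omega1 : Ordinal := (Cardinal.aleph 1).ord

open Cardinal hiding univ
open Topology TopologicalSpace Function

universe u v

section SigmaEmbeddable

variable {X : Type u} {Y : Type v} [TopologicalSpace X] [TopologicalSpace Y]

theorem SigmaEmbeddable.exists_isEmbedding (h : SigmaEmbeddable X Y) :
    ∃ A : ℕ → Set X, (⋃ n, A n) = univ ∧ ∀ n, ∃ f : A n → Y, IsEmbedding f := by
  obtain ⟨A, hA, hB⟩ := h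
  refine ⟨A, hA, fun n ↦ ?_⟩
  obtain ⟨B, ⟨f⟩⟩ := hB n
  exact ⟨Subtype.val ∘ f, IsEmbedding.subtypeVal.comp f.isEmbedding⟩

theorem subsingleton_of_specializes_total [T1Space X] (hX : ∀ x y : X, x ⤳ y ∨ y ⤳ x) :
    Subsingleton X :=
  ⟨fun x y ↦ (hX x y).elim Specializes.eq fun h ↦ h.eq.symm⟩

theorem SigmaEmbeddable.countable_of_specializes_total [T1Space Y] (h : SigmaEmbeddable X Y)
    (hX : ∀ x y : X, x ⤳ y ∨ y ⤳ x) : Countable X := by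
  obtain ⟨A, hA, hf⟩ := h.exists_isEmbedding
  have hA_countable (n : ℕ) : (A n).Countable := by
    obtain ⟨f, hf⟩ := hf n
    have : T1Space (A n) := hf.t1Space
    have : Subsingleton (A n) := subsingleton_of_specializes_total fun x y ↦
      (hX x y).imp (subtype_specializes_iff x y).2 (subtype_specializes_iff y x).2
    exact to_countable (A n)
  exact countable_univ_iff.1 (hA ▸ countable_iUnion hA_countable)

end SigmaEmbeddable

section UpperTopology

variable {α : Type u} [LinearOrder α] [TopologicalSpace α] [IsUpper α]

theorem specializes_total_of_isUpper (x y : α) : x ⤳ y ∨ y ⤳ x := by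
  simp only [specializes_iff_mem_closure, IsUpper.closure_singleton, mem_Iic]
  exact le_total y x

theorem secondCountableTopology_of_isUpper {D : Set α} (hD : D.Countable)
    (hlt : ∀ a b : α, a < b → ∃ d ∈ D, a ≤ d ∧ d < b) : SecondCountableTopology α := by
  refine ⟨Ioi '' D, hD.image _, le_antisymm (le_generateFrom ?_) ?_⟩
  · rintro _ ⟨d, -, rfl⟩
    exact isOpen_Ioi
  · refine (le_generateFrom ?_).trans_eq (IsUpper.topology_eq α).symm
    rintro _ ⟨a, rfl⟩
    have hIoi : (Iic a)ᶜ = ⋃ d ∈ D ∩ Ici a, Ioi d := by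
      ext b
      simp only [compl_Iic, mem_Ioi, mem_iUnion, mem_inter_iff, mem_Ici, exists_prop]
      refine ⟨fun h ↦ ?_, fun ⟨d, ⟨_, had⟩, hdb⟩ ↦ had.trans_lt hdb⟩
      obtain ⟨d, hd, had, hdb⟩ := hlt a b h
      exact ⟨d, ⟨hd, had⟩, hdb⟩
    rw [hIoi]
    exact @isOpen_biUnion _ _ (generateFrom _) _ _ fun d hd ↦
      isOpen_generateFrom_of_mem (mem_image_of_mem Ioi hd.1)

instance : SecondCountableTopology (WithUpper ℝ) := by
  refine secondCountableTopology_of_isUpper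
    (countable_range fun q : ℚ ↦ WithUpper.toUpper (q : ℝ)) fun a b hab ↦ ?_
  obtain ⟨q, haq, hqb⟩ := exists_rat_btwn (WithUpper.ofUpper_lt_ofUpper.2 hab)
  exact ⟨_, mem_range_self q, haq.le, hqb⟩

end UpperTopology

section Codes

variable (X Y : Type u) [TopologicalSpace X] [TopologicalSpace Y]

theorem mk_opens_le_continuum [SecondCountableTopology X] : #(Opens X) ≤ 𝔠 := by
  have hinj : Injective fun U : Opens X ↦ {s : countableBasis X | (s : Set X) ⊆ U} := by
    intro U V hUV
    have hmem (s : countableBasis X) : (s : Set X) ⊆ U ↔ (s : Set X) ⊆ V := Set.ext_iff.1 hUV s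
    refine Opens.ext ?_
    rw [(isBasis_countableBasis X).open_eq_sUnion' U.isOpen,
      (isBasis_countableBasis X).open_eq_sUnion' V.isOpen]
    exact congrArg sUnion (Set.ext fun s ↦ and_congr_right fun hs ↦ hmem ⟨s, hs⟩)
  calc #(Opens X) ≤ #(Set (countableBasis X)) := mk_le_of_injective hinj
    _ = 2 ^ #(countableBasis X) := mk_set
    _ ≤ 2 ^ ℵ₀ := power_le_power_left two_ne_zero (countable_countableBasis X).le_aleph0
    _ = 𝔠 := two_power_aleph0

/-- A code for a partial continuous map from `X` to `Y`: it lists, for each basic open set of `Y`,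
an open set of `X` inducing its preimage on the domain of the map. The domain itself is not part of
the code; see `PartialMapCode.Rel`. -/
def PartialMapCode [SecondCountableTopology Y] : Type u := countableBasis Y → Opens X

/-- A code for a σ-embedding of a subspace of `X` into a subspace of `Y`: countably many codes for
partial homeomorphisms, each given by a code for the map and a code for its inverse. -/
def SigmaEmbeddingCode [SecondCountableTopology X] [SecondCountableTopology Y] : Type u :=
  ℕ → PartialMapCode X Y × PartialMapCode Y X

theorem PartialMapCode.mk_le_continuum [SecondCountableTopology X] [SecondCountableTopology Y] :
    #(PartialMapCode X Y) ≤ 𝔠 :=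
  calc #(countableBasis Y → Opens X) = #(Opens X) ^ #(countableBasis Y) := (power_def _ _).symm
    _ ≤ 𝔠 ^ #(countableBasis Y) := power_le_power_right (mk_opens_le_continuum X)
    _ ≤ 𝔠 ^ ℵ₀ :=
      power_le_power_left continuum_ne_zero (countable_countableBasis Y).le_aleph0
    _ = 𝔠 := continuum_power_aleph0

theorem SigmaEmbeddingCode.mk_le_continuum [SecondCountableTopology X]
    [SecondCountableTopology Y] : #(SigmaEmbeddingCode X Y) ≤ 𝔠 := by
  have hpair : #(PartialMapCode X Y × PartialMapCode Y X) ≤ 𝔠 := by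
    rw [mk_prod, lift_id, lift_id, ← continuum_mul_self]
    exact mul_le_mul' (PartialMapCode.mk_le_continuum X Y) (PartialMapCode.mk_le_continuum Y X)
  calc #(ℕ → PartialMapCode X Y × PartialMapCode Y X)
      = #(PartialMapCode X Y × PartialMapCode Y X) ^ ℵ₀ := by simp
    _ ≤ 𝔠 ^ ℵ₀ := power_le_power_right hpair
    _ = 𝔠 := continuum_power_aleph0

variable {X Y}

/-- The relation of `x` and `y` that is the graph of the largest partial map from `X` to `Y` with
code `c`; it is single-valued when `Y` is T0. -/
def PartialMapCode.Rel [SecondCountableTopology Y] (c : PartialMapCode X Y) (x : X) (y : Y) :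
    Prop :=
  ∀ s : countableBasis Y, y ∈ (s : Set Y) ↔ x ∈ c s

/-- The union of the graphs of the partial injections listed by `c`, as a relation. -/
def SigmaEmbeddingCode.Rel [SecondCountableTopology X] [SecondCountableTopology Y]
    (c : SigmaEmbeddingCode X Y) (x : X) (y : Y) : Prop :=
  ∃ n, (c n).1.Rel x y ∧ (c n).2.Rel y x

theorem PartialMapCode.subsingleton_rel [SecondCountableTopology Y] [T0Space Y]
    (c : PartialMapCode X Y) (x : X) : {y | c.Rel x y}.Subsingleton := fun _ hy _ hz ↦
  (isBasis_countableBasis Y).eq_iff.2 fun s hs ↦ (hy ⟨s, hs⟩).trans (hz ⟨s, hs⟩).symm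

theorem PartialMapCode.exists_forall_rel [SecondCountableTopology Y] {Z : Type v}
    [TopologicalSpace Z] {i : Z → X} {f : Z → Y} (hi : IsInducing i) (hf : Continuous f) :
    ∃ c : PartialMapCode X Y, ∀ z, c.Rel (i z) (f z) := by
  have hpreimage (s : countableBasis Y) : ∃ U : Opens X, i ⁻¹' U = f ⁻¹' s := by
    obtain ⟨U, hU, hUs⟩ := hi.isOpen_iff.1 ((isOpen_of_mem_countableBasis s.2).preimage hf)
    exact ⟨⟨U, hU⟩, hUs⟩
  choose c hc using hpreimage
  exact ⟨c, fun z s ↦ (Set.ext_iff.1 (hc s) z).symm⟩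

variable [SecondCountableTopology X] [SecondCountableTopology Y]

theorem SigmaEmbeddingCode.countable_rel_left [T0Space Y] (c : SigmaEmbeddingCode X Y) (x : X) :
    {y | c.Rel x y}.Countable :=
  (countable_iUnion fun n ↦ ((c n).1.subsingleton_rel x).countable).mono fun _ ⟨n, hn, _⟩ ↦
    mem_iUnion.2 ⟨n, hn⟩

theorem SigmaEmbeddingCode.countable_rel_right [T0Space X] (c : SigmaEmbeddingCode X Y) (y : Y) :
    {x | c.Rel x y}.Countable :=
  (countable_iUnion fun n ↦ ((c n).2.subsingleton_rel y).countable).mono fun _ ⟨n, _, hn⟩ ↦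
    mem_iUnion.2 ⟨n, hn⟩

theorem SigmaEmbeddable.exists_code {S : Set X} {T : Set Y} (h : SigmaEmbeddable S T) :
    ∃ c : SigmaEmbeddingCode X Y, ∀ x ∈ S, ∃ y ∈ T, c.Rel x y := by
  obtain ⟨A, hA, hf⟩ := h.exists_isEmbedding
  choose f hf using hf
  have hdom (n : ℕ) : IsInducing fun a : A n ↦ (a : X) :=
    IsInducing.subtypeVal.comp IsInducing.subtypeVal
  have hval (n : ℕ) : IsInducing fun a : A n ↦ (f n a : Y) :=
    IsInducing.subtypeVal.comp (hf n).isInducing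
  choose c hc using fun n ↦ PartialMapCode.exists_forall_rel (hdom n) (hval n).continuous
  choose d hd using fun n ↦ PartialMapCode.exists_forall_rel (hval n) (hdom n).continuous
  refine ⟨fun n ↦ (c n, d n), fun x hx ↦ ?_⟩
  obtain ⟨n, hn⟩ := mem_iUnion.1 (hA ▸ mem_univ (⟨x, hx⟩ : S))
  exact ⟨f n ⟨⟨x, hx⟩, hn⟩, (f n _).2, n, hc n ⟨_, hn⟩, hd n ⟨_, hn⟩⟩

end Codes

section TransfiniteChoice

variable {K Y : Type u}

theorem exists_forall_notMem_of_mk_lt (hKY : #K < #Y) (hY : ℵ₀ < #Y) {s : K → Set Y}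
    (hs : ∀ k, (s k).Countable) : ∃ y, ∀ k, y ∉ s k := by
  have hlt : #(⋃ k, s k) < #Y :=
    calc #(⋃ k, s k) ≤ #K * ⨆ k, #(s k) := mk_iUnion_le s
      _ ≤ #K * ℵ₀ := by gcongr; exact ciSup_le' fun k ↦ (hs k).le_aleph0
      _ < #Y := mul_lt_of_lt hY.le hKY hY
  have hne : (⋃ k, s k) ≠ univ := fun h ↦ hlt.ne (h ▸ mk_univ)
  simpa only [mem_iUnion, not_exists] using (ne_univ_iff_exists_notMem _).1 hne

theorem exists_forall_lt_notMem [Preorder K] [WellFoundedLT K] (hK : ∀ k : K, #(Iio k) < #Y)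
    (hY : ℵ₀ < #Y) {s : K → K → Y → Set Y} (hs : ∀ k l y, (s k l y).Countable) :
    ∃ p : K → Y, ∀ k, ∀ l < k, p k ∉ s k l (p l) := by
  have hstep (k : K) (q : ∀ l < k, Y) : ∃ y, ∀ l (hl : l < k), y ∉ s k l (q l hl) := by
    obtain ⟨y, hy⟩ := exists_forall_notMem_of_mk_lt (hK k) hY fun l : Iio k ↦ hs k l (q l l.2)
    exact ⟨y, fun l hl ↦ hy ⟨l, hl⟩⟩
  choose next hnext using hstep
  refine ⟨WellFoundedLT.fix next, fun k l hl ↦ ?_⟩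
  rw [WellFoundedLT.fix_eq next k]
  exact hnext k (fun l _ ↦ WellFoundedLT.fix next l) l hl

theorem exists_pairwise_not_rel (hKY : #K ≤ #Y) (hY : ℵ₀ < #Y) {R : K → Y → Y → Prop}
    (hleft : ∀ k x, {y | R k x y}.Countable) (hright : ∀ k y, {x | R k x y}.Countable) :
    ∃ p : K → Y, Pairwise fun k l ↦ ¬ R k (p k) (p l) := by
  obtain ⟨_, _, hord⟩ := exists_ord_eq_type_lt K
  obtain ⟨p, hp⟩ := exists_forall_lt_notMem (fun k : K ↦ (mk_Iio_lt k hord).trans_le hKY) hY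
    fun k l y ↦ (hright k y).union (hleft l y)
  refine ⟨p, fun k l hkl h ↦ ?_⟩
  rcases hkl.lt_or_gt with hlt | hgt
  · exact hp l k hlt (Or.inr h)
  · exact hp k l hgt (Or.inl h)

end TransfiniteChoice

theorem exists_uncountable_subspaces_not_sigmaEmbeddable {Y : Type u} [TopologicalSpace Y]
    [SecondCountableTopology Y] [T0Space Y] (hY : 𝔠 ≤ #Y) :
    ∃ X : Set Y → Set Y, (∀ S, ¬ (X S).Countable) ∧
      ∀ S T, ¬ S ⊆ T → ¬ SigmaEmbeddable (X S) (X T) := by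
  have hY_aleph0 : ℵ₀ < #Y := aleph0_lt_continuum.trans_le hY
  have hK : #(Y ⊕ Y × SigmaEmbeddingCode Y Y) ≤ #Y := by
    have hcode : #(SigmaEmbeddingCode Y Y) ≤ #Y :=
      (SigmaEmbeddingCode.mk_le_continuum Y Y).trans hY
    simp only [mk_sum, mk_prod, lift_id]
    calc #Y + #Y * #(SigmaEmbeddingCode Y Y) ≤ #Y + #Y * #Y := by gcongr
      _ = #Y := by rw [mul_eq_self hY_aleph0.le, add_eq_self hY_aleph0.le]
  -- Equality as the relation of the unlabelled indices makes their points pairwise distinct.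
  obtain ⟨p, hp⟩ := exists_pairwise_not_rel hK hY_aleph0
    (R := Sum.elim (fun _ ↦ Eq) fun ξ ↦ ξ.2.Rel)
    (Sum.rec (fun _ x ↦ by simp) fun ξ ↦ ξ.2.countable_rel_left)
    (Sum.rec (fun _ y ↦ countable_singleton y) fun ξ ↦ ξ.2.countable_rel_right)
  let I (S : Set Y) : Set (Y ⊕ Y × SigmaEmbeddingCode Y Y) := range Sum.inl ∪ Sum.inr '' (S ×ˢ univ)
  refine ⟨fun S ↦ p '' I S, fun S hS ↦ ?_, fun S T hST h ↦ ?_⟩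
  · have hinj : Injective (p ∘ Sum.inl) := fun x y hxy ↦ by
      by_contra hne
      exact hp (Sum.inl_injective.ne hne) hxy
    have huniv : (univ : Set Y).Countable := (hS.preimage hinj).mono fun y _ ↦
      mem_image_of_mem p (Or.inl (mem_range_self y))
    exact hY_aleph0.not_ge (mk_le_aleph0_iff.2 (countable_univ_iff.1 huniv))
  · obtain ⟨o, hoS, hoT⟩ := not_subset.1 hST
    obtain ⟨c, hc⟩ := h.exists_code
    obtain ⟨_, ⟨η, hη, rfl⟩, hrel⟩ :=
      hc (p (Sum.inr (o, c))) (mem_image_of_mem p (Or.inr ⟨(o, c), ⟨hoS, trivial⟩, rfl⟩))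
    refine hp (i := Sum.inr (o, c)) (j := η) ?_ hrel
    rintro rfl
    simp [I, hoT] at hη

theorem mk_Iio_omega1_le_continuum : #(Iio omega1.{u}) ≤ 𝔠 := by
  rw [mk_Iio_ordinal, omega1, card_ord, lift_le_continuum]
  exact aleph_one_le_continuum

theorem stmt11_general {ι : Type u} (hι : #ι ≤ 𝔠) :
    ∃ (Q : Set ι → Type) (_ : ∀ S, TopologicalSpace (Q S)),
      (∀ S, SecondCountableTopology (Q S) ∧ T0Space (Q S) ∧
        ∀ (Y : Type v) [TopologicalSpace Y] [T1Space Y], ¬ SigmaEmbeddable (Q S) Y) ∧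
      ∀ S T, ¬ S ⊆ T → ¬ SigmaEmbeddable (Q S) (Q T) := by
  have hmk : #(WithUpper ℝ) = 𝔠 := mk_real
  obtain ⟨g⟩ : Nonempty (ι ↪ WithUpper ℝ) := by
    rw [← lift_mk_le', hmk]
    simpa using hι
  obtain ⟨X, hX_uncountable, hX⟩ :=
    exists_uncountable_subspaces_not_sigmaEmbeddable hmk.ge
  refine ⟨fun S ↦ X (g '' S), fun S ↦ inferInstance, fun S ↦ ⟨inferInstance, inferInstance, ?_⟩,
    fun S T hST ↦ hX _ _ (mt (image_subset_image_iff g.injective).1 hST)⟩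
  intro Y _ _ h
  exact hX_uncountable (g '' S) (h.countable_of_specializes_total fun x y ↦
    (specializes_total_of_isUpper (x : WithUpper ℝ) y).imp
      (subtype_specializes_iff x y).2 (subtype_specializes_iff y x).2)

/-- There is an assignment of second-countable T0 spaces `Q S` to countable sets `S` of
countable ordinals such that no `Q S` is σ-embeddable into the Hilbert cube, and
`S ⊄ T` implies `Q S` is not σ-embeddable into `Q T`. -/
theorem stmt11 :
    ∃ (Q : Set Ordinal → Type) (tQ : ∀ S, TopologicalSpace (Q S)),
      (∀ S : Set Ordinal, S.Countable → (∀ o ∈ S, o < omega1) →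
        @SecondCountableTopology (Q S) (tQ S) ∧ @T0Space (Q S) (tQ S) ∧
        ¬ @SigmaEmbeddable (Q S) (ℕ → unitInterval) (tQ S) _) ∧
      (∀ S T : Set Ordinal,
        S.Countable → (∀ o ∈ S, o < omega1) →
        T.Countable → (∀ o ∈ T, o < omega1) →
        ¬ S ⊆ T → ¬ @SigmaEmbeddable (Q S) (Q T) (tQ S) (tQ T)) := by
  obtain ⟨Q, tQ, hQ, hQ_not⟩ := stmt11_general mk_Iio_omega1_le_continuum
  exact ⟨fun S ↦ Q ((↑) ⁻¹' S), fun S ↦ tQ _,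
    fun S _ _ ↦ ⟨(hQ _).1, (hQ _).2.1, (hQ _).2.2 _⟩,
    fun S T _ hS _ _ hST ↦ hQ_not _ _ (mt (preimage_subset_preimage_iff (by simpa)).1 hST)⟩
end

section
/- For every separable metrizable topological space X, the product X × ℝ_< is σ-embeddable into the powerset Set ℕ equipped with the Scott topology, but Set ℕ with the Scott topology is not σ-embeddable into X × ℝ_<. That is, X × ℝ_< lies strictly below the Scott domain O(ℕ) in the σ-embeddability ordering. -/
/-!
A second countable T₀ space embeds into `O(ℕ)` by sending a point to the set of indices of the basic
open sets containing it; this applies to `X × ℝ_<`.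

The obstruction in the other direction is visible on specialization orders. In `X × ℝ_<` two
specializing points have the same first coordinate, and `ℝ_<` is totally ordered by specialization,
so the specialization order is a forest; this property passes to subspaces. But `O(ℕ)` contains a
copy of `ℝ_< × ℝ_<`, whose specialization order is the reversed product order of the plane. If
countably many sets cover the plane, then by Baire's theorem one of them is dense, for the Euclidean
topology, in some open rectangle. It therefore contains a point below two incomparable ones, and is
not a forest.
-/

open Set

/-- The powerset of `ℕ` equipped with the Scott topology. -/
def ScottPowNat : Type := Set ℕ

instance : TopologicalSpace ScottPowNat := Topology.scott (Set ℕ) Set.univ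

open Topology TopologicalSpace

section ScottTopologyOnSets

variable {ι Y : Type*} [TopologicalSpace (Set ι)] [IsScott (Set ι) univ]

lemma isOpen_setOf_mem_of_isScott (i : ι) : IsOpen {S : Set ι | i ∈ S} := by
  refine (IsScott.isOpen_iff_isUpperSet_and_dirSupInaccOn (D := univ)).2
    ⟨fun S T hST hS ↦ hST hS, fun d _ _ _ S hS hi ↦ ?_⟩
  obtain rfl : ⋃₀ d = S := hS.sSup_eq
  exact hi

lemma exists_finite_subset_mem_of_isOpen {U : Set (Set ι)} (hU : IsOpen U) {S : Set ι}
    (hS : S ∈ U) : ∃ F : Set ι, F.Finite ∧ F ⊆ S ∧ F ∈ U := by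
  let d : Set (Set ι) := {F | F.Finite ∧ F ⊆ S}
  have hne : d.Nonempty := ⟨∅, finite_empty, empty_subset S⟩
  have hdir : DirectedOn (· ≤ ·) d := fun F hF G hG ↦
    ⟨F ∪ G, ⟨hF.1.union hG.1, union_subset hF.2 hG.2⟩, subset_union_left, subset_union_right⟩
  have hlub : IsLUB d S := ⟨fun F hF ↦ hF.2, fun T hT i hi ↦
    hT ⟨finite_singleton i, singleton_subset_iff.2 hi⟩ rfl⟩
  obtain ⟨F, ⟨hfin, hFS⟩, hFU⟩ :=
    (IsScott.isOpen_iff_isUpperSet_and_dirSupInaccOn.1 hU).2 (mem_univ d) hne hdir hlub hS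
  exact ⟨F, hfin, hFS, hFU⟩

variable [TopologicalSpace Y]

lemma continuous_set_iff_of_isScott {f : Y → Set ι} :
    Continuous f ↔ ∀ i, IsOpen {y | i ∈ f y} := by
  refine ⟨fun hf i ↦ (isOpen_setOf_mem_of_isScott i).preimage hf, fun hf ↦ ?_⟩
  refine continuous_def.2 fun U hU ↦ isOpen_iff_mem_nhds.2 fun y hy ↦ ?_
  obtain ⟨F, hfin, hFy, hFU⟩ := exists_finite_subset_mem_of_isOpen hU hy
  have hF : ∀ᶠ z in 𝓝 y, ∀ i ∈ F, i ∈ f z :=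
    (Filter.eventually_all_finite hfin).2 fun i hi ↦ (hf i).mem_nhds (hFy hi)
  exact hF.mono fun z hz ↦ IsScott.isUpperSet_of_isOpen (D := univ) hU hz hFU

lemma isEmbedding_setOf_mem_of_eq_generateFrom [T0Space Y] {B : ι → Set Y}
    (hB : ‹TopologicalSpace Y› = generateFrom (range B)) :
    IsEmbedding fun y ↦ {i | y ∈ B i} := by
  refine IsInducing.isEmbedding ⟨le_antisymm ?_ ?_⟩
  · refine (continuous_set_iff_of_isScott.2 fun i ↦ ?_).le_induced
    rw [hB]
    exact isOpen_generateFrom_of_mem (mem_range_self i)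
  · refine (le_generateFrom ?_).trans_eq hB.symm
    rintro _ ⟨i, rfl⟩
    exact ⟨_, isOpen_setOf_mem_of_isScott i, rfl⟩

end ScottTopologyOnSets

lemma exists_isEmbedding_scottPowNat (Y : Type*) [TopologicalSpace Y] [SecondCountableTopology Y]
    [T0Space Y] : ∃ e : Y → ScottPowNat, IsEmbedding e := by
  let : TopologicalSpace (Set ℕ) := scott (Set ℕ) univ
  have : IsScott (Set ℕ) univ := ⟨rfl⟩
  obtain ⟨B, hB⟩ := exists_seq_basis Y
  exact ⟨_, isEmbedding_setOf_mem_of_eq_generateFrom hB.eq_generateFrom⟩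

section UpperTopology

variable {α : Type*} [TopologicalSpace α]

lemma specializes_iff_le_of_isUpper [Preorder α] [IsUpper α] {x y : α} : x ⤳ y ↔ y ≤ x := by
  rw [specializes_iff_mem_closure, IsUpper.closure_singleton, mem_Iic]

lemma secondCountableTopology_of_isUpper_s12 [LinearOrder α] [IsUpper α] {s : Set α}
    (hs : s.Countable) (hdense : ∀ x y, x < y → ∃ q ∈ s, x ≤ q ∧ q < y) :
    SecondCountableTopology α := by
  refine ⟨Ioi '' s, hs.image Ioi, ?_⟩
  rw [IsUpper.topology_eq α]
  refine le_antisymm (le_generateFrom ?_) (le_generateFrom ?_)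
  · rintro _ ⟨q, -, rfl⟩
    exact isOpen_generateFrom_of_mem ⟨q, compl_Iic⟩
  · rintro _ ⟨x, rfl⟩
    have hIoi : (Iic x)ᶜ = ⋃ q ∈ {q ∈ s | x ≤ q}, Ioi q := by
      ext y
      simp only [compl_Iic, mem_Ioi, mem_iUnion, mem_sep_iff, exists_prop]
      constructor
      · intro hxy
        obtain ⟨q, hq, hxq, hqy⟩ := hdense x y hxy
        exact ⟨q, ⟨hq, hxq⟩, hqy⟩
      · rintro ⟨q, ⟨-, hxq⟩, hqy⟩
        exact hxq.trans_lt hqy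
    rw [hIoi]
    let := generateFrom (Ioi '' s)
    exact isOpen_biUnion fun q hq ↦ isOpen_generateFrom_of_mem (mem_image_of_mem Ioi hq.1)

end UpperTopology

noncomputable instance : LinearOrder RLower := inferInstanceAs (LinearOrder ℝ)

-- The paper's lower topology, generated by the upward rays, is Mathlib's upper topology.
instance : IsUpper RLower where
  topology_eq_upperTopology := by
    change lowerTopology = upper ℝ
    simp only [lowerTopology, upper, compl_Iic, eq_comm]

instance : SecondCountableTopology RLower := by
  refine secondCountableTopology_of_isUpper_s12 (countable_range ((↑) : ℚ → ℝ)) fun x y hxy ↦ ?_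
  obtain ⟨q, hxq, hqy⟩ := exists_rat_btwn (K := ℝ) hxy
  exact ⟨_, mem_range_self q, hxq.le, hqy⟩

/-- The specialization order of `Z` is a forest: any two points specializing to a common point are
comparable. This is the property that separates `X × ℝ_<` from `O(ℕ)`. -/
def IsSpecializationForest (Z : Type*) [TopologicalSpace Z] : Prop :=
  ∀ ⦃a b c : Z⦄, b ⤳ a → c ⤳ a → b ⤳ c ∨ c ⤳ b

namespace IsSpecializationForest

variable {X Y Z : Type*} [TopologicalSpace X] [TopologicalSpace Y] [TopologicalSpace Z]

lemma of_isInducing (hZ : IsSpecializationForest Z) {f : Y → Z} (hf : IsInducing f) :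
    IsSpecializationForest Y := by
  intro a b c hba hca
  simp only [← hf.specializes_iff] at hba hca ⊢
  exact hZ hba hca

lemma prod_of_t1Space [T1Space X] (hY : ∀ s t : Y, s ⤳ t ∨ t ⤳ s) :
    IsSpecializationForest (X × Y) := by
  rintro ⟨x, r⟩ ⟨y, s⟩ ⟨z, t⟩ hba hca
  obtain rfl : y = x := (specializes_prod.1 hba).1.eq
  obtain rfl : z = y := (specializes_prod.1 hca).1.eq
  exact (hY s t).imp specializes_rfl.prod specializes_rfl.prod

lemma exists_iUnion_eq_univ (hZ : IsSpecializationForest Z) (hYZ : SigmaEmbeddable Y Z) :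
    ∃ A : ℕ → Set Y, ⋃ n, A n = univ ∧ ∀ n, IsSpecializationForest (A n) := by
  obtain ⟨A, hA, hAB⟩ := hYZ
  refine ⟨A, hA, fun n ↦ ?_⟩
  obtain ⟨B, ⟨φ⟩⟩ := hAB n
  exact hZ.of_isInducing (IsInducing.subtypeVal.comp φ.isInducing)

end IsSpecializationForest

lemma SigmaEmbeddable.of_isEmbedding_s12 {X Y : Type*} [TopologicalSpace X] [TopologicalSpace Y]
    {e : X → Y} (he : IsEmbedding e) : SigmaEmbeddable X Y :=
  ⟨fun _ ↦ univ, iUnion_const univ,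
    fun _ ↦ ⟨range e, ⟨(Homeomorph.Set.univ X).trans he.toHomeomorph⟩⟩⟩

section Plane

variable {α β : Type*} [LinearOrder α] [TopologicalSpace α] [OrderTopology α] [NoMinOrder α]
  [NoMaxOrder α] [LinearOrder β] [TopologicalSpace β] [OrderTopology β] [NoMinOrder β]
  [NoMaxOrder β]

lemma exists_Ioo_prod_Ioo_subset_of_mem_nhds {p : α × β} {U : Set (α × β)} (hU : U ∈ 𝓝 p) :
    ∃ x₀ x₁ y₀ y₁, p ∈ Ioo x₀ x₁ ×ˢ Ioo y₀ y₁ ∧ Ioo x₀ x₁ ×ˢ Ioo y₀ y₁ ⊆ U := by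
  obtain ⟨u, hu, v, hv, huv⟩ := mem_nhds_prod_iff.1 hU
  obtain ⟨x₀, x₁, hx, hxu⟩ := mem_nhds_iff_exists_Ioo_subset.1 hu
  obtain ⟨y₀, y₁, hy, hyv⟩ := mem_nhds_iff_exists_Ioo_subset.1 hv
  exact ⟨x₀, x₁, y₀, y₁, ⟨hx, hy⟩, (prod_mono hxu hyv).trans huv⟩

variable [DenselyOrdered α] [DenselyOrdered β]

lemma exists_le_le_incomparable_of_interior_closure_nonempty {C : Set (α × β)}
    (hC : (interior (closure C)).Nonempty) :
    ∃ a ∈ C, ∃ b ∈ C, ∃ c ∈ C, a ≤ b ∧ a ≤ c ∧ ¬ b ≤ c ∧ ¬ c ≤ b := by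
  obtain ⟨⟨x, y⟩, hxy⟩ := hC
  obtain ⟨x₀, x₁, y₀, y₁, ⟨⟨hx₀, hx₁⟩, hy₀, hy₁⟩, hbox⟩ :=
    exists_Ioo_prod_Ioo_subset_of_mem_nhds (mem_interior_iff_mem_nhds.1 hxy)
  have meets_box {s s' : α} {t t' : β} (h₀ : x₀ ≤ s) (hs : s < s') (h₁ : s' ≤ x₁) (k₀ : y₀ ≤ t)
      (ht : t < t') (k₁ : t' ≤ y₁) : (C ∩ Ioo s s' ×ˢ Ioo t t').Nonempty := by
    rw [← closure_inter_open_nonempty_iff (isOpen_Ioo.prod isOpen_Ioo), inter_eq_right.2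
      ((prod_mono (Ioo_subset_Ioo h₀ h₁) (Ioo_subset_Ioo k₀ k₁)).trans hbox)]
    exact (nonempty_Ioo.2 hs).prod (nonempty_Ioo.2 ht)
  obtain ⟨u, hxu, hu⟩ := exists_between hx₁
  obtain ⟨v, hyv, hv⟩ := exists_between hy₁
  -- `a` is to the lower left of `(x, y)`; to its upper right, `b` is to the upper left of
  -- `(u, v)` and `c` to its lower right.
  obtain ⟨a, ha, ⟨-, hax⟩, -, hay⟩ := meets_box le_rfl hx₀ hx₁.le le_rfl hy₀ hy₁.le
  obtain ⟨b, hb, ⟨hxb, hbu⟩, hvb, -⟩ :=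
    meets_box hx₀.le hxu hu.le (hy₀.trans hyv).le hv le_rfl
  obtain ⟨c, hc, ⟨huc, -⟩, hyc, hcv⟩ :=
    meets_box (hx₀.trans hxu).le hu le_rfl hy₀.le hyv hv.le
  exact ⟨a, ha, b, hb, c, hc, ⟨(hax.trans hxb).le, (hay.trans (hyv.trans hvb)).le⟩,
    ⟨(hax.trans (hxu.trans huc)).le, (hay.trans hyc).le⟩,
    fun hbc ↦ (hcv.trans hvb).not_ge hbc.2, fun hcb ↦ (hbu.trans huc).not_ge hcb.1⟩

lemma IsSpecializationForest.not_sigmaEmbeddable_of_specializes_iff [Nonempty α] [Nonempty β]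
    [BaireSpace (α × β)] {Y Z : Type*} [TopologicalSpace Y] [TopologicalSpace Z]
    (hZ : IsSpecializationForest Z) {f : α × β → Y} (hf : ∀ p q, f p ⤳ f q ↔ q ≤ p) :
    ¬ SigmaEmbeddable Y Z := by
  intro hYZ
  obtain ⟨A, hA, hforest⟩ := hZ.exists_iUnion_eq_univ hYZ
  have hcover : ⋃ n, closure (f ⁻¹' A n) = univ :=
    eq_univ_of_subset (iUnion_mono fun n ↦ subset_closure)
      (by rw [← preimage_iUnion, hA, preimage_univ])
  obtain ⟨n, hn⟩ := nonempty_interior_of_iUnion_of_closed (fun _ ↦ isClosed_closure) hcover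
  obtain ⟨a, ha, b, hb, c, hc, hab, hac, hbc, hcb⟩ :=
    exists_le_le_incomparable_of_interior_closure_nonempty hn
  have specializes_iff {p q : α × β} (hp : f p ∈ A n) (hq : f q ∈ A n) :
      (⟨f p, hp⟩ : A n) ⤳ ⟨f q, hq⟩ ↔ q ≤ p := by rw [subtype_specializes_iff, hf]
  exact (hforest n ((specializes_iff hb ha).2 hab) ((specializes_iff hc ha).2 hac)).elim
    (fun h ↦ hcb ((specializes_iff hb hc).1 h)) (fun h ↦ hbc ((specializes_iff hc hb).1 h))

end Plane

lemma IsSpecializationForest.not_sigmaEmbeddable_scottPowNat {Z : Type*} [TopologicalSpace Z]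
    (hZ : IsSpecializationForest Z) : ¬ SigmaEmbeddable ScottPowNat Z := by
  obtain ⟨e, he⟩ := exists_isEmbedding_scottPowNat (RLower × RLower)
  have specializes_iff (p q : RLower × RLower) : e p ⤳ e q ↔ q ≤ p := by
    rw [he.specializes_iff, specializes_prod, specializes_iff_le_of_isUpper,
      specializes_iff_le_of_isUpper, Prod.le_def]
  -- `e` is read on `ℝ × ℝ`: Baire's theorem applies to the Euclidean topology.
  exact hZ.not_sigmaEmbeddable_of_specializes_iff (α := ℝ) (β := ℝ) (f := e) specializes_iff

theorem stmt12_general (X : Type*) [TopologicalSpace X] [T1Space X] [SecondCountableTopology X] :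
    SigmaEmbeddable (X × RLower) ScottPowNat ∧ ¬ SigmaEmbeddable ScottPowNat (X × RLower) := by
  obtain ⟨e, he⟩ := exists_isEmbedding_scottPowNat (X × RLower)
  have total (s t : RLower) : s ⤳ t ∨ t ⤳ s := by
    simpa only [specializes_iff_le_of_isUpper] using le_total t s
  exact ⟨.of_isEmbedding he,
    (IsSpecializationForest.prod_of_t1Space total).not_sigmaEmbeddable_scottPowNat⟩

/-- For every separable metrizable `X`, the space `X × ℝ_<` lies strictly below the
Scott domain `O(ℕ)` in the σ-embeddability ordering. -/
theorem stmt12 (X : Type*) [TopologicalSpace X] [TopologicalSpace.MetrizableSpace X]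
    [TopologicalSpace.SeparableSpace X] :
    SigmaEmbeddable (X × RLower) ScottPowNat ∧
    ¬ SigmaEmbeddable ScottPowNat (X × RLower) := by
  have : SecondCountableTopology X :=
    let := metrizableSpaceMetric X
    UniformSpace.secondCountable_of_separable X
  exact stmt12_general X
end

section
/- The Euclidean real line ℝ is not σ-embeddable into ℝ_<, and ℝ_< is not σ-embeddable into ℝ; that is, ℝ and ℝ_< are σ-incomparable. -/
open Set

/-!
Open subsets of `RLower` are upper sets, so any two of its points are comparable in the
specialization preorder, whereas in a T₁ space only equal points are. Both properties pass to
subspaces, so a space that embeds into a T₁ space and into `RLower` has at most one point. A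
σ-embedding in either direction would therefore write an uncountable set as a countable union of
sets with at most one point.
-/

section Specialization

variable {X Y Z : Type*} [TopologicalSpace X] [TopologicalSpace Y] [TopologicalSpace Z]

theorem subsingleton_of_injective_of_isInducing [T1Space X] [Std.Total (Specializes (X := Y))]
    {f : Z → X} {g : Z → Y} (hf : Continuous f) (hf_inj : Function.Injective f)
    (hg : Topology.IsInducing g) : Subsingleton Z := by
  have eq_of_specializes {a b : Z} (h : a ⤳ b) : a = b := hf_inj (h.map hf).eq
  refine ⟨fun a b => ?_⟩
  rcases Std.Total.total (r := Specializes) (g a) (g b) with hab | hba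
  · exact eq_of_specializes (hg.specializes_iff.1 hab)
  · exact (eq_of_specializes (hg.specializes_iff.1 hba)).symm

theorem total_specializes_of_isUpper [LinearOrder Y] [Topology.IsUpper Y] :
    Std.Total (Specializes (X := Y)) where
  total a b := by
    simpa only [specializes_iff_mem_closure, Topology.IsUpper.closure_singleton, mem_Iic]
      using le_total b a

end Specialization

namespace SigmaEmbeddable

variable {X Y : Type*} [TopologicalSpace X] [TopologicalSpace Y]

theorem countable_of_forall_homeomorph (h : SigmaEmbeddable X Y)
    (hcount : ∀ (A : Set X) (B : Set Y), A ≃ₜ B → A.Countable) : Countable X := by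
  obtain ⟨A, hA, hAB⟩ := h
  rw [← countable_univ_iff, ← hA]
  refine countable_iUnion fun n => ?_
  obtain ⟨B, ⟨e⟩⟩ := hAB n
  exact hcount (A n) B e

theorem countable_of_t1Space_of_total [T1Space X] [Std.Total (Specializes (X := Y))]
    (h : SigmaEmbeddable X Y) : Countable X :=
  h.countable_of_forall_homeomorph fun A _ e =>
    have : Subsingleton A := subsingleton_of_injective_of_isInducing continuous_subtype_val
      Subtype.val_injective (Topology.IsInducing.subtypeVal.comp e.isInducing)
    A.to_countable

theorem countable_of_total_of_t1Space [Std.Total (Specializes (X := X))] [T1Space Y]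
    (h : SigmaEmbeddable X Y) : Countable X :=
  h.countable_of_forall_homeomorph fun A _ e =>
    have : Subsingleton A := subsingleton_of_injective_of_isInducing
      (continuous_subtype_val.comp e.continuous) (Subtype.val_injective.comp e.injective)
      Topology.IsInducing.subtypeVal
    A.to_countable

end SigmaEmbeddable

namespace RLower

instance : Uncountable RLower := inferInstanceAs (Uncountable ℝ)

instance : Std.Total (Specializes (X := RLower)) := total_specializes_of_isUpper

end RLower

theorem stmt13_general {X Y : Type*} [TopologicalSpace X] [TopologicalSpace Y]
    [T1Space X] [Std.Total (Specializes (X := Y))] [Uncountable X] [Uncountable Y] :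
    ¬ SigmaEmbeddable X Y ∧ ¬ SigmaEmbeddable Y X :=
  ⟨fun h => not_countable h.countable_of_t1Space_of_total,
    fun h => not_countable h.countable_of_total_of_t1Space⟩

/-- The Euclidean real line and the lower real line are σ-incomparable. -/
theorem stmt13 : ¬ SigmaEmbeddable ℝ RLower ∧ ¬ SigmaEmbeddable RLower ℝ :=
  stmt13_general
end
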